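/- arXiv:math/0112208 — 4 statements merged into one kernel-verified Lean document; each statement's English description precedes it below -/
import Mathlib

section
/- Let f = (θ_1, …, θ_r) : ℝ^k → ℝ^r be a map whose components θ_1, …, θ_r are real polynomials in k variables, each of total degree at most d (with d ≥ 1). If y ∈ ℝ^r is a regular value of f, then the preimage f⁻¹(y) has at most d·(2d)^{k−1} connected components. -/
open MvPolynomial in
/-- Interpolation at finitely many points by polynomials of bounded degree. -/
lemma milnor_interp {k : ℕ} (S : Finset (Fin k → ℝ)) (g : (Fin k → ℝ) → ℝ) :
    ∃ l : MvPolynomial (Fin k) ℝ, l.totalDegree ≤ S.card ∧ ∀ s ∈ S, eval s l = g s := by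
  classical
  have h1 : ∀ s s' : Fin k → ℝ, ∃ p : MvPolynomial (Fin k) ℝ, p.totalDegree ≤ 1 ∧
      (s ≠ s' → eval s p = 1) ∧ eval s' p = 0 := by
    intro s s'
    by_cases h : s = s'
    · exact ⟨0, by simp, fun h' => absurd h h', by simp⟩
    · obtain ⟨i, hi⟩ := Function.ne_iff.mp h
      refine ⟨C (s i - s' i)⁻¹ * (X i - C (s' i)), ?_, ?_, ?_⟩
      · refine (totalDegree_mul _ _).trans ?_
        have := totalDegree_sub (X i : MvPolynomial (Fin k) ℝ) (C (s' i))
        simp only [totalDegree_C, totalDegree_X] at this ⊢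
        simpa using this
      · intro _
        have : s i - s' i ≠ 0 := sub_ne_zero.mpr hi
        simp [this]
      · simp
  choose p hp1 hp2 hp3 using h1
  refine ⟨∑ s ∈ S, C (g s) * ∏ s' ∈ S.erase s, p s s', ?_, ?_⟩
  · refine totalDegree_finsetSum_le ?_
    intro s hs
    refine (totalDegree_mul _ _).trans ?_
    rw [totalDegree_C, zero_add]
    refine (totalDegree_finsetProd _ _).trans ?_
    refine (Finset.sum_le_card_nsmul _ _ 1 (fun x _ => hp1 s x)).trans ?_
    simpa using Finset.card_le_card (Finset.erase_subset s S)
  · intro s hs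
    rw [map_sum, Finset.sum_eq_single s]
    · rw [map_mul, eval_C, map_prod, Finset.prod_eq_one, mul_one]
      intro x hx
      exact hp2 s x (Finset.ne_of_mem_erase hx).symm
    · intro b hb hbs
      rw [map_mul, map_prod, Finset.prod_eq_zero (i := s), mul_zero]
      · exact Finset.mem_erase.mpr ⟨hbs.symm, hs⟩
      · exact hp3 b s
    · intro h; exact absurd hs h

open MvPolynomial in
lemma milnor_basis {k D : ℕ} (hD : 1 ≤ D) (q : Fin k → MvPolynomial (Fin k) ℝ)
    (hq : ∀ i, (q i).totalDegree ≤ D) (c : Fin k → ℝ) (n : ℕ) (m : Fin k →₀ ℕ)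
    (hm : m.degree ≤ n) :
    ∃ b0 b1 : MvPolynomial (Fin k) ℝ, b1.totalDegree ≤ n ∧ coeff m b0 = 1 ∧
      (∀ m', m' ≠ m → coeff m' b0 ≠ 0 → m'.degree < m.degree) ∧
      ((∀ i, m i < D) → b0 = monomial m 1 ∧ b1 = 0) ∧
      ((∃ i, D ≤ m i) → ∀ (t : ℝ) (x : Fin k → ℝ),
        (∀ i, x i ^ D + t * eval x (q i) = c i) → eval x b0 + t * eval x b1 = 0) := by
  classical
  by_cases h : ∃ i, D ≤ m i
  · obtain ⟨i, hi⟩ := h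
    have hle : Finsupp.single i D ≤ m := by
      simpa using hi
    obtain ⟨m'', rfl⟩ := exists_add_of_le hle
    have hdeg : (Finsupp.single i D + m'').degree = D + m''.degree := by
      rw [map_add, Finsupp.degree_single]
    rw [hdeg] at hm
    have hne : m'' ≠ Finsupp.single i D + m'' := by
      intro h
      have := congrArg Finsupp.degree h
      rw [hdeg] at this
      omega
    refine ⟨monomial (Finsupp.single i D + m'') 1 - C (c i) * monomial m'' 1,
      monomial m'' 1 * q i, ?_, ?_, ?_, ?_, ?_⟩
    · refine (totalDegree_mul _ _).trans ?_
      have h1 : (monomial m'' (1 : ℝ)).totalDegree ≤ m''.degree := totalDegree_monomial_le m'' (1 : ℝ)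
      have := hq i
      omega
    · rw [coeff_sub, coeff_C_mul, coeff_monomial, coeff_monomial]
      simp [hne]
    · intro m' hm' h
      rw [coeff_sub, coeff_C_mul, coeff_monomial, coeff_monomial] at h
      rw [if_neg hm'.symm] at h
      by_cases h2 : m'' = m'
      · subst h2; rw [hdeg]; omega
      · simp [h2] at h
    · intro h
      exact absurd (h i) (by simp)
    · intro _ t x hx
      have := hx i
      have h3 : (monomial (Finsupp.single i D + m'') (1 : ℝ)) = X i ^ D * monomial m'' 1 := by
        rw [X_pow_eq_monomial, monomial_mul, one_mul]
      rw [h3]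
      simp only [map_sub, map_mul, map_pow, eval_X, eval_C]
      linear_combination (eval x (monomial m'' 1)) * this
  · refine ⟨monomial m 1, 0, by simp, by simp, ?_, fun _ => ⟨rfl, rfl⟩, fun h' => absurd h' h⟩
    intro m' hm' h'
    rw [coeff_monomial, if_neg hm'.symm] at h'
    exact absurd rfl h'

open MvPolynomial in
/-- A weak Bezout bound. -/
lemma milnor_bezout {k D : ℕ} (hD : 1 ≤ D) (q : Fin k → MvPolynomial (Fin k) ℝ)
    (hq : ∀ i, (q i).totalDegree ≤ D) (c : Fin k → ℝ) :
    ∃ T : ℝ, ∀ t : ℝ, T < t → ∀ S : Finset (Fin k → ℝ),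
      (∀ x ∈ S, ∀ i, x i ^ D + t * eval x (q i) = c i) → S.card ≤ D ^ k := by
  classical
  set n := D ^ k + 1 with hn
  let W := {m : Fin k →₀ ℕ // m.degree ≤ n}
  have : Finite W := (Finsupp.finite_of_degree_le (σ := Fin k) n).to_subtype
  have : Fintype W := Fintype.ofFinite W
  choose b0 b1 h1 h2 h3 h4 h5 using
    fun m : W => milnor_basis hD q hq c n m.1 m.2
  let B0 : Matrix W W ℝ := fun m m' => coeff m'.1 (b0 m)
  let B1 : Matrix W W ℝ := fun m m' => coeff m'.1 (b1 m)
  have hdet0 : B0.det = 1 := by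
    have hbt : B0.BlockTriangular (fun m : W => OrderDual.toDual (⟨m.1.degree, Nat.lt_succ_of_le m.2⟩ : Fin (n+1))) := by
      intro m m' hmm
      by_contra hne
      have hmm2 : m.1.degree < m'.1.degree := hmm
      have : m'.1 ≠ m.1 := by
        intro h; rw [h] at hmm2; exact lt_irrefl _ hmm2
      have := h3 m m'.1 this hne
      omega
    rw [hbt.det_fintype]
    refine Finset.prod_eq_one fun a _ => ?_
    suffices hone : B0.toSquareBlock (fun m : W => OrderDual.toDual (⟨m.1.degree, Nat.lt_succ_of_le m.2⟩ : Fin (n+1))) a = 1 by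
      rw [hone, Matrix.det_one]
    ext ⟨m, hm⟩ ⟨m', hm'⟩
    rw [Matrix.toSquareBlock_def]
    simp only [Matrix.of_apply, Matrix.one_apply, Subtype.mk.injEq]
    split_ifs with h
    · subst h; exact h2 m
    · by_contra hne
      have hlt := h3 m m'.1 (fun h' => h (Subtype.ext h'.symm)) hne
      have := hm.trans hm'.symm
      have : m.1.degree = m'.1.degree := by
        simpa using this
      omega
  let p : Polynomial ℝ := (B0.map Polynomial.C + (Polynomial.X : Polynomial ℝ) • B1.map Polynomial.C).det
  have hp : ∀ t : ℝ, p.eval t = (B0 + t • B1).det := by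
    intro t
    rw [← Polynomial.coe_evalRingHom, RingHom.map_det]
    congr 1
    ext i j
    simp
    ring
  have hp0 : p ≠ 0 := by
    intro h
    have := hp 0
    rw [h] at this
    simp [hdet0] at this
  obtain ⟨T, hT⟩ := (p.rootSet_finite ℝ).bddAbove
  refine ⟨T, fun t ht => ?_⟩
  have hdet : (B0 + t • B1).det ≠ 0 := by
    intro h
    have : t ∈ p.rootSet ℝ := by
      rw [Polynomial.mem_rootSet]
      refine ⟨hp0, ?_⟩
      rw [Polynomial.coe_aeval_eq_eval, hp, h]
    exact absurd (hT this) (not_le.mpr ht)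
  have key : ∀ S : Finset (Fin k → ℝ), S.card ≤ n →
      (∀ x ∈ S, ∀ i, x i ^ D + t * eval x (q i) = c i) → S.card ≤ D ^ k := by
    intro S hSn hS
    let φ : (Fin k → Fin D) → (S → ℝ) := fun a s => ∏ i, (s.1 i) ^ (a i : ℕ)
    have htop : (⊤ : Submodule ℝ (S → ℝ)) ≤ Submodule.span ℝ (Set.range φ) := by
      intro g _
      obtain ⟨l, hl1, hl2⟩ := milnor_interp S (fun x => if h : x ∈ S then g ⟨x, h⟩ else 0)
      obtain ⟨w, hw⟩ : ∃ w : W → ℝ, Matrix.vecMul w (B0 + t • B1) = fun m => coeff m.1 l := by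
        refine ⟨Matrix.vecMul (fun m => coeff m.1 l) (B0 + t • B1)⁻¹, ?_⟩
        rw [Matrix.vecMul_vecMul, Matrix.nonsing_inv_mul _ (Ne.isUnit hdet), Matrix.vecMul_one]
      have hzero : ∀ (P : MvPolynomial (Fin k) ℝ), P.totalDegree ≤ n → ∀ m : Fin k →₀ ℕ,
          n < m.degree → coeff m P = 0 := by
        intro P hP m hm
        exact coeff_eq_zero_of_totalDegree_lt (lt_of_le_of_lt hP hm)
      have hl : l = ∑ m : W, C (w m) * (b0 m + C t * b1 m) := by
        ext m
        rw [coeff_sum]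
        simp only [coeff_C_mul, coeff_add]
        by_cases hm : m.degree ≤ n
        · have := congrFun hw ⟨m, hm⟩
          simp only [Matrix.vecMul, dotProduct] at this
          rw [← this]
          rfl
        · push Not at hm
          rw [hzero l (hl1.trans hSn) m hm]
          symm
          refine Finset.sum_eq_zero fun a _ => ?_
          rw [hzero _ (h1 a) m hm]
          have : coeff m (b0 a) = 0 := by
            by_contra hne
            have hh := h3 a m (by rintro rfl; exact absurd a.2 (not_le.mpr hm)) hne
            have := a.2
            omega
          rw [this]; ring
      have hg : g = ∑ m : W, w m • (fun s : S => eval s.1 (b0 m) + t * eval s.1 (b1 m)) := by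
        ext s
        have := hl2 s.1 s.2
        rw [hl] at this
        simp only [map_sum, map_mul, map_add, eval_C, s.2, dif_pos] at this
        rw [Finset.sum_apply]
        exact this.symm
      rw [hg]
      refine Submodule.sum_mem _ fun m _ => Submodule.smul_mem _ _ ?_
      by_cases hm : ∃ i, D ≤ m.1 i
      · convert Submodule.zero_mem _
        exact h5 m hm t _ (hS _ (Subtype.mem _))
      · push Not at hm
        obtain ⟨e0, e1⟩ := h4 m hm
        refine Submodule.subset_span ⟨fun i => ⟨m.1 i, hm i⟩, ?_⟩
        ext s
        rw [e0, e1]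
        simp [φ, eval_monomial, Finsupp.prod_fintype]
    have h6 : Module.finrank ℝ (S → ℝ) ≤ Fintype.card (Fin k → Fin D) := by
      have := finrank_range_le_card (R := ℝ) φ
      rw [Set.finrank, top_le_iff.mp htop, finrank_top] at this
      exact this
    simpa using h6
  intro S hS
  by_contra hcon
  push Not at hcon
  obtain ⟨S', hS', hcard⟩ := Finset.exists_subset_card_eq (s := S) (n := n) hcon
  have := key S' hcard.le (fun x hx => hS x (hS' hx))
  omega

open Topology Filter in
lemma milnor_sep {X : Type*} [TopologicalSpace X] [T2Space X] {F P : X → ℝ}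
    (hF : Continuous F) (hP : Continuous P) (hF0 : ∀ x, 0 ≤ F x) (R : ℝ)
    (hc : IsCompact {x | P x ≤ R}) (v w : X) (hv : F v = 0) (hw : F w = 0)
    (hvR : P v ≤ R) (hwR : P w ≤ R) (hvw : w ∉ connectedComponentIn {x | F x = 0} v) :
    ∃ T : ℝ, ∀ t, T < t → w ∉ connectedComponentIn {x | t * F x + P x ≤ R} v := by
  classical
  let VR : Set X := {x | F x = 0 ∧ P x ≤ R}
  have hVRc : IsCompact VR := by
    have : VR = {x | P x ≤ R} ∩ {x | F x = 0} := by ext x; simp [VR, and_comm]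
    rw [this]
    exact hc.inter_right (isClosed_eq hF continuous_const)
  have : CompactSpace VR := isCompact_iff_compactSpace.mp hVRc
  let v' : VR := ⟨v, hv, hvR⟩
  let w' : VR := ⟨w, hw, hwR⟩
  have h1 : w' ∉ connectedComponent v' := by
    intro h
    apply hvw
    have hpre : IsPreconnected (Subtype.val '' connectedComponent v') :=
      isPreconnected_connectedComponent.image _ continuous_subtype_val.continuousOn
    refine hpre.subset_connectedComponentIn ⟨v', mem_connectedComponent, rfl⟩ ?_ ⟨w', h, rfl⟩
    rintro _ ⟨z, _, rfl⟩
    exact z.2.1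
  rw [connectedComponent_eq_iInter_isClopen] at h1
  simp only [Set.mem_iInter, not_forall] at h1
  obtain ⟨⟨Z, hZ, hvZ⟩, hwZ⟩ := h1
  have hA : IsCompact (Subtype.val '' Z) := hZ.isClosed.isCompact.image continuous_subtype_val
  have hB : IsCompact (Subtype.val '' Zᶜ) :=
    hZ.compl.isClosed.isCompact.image continuous_subtype_val
  have hAB : Disjoint (Subtype.val '' Z) (Subtype.val '' Zᶜ) :=
    Set.disjoint_image_of_injective Subtype.val_injective disjoint_compl_right
  obtain ⟨U, U', hU, hU', hAU, hBU', hdisj⟩ := SeparatedNhds.of_isCompact_isCompact hA hB hAB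
  let K : ℕ → Set X := fun n => {x | (n : ℝ) * F x + P x ≤ R}
  have hmono : ∀ s t : ℝ, s ≤ t → {x | t * F x + P x ≤ R} ⊆ {x | s * F x + P x ≤ R} := by
    intro s t hst x hx
    have := mul_le_mul_of_nonneg_right hst (hF0 x)
    simp only [Set.mem_ofPred_eq] at hx ⊢
    linarith
  have hKc : ∀ n, IsCompact (K n) := by
    intro n
    refine hc.of_isClosed_subset ?_ ?_
    · exact isClosed_le ((continuous_const.mul hF).add hP) continuous_const
    · intro x hx
      have := mul_nonneg (Nat.cast_nonneg (α := ℝ) n) (hF0 x)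
      simp only [K, Set.mem_ofPred_eq] at hx ⊢
      linarith
  obtain ⟨n, hn⟩ : ∃ n, K n ⊆ U ∪ U' := by
    refine exists_subset_nhds_of_isCompact ?_ hKc ?_
    · refine directed_of_isDirected_le ?_
      intro m n hmn
      exact hmono _ _ (Nat.cast_le.mpr hmn)
    · intro x hx
      simp only [K, Set.mem_iInter, Set.mem_ofPred_eq] at hx
      refine (hU.union hU').mem_nhds ?_
      have hPR : P x ≤ R := by simpa using hx 0
      have hF' : F x = 0 := by
        by_contra hne
        have hpos : 0 < F x := lt_of_le_of_ne (hF0 x) (Ne.symm hne)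
        obtain ⟨m, hm⟩ := exists_nat_gt ((R - P x) / F x)
        rw [div_lt_iff₀ hpos] at hm
        linarith [hx m]
      by_cases hz : (⟨x, hF', hPR⟩ : VR) ∈ Z
      · exact Or.inl (hAU ⟨_, hz, rfl⟩)
      · exact Or.inr (hBU' ⟨_, hz, rfl⟩)
  refine ⟨n, fun t ht hmem => ?_⟩
  have hsub : connectedComponentIn {x | t * F x + P x ≤ R} v ⊆ U ∪ U' :=
    (connectedComponentIn_subset _ _).trans ((hmono _ _ ht.le).trans hn)
  have hvm : v ∈ connectedComponentIn {x | t * F x + P x ≤ R} v :=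
    mem_connectedComponentIn (by simp [hv, hvR])
  have := isPreconnected_connectedComponentIn.subset_left_of_subset_union hU hU' hdisj hsub
    ⟨v, hvm, hAU ⟨v', hvZ, rfl⟩⟩
  exact Set.disjoint_left.mp hdisj (this hmem) (hBU' ⟨w', hwZ, rfl⟩)

open MvPolynomial in
lemma milnor_hasDerivAt {k : ℕ} (G : MvPolynomial (Fin k) ℝ) (p v : Fin k → ℝ) :
    HasDerivAt (fun s : ℝ => eval (p + s • v) G) (∑ i, v i * eval p (pderiv i G)) 0 := by
  classical
  induction G using MvPolynomial.induction_on with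
  | C a => simpa using hasDerivAt_const (0 : ℝ) a
  | add a b ha hb =>
    simp only [map_add, mul_add, Finset.sum_add_distrib]
    exact ha.add hb
  | mul_X a j ha =>
    have hj : HasDerivAt (fun s : ℝ => p j + s * v j) (v j) 0 := by
      simpa using ((hasDerivAt_id (0 : ℝ)).mul_const (v j)).const_add (p j)
    have := ha.mul hj
    simp only [map_mul, eval_X, Pi.add_apply, Pi.smul_apply, smul_eq_mul]
    refine this.congr_deriv ?_
    simp only [pderiv_mul, pderiv_X, map_add, map_mul, eval_X, mul_add, Finset.sum_add_distrib,
      zero_smul, add_zero, zero_mul]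
    congr 1
    · rw [Finset.sum_mul]; exact Finset.sum_congr rfl fun i _ => by ring
    · rw [Finset.sum_eq_single j]
      · simp [mul_comm]
      · intro b _ hb; simp [hb.symm]
      · simp

open MvPolynomial Topology Filter in
lemma milnor_no_ascent {k : ℕ} (G : MvPolynomial (Fin (k+1)) ℝ) (v0 p v : Fin (k+1) → ℝ) (σ : ℝ)
    (hp : p ∈ connectedComponentIn {x | eval x G ≤ 0} v0)
    (hmax : ∀ x ∈ connectedComponentIn {x | eval x G ≤ 0} v0, σ * x 0 ≤ σ * p 0)
    (hv : 0 < σ * v 0) (h : eval p G < 0 ∨ ∑ i, v i * eval p (pderiv i G) < 0) : False := by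
  have hd := milnor_hasDerivAt G p v
  have hpK : p ∈ {x | eval x G ≤ 0} := connectedComponentIn_subset _ _ hp
  replace hpK : eval p G ≤ 0 := hpK
  have hev : ∀ᶠ s in 𝓝[>] (0:ℝ), eval (p + s • v) G ≤ 0 := by
    rcases h with h | h
    · have h2 := hd.continuousAt.eventually_lt (continuousAt_const (y := (0:ℝ))) (by simpa using h)
      exact (h2.filter_mono nhdsWithin_le_nhds).mono fun s hs => hs.le
    · rw [hasDerivAt_iff_tendsto_slope_zero] at hd
      have h2 := (hd.eventually_lt_const h).filter_mono
        (nhdsWithin_mono (0:ℝ) (fun x (hx : 0 < x) => hx.ne'))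
      filter_upwards [h2, self_mem_nhdsWithin] with s hs hs0
      have hs0' : (0:ℝ) < s := hs0
      simp only [zero_add, zero_smul, add_zero, smul_eq_mul] at hs
      have : s * (s⁻¹ * (eval (p + s • v) G - eval p G)) < 0 := mul_neg_of_pos_of_neg hs0' hs
      rw [mul_inv_cancel_left₀ hs0'.ne'] at this
      linarith
  obtain ⟨u, hu, hsub⟩ := mem_nhdsGT_iff_exists_Ioc_subset.mp hev
  have hu' : (0:ℝ) < u := hu
  have hpre : IsPreconnected ((fun s : ℝ => p + s • v) '' Set.Icc 0 u) :=
    isPreconnected_Icc.image _ (by fun_prop)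
  have hK : ((fun s : ℝ => p + s • v) '' Set.Icc 0 u) ⊆ {x | eval x G ≤ 0} := by
    rintro _ ⟨s, ⟨hs0, hsu⟩, rfl⟩
    rcases hs0.eq_or_lt with h | h
    · subst h; simpa using hpK
    · exact hsub ⟨h, hsu⟩
  have hmem := hpre.subset_connectedComponentIn (x := p)
    ⟨0, ⟨le_refl _, hu'.le⟩, by simp⟩ hK ⟨u, ⟨hu'.le, le_refl _⟩, rfl⟩
  rw [← connectedComponentIn_eq hp] at hmem
  have := hmax _ hmem
  simp only [Pi.add_apply, Pi.smul_apply, smul_eq_mul] at this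
  nlinarith [mul_pos hu' hv]

open MvPolynomial in
lemma milnor_crit {k : ℕ} (G : MvPolynomial (Fin (k+1)) ℝ) (v0 p : Fin (k+1) → ℝ) (σ : ℝ)
    (hσ : σ ≠ 0)
    (hp : p ∈ connectedComponentIn {x | eval x G ≤ 0} v0)
    (hmax : ∀ x ∈ connectedComponentIn {x | eval x G ≤ 0} v0, σ * x 0 ≤ σ * p 0) :
    eval p G = 0 ∧ ∀ i, i ≠ 0 → eval p (pderiv i G) = 0 := by
  classical
  have hpK : p ∈ {x | eval x G ≤ 0} := connectedComponentIn_subset _ _ hp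
  replace hpK : eval p G ≤ 0 := hpK
  have hσ2 : 0 < σ * σ := mul_self_pos.mpr hσ
  constructor
  · by_contra hne
    exact milnor_no_ascent G v0 p (Pi.single 0 σ) σ hp hmax (by simpa using hσ2)
      (Or.inl (lt_of_le_of_ne hpK hne))
  · intro i hi
    by_contra hne
    refine milnor_no_ascent G v0 p (Pi.single 0 σ + Pi.single i
      (-(σ * eval p (pderiv 0 G) + 1) / eval p (pderiv i G))) σ hp hmax ?_ (Or.inr ?_)
    · simpa [Pi.single_apply, hi.symm] using hσ2
    · simp only [Pi.add_apply, add_mul, Finset.sum_add_distrib, Pi.single_apply, ite_mul, zero_mul,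
        Finset.sum_ite_eq', Finset.mem_univ, if_true]
      field_simp
      linarith

open MvPolynomial in
lemma milnor_degree_X_pderiv {k : ℕ} (F : MvPolynomial (Fin k) ℝ) (i : Fin k) :
    (X i * pderiv i F).totalDegree ≤ F.totalDegree := by
  classical
  have h : X i * pderiv i F = ∑ m ∈ F.support, monomial m (coeff m F * (m i : ℝ)) := by
    conv_lhs => rw [F.as_sum]
    rw [map_sum, Finset.mul_sum]
    refine Finset.sum_congr rfl fun m _ => ?_
    rw [X_mul_pderiv_monomial, smul_monomial, nsmul_eq_mul, mul_comm]
  rw [h]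
  refine totalDegree_finsetSum_le fun m hm => ?_
  exact (totalDegree_monomial_le _ _).trans (le_totalDegree hm)

lemma milnor_compact_sublevel {k d : ℕ} (hd : 1 ≤ d) (R : ℝ) :
    IsCompact {x : Fin k → ℝ | ∑ i, x i ^ (2 * d) ≤ R} := by
  have hpos : ∀ y : ℝ, 0 ≤ y ^ (2 * d) := fun y => (even_two_mul d).pow_nonneg y
  refine (isCompact_Icc (a := fun _ : Fin k => -(|R| + 1)) (b := fun _ => |R| + 1)).of_isClosed_subset
    (isClosed_le (by fun_prop) continuous_const) ?_
  intro x hx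
  have hx' : ∑ i, x i ^ (2 * d) ≤ R := hx
  have h : ∀ i, |x i| ≤ |R| + 1 := by
    intro i
    by_contra hcon
    push Not at hcon
    have h1 : x i ^ (2 * d) ≤ ∑ i, x i ^ (2 * d) :=
      Finset.single_le_sum (f := fun i => x i ^ (2 * d)) (fun j _ => hpos (x j)) (Finset.mem_univ i)
    have h2 : |x i| ≤ |x i| ^ (2 * d) :=
      le_self_pow₀ (by linarith [abs_nonneg R]) (by omega)
    rw [(even_two_mul d).pow_abs] at h2
    linarith [le_abs_self R]
  exact ⟨fun i => (abs_le.mp (h i)).1, fun i => (abs_le.mp (h i)).2⟩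

open MvPolynomial in
lemma milnor_count {k d : ℕ} (hd : 1 ≤ d) (F : MvPolynomial (Fin (k+1)) ℝ)
    (hFd : F.totalDegree ≤ 2 * d) (hF0 : ∀ x, 0 ≤ eval x F) {ι : Type} [Fintype ι]
    (v : ι → Fin (k+1) → ℝ) (hv : ∀ a, eval (v a) F = 0)
    (hsep : ∀ a b, a ≠ b → v b ∉ connectedComponentIn {x | eval x F = 0} (v a)) :
    2 * Fintype.card ι ≤ (2 * d) ^ (k + 1) := by
  classical
  set D := 2 * d with hDdef
  have hD0 : (D : ℝ) ≠ 0 := by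
    have : D ≠ 0 := by omega
    exact_mod_cast this
  let Pf : (Fin (k+1) → ℝ) → ℝ := fun x => ∑ i, x i ^ D
  let P : MvPolynomial (Fin (k+1)) ℝ := ∑ i, X i ^ D
  have hPe : ∀ x, eval x P = Pf x := by intro x; simp [P, Pf]
  have hPc : Continuous Pf := by simp only [Pf]; fun_prop
  have hFc : Continuous (fun x => eval x F) := MvPolynomial.continuous_eval F
  obtain ⟨R0, hR0⟩ := (Set.finite_range (fun a => Pf (v a))).bddAbove
  set R := R0 + 1 with hR
  have hvR : ∀ a, Pf (v a) < R := by
    intro a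
    have := hR0 ⟨a, rfl⟩
    simp only at this
    linarith
  have hcomp : IsCompact {x | Pf x ≤ R} := milnor_compact_sublevel hd R
  -- the polynomial system
  let q' : Fin (k+1) → MvPolynomial (Fin (k+1)) ℝ := fun i => C (D : ℝ)⁻¹ * (X i * pderiv i F)
  let q : Fin (k+1) → MvPolynomial (Fin (k+1)) ℝ := fun i =>
    if i = 0 then F - ∑ j ∈ Finset.univ.erase 0, q' j else q' i
  have hq' : ∀ i, (q' i).totalDegree ≤ D := by
    intro i
    refine (totalDegree_mul _ _).trans ?_
    rw [totalDegree_C, zero_add]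
    exact (milnor_degree_X_pderiv F i).trans hFd
  have hq : ∀ i, (q i).totalDegree ≤ D := by
    intro i
    simp only [q]
    split_ifs
    · refine (totalDegree_sub _ _).trans (max_le hFd ?_)
      exact totalDegree_finsetSum_le fun j _ => hq' j
    · exact hq' i
  obtain ⟨T0, hT0⟩ := milnor_bezout (by omega : 1 ≤ D) q hq (fun i => if i = 0 then R else 0)
  have hT : ∀ ab : ι × ι, ∃ T : ℝ, ab.1 ≠ ab.2 → ∀ t, T < t →
      v ab.2 ∉ connectedComponentIn {x | t * eval x F + Pf x ≤ R} (v ab.1) := by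
    intro ab
    by_cases h : ab.1 = ab.2
    · exact ⟨0, fun h' => absurd h h'⟩
    · obtain ⟨T, hT⟩ := milnor_sep hFc hPc hF0 R hcomp (v ab.1) (v ab.2) (hv _) (hv _)
        (hvR _).le (hvR _).le (hsep _ _ h)
      exact ⟨T, fun _ => hT⟩
  choose T hT using hT
  obtain ⟨T1, hT1⟩ := (Set.finite_range T).bddAbove
  obtain ⟨t, ht⟩ := exists_gt (max (max T0 T1) 0)
  have ht0 : T0 < t := lt_of_le_of_lt ((le_max_left _ _).trans (le_max_left _ _)) ht
  have ht1 : T1 < t := lt_of_le_of_lt ((le_max_right _ _).trans (le_max_left _ _)) ht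
  have htpos : 0 < t := lt_of_le_of_lt (le_max_right _ _) ht
  let G : MvPolynomial (Fin (k+1)) ℝ := C t * F + P - C R
  have hGe : ∀ x, eval x G = t * eval x F + Pf x - R := by
    intro x; simp [G, hPe]
  have hset : {x | eval x G ≤ 0} = {x | t * eval x F + Pf x ≤ R} := by
    ext x
    simp only [Set.mem_ofPred_eq, hGe, sub_nonpos]
  have hGd : ∀ i x, eval x (pderiv i G) = t * eval x (pderiv i F) + D * x i ^ (D - 1) := by
    intro i x
    have : pderiv i P = C (D : ℝ) * X i ^ (D - 1) := by
      simp only [P, map_sum]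
      rw [Finset.sum_eq_single i]
      · rw [pderiv_pow, pderiv_X_self, mul_one]; simp
      · intro b _ hb
        rw [pderiv_pow, pderiv_X_of_ne hb, mul_zero]
      · simp
    simp [G, this, pderiv_C_mul]
  let Cc : ι → Set (Fin (k+1) → ℝ) := fun a => connectedComponentIn {x | eval x G ≤ 0} (v a)
  have hvneg : ∀ a, eval (v a) G < 0 := by
    intro a
    rw [hGe, hv a]; linarith [hvR a]
  have hvC : ∀ a, v a ∈ Cc a := fun a => mem_connectedComponentIn (hvneg a).le
  have hCcomp : ∀ a, IsCompact (Cc a) := by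
    intro a
    have hKcl : IsClosed {x | eval x G ≤ 0} :=
      isClosed_le (MvPolynomial.continuous_eval G) continuous_const
    have hcl : IsClosed (Cc a) := by
      refine isClosed_of_closure_subset ?_
      refine isPreconnected_connectedComponentIn.closure.subset_connectedComponentIn
        (subset_closure (hvC a)) ?_
      exact closure_minimal (connectedComponentIn_subset _ _) hKcl
    refine hcomp.of_isClosed_subset hcl ?_
    intro x hx
    have hx2 : x ∈ {x | eval x G ≤ 0} := connectedComponentIn_subset _ _ hx
    have hx3 : eval x G ≤ 0 := hx2
    rw [hGe] at hx3
    have := mul_nonneg htpos.le (hF0 x)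
    show Pf x ≤ R
    linarith
  let sg : Bool → ℝ := fun b => if b then 1 else -1
  have hsg : ∀ b, sg b ≠ 0 := by intro b; cases b <;> simp [sg]
  have hext : ∀ ab : ι × Bool, ∃ p ∈ Cc ab.1, ∀ x ∈ Cc ab.1, sg ab.2 * x 0 ≤ sg ab.2 * p 0 := by
    intro ab
    obtain ⟨p, hp, hmax⟩ := (hCcomp ab.1).exists_isMaxOn ⟨_, hvC ab.1⟩
      (f := fun x => sg ab.2 * x 0) (by fun_prop)
    exact ⟨p, hp, fun x hx => hmax hx⟩
  choose p hp hpmax using hext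
  have hinj : Function.Injective p := by
    rintro ⟨a, s⟩ ⟨b, s'⟩ heq
    have hab : a = b := by
      by_contra hne
      have h1 := hp (a, s)
      have h2 := hp (b, s')
      rw [← heq] at h2
      have e1 := connectedComponentIn_eq h1
      have e2 := connectedComponentIn_eq h2
      have h3 : v b ∈ Cc a := by
        show v b ∈ connectedComponentIn _ _
        rw [e1, ← e2]
        exact hvC b
      refine hT (a, b) hne t (lt_of_le_of_lt (hT1 ⟨(a, b), rfl⟩) ht1) ?_
      rw [← hset]
      exact h3
    subst hab
    by_cases hs : s = s'
    · rw [hs]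
    exfalso
    have hboth : ∀ x ∈ Cc a, x 0 = p (a, true) 0 := by
      have hpp : p (a, true) = p (a, false) := by
        cases s <;> cases s' <;> simp_all
      intro x hx
      have h1 := hpmax (a, true) x hx
      have h2 := hpmax (a, false) x hx
      rw [← hpp] at h2
      simp only [sg, if_true] at h1 h2
      simp at h2
      linarith
    have := (milnor_crit G (v a) (v a) 1 one_ne_zero (hvC a) (fun x hx => by
      rw [hboth x hx, hboth _ (hvC a)])).1
    linarith [hvneg a]
  have hcard := hT0 t ht0 (Finset.univ.image p) (by
    intro x hx
    obtain ⟨ab, _, rfl⟩ := Finset.mem_image.mp hx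
    obtain ⟨hc1, hc2⟩ := milnor_crit G (v ab.1) (p ab) (sg ab.2) (hsg _) (hp ab) (hpmax ab)
    generalize p ab = x at hc1 hc2
    have hi : ∀ i, i ≠ 0 → x i ^ D + t * eval x (q' i) = 0 := by
      intro i hi
      have h1 := hc2 i hi
      rw [hGd] at h1
      have h2 : x i ^ D = x i * x i ^ (D - 1) := by
        rw [← pow_succ']; congr 1; omega
      simp only [q', map_mul, eval_C, eval_X]
      rw [h2]
      field_simp
      linear_combination x i * h1
    intro i
    by_cases h0 : i = 0
    · subst h0
      simp only [q, if_true, map_sub, map_sum]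
      rw [hGe] at hc1
      have hs : Pf x = x 0 ^ D + ∑ j ∈ Finset.univ.erase 0, x j ^ D :=
        (Finset.add_sum_erase _ _ (Finset.mem_univ _)).symm
      have hs2 : ∑ j ∈ Finset.univ.erase 0, (x j ^ D + t * eval x (q' j)) = 0 :=
        Finset.sum_eq_zero fun j hj => hi j (Finset.ne_of_mem_erase hj)
      rw [Finset.sum_add_distrib, ← Finset.mul_sum] at hs2
      linear_combination hc1 - hs - hs2
    · simp only [q, if_neg h0]
      exact hi i h0)
  rw [Finset.card_image_of_injective _ hinj, Finset.card_univ, Fintype.card_prod,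
    Fintype.card_bool] at hcard
  omega

/-- Milnor–Oleinik–Petrovsky–Thom bound:
If `f = (θ₁, …, θ_r) : ℝ^k → ℝ^r` has polynomial components of total degree at most `d ≥ 1`,
and `y` is a regular value of `f`, then the preimage `f⁻¹(y)` has at most `d·(2d)^(k-1)`
connected components. -/
theorem milnor_bound_connected_components
    (k r d : ℕ) (hd : 1 ≤ d)
    (θ : Fin r → MvPolynomial (Fin k) ℝ)
    (hdeg : ∀ j, (θ j).totalDegree ≤ d)
    (f : (Fin k → ℝ) → (Fin r → ℝ))
    (hf : ∀ w j, f w j = MvPolynomial.eval w (θ j))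
    (y : Fin r → ℝ)
    (hreg : ∀ x ∈ f ⁻¹' {y}, Function.Surjective (fderiv ℝ f x)) :
    Finite (ConnectedComponents ↥(f ⁻¹' {y})) ∧
      Nat.card (ConnectedComponents ↥(f ⁻¹' {y})) ≤ d * (2 * d) ^ (k - 1) := by
  classical
  have key : ∀ s : Finset (ConnectedComponents ↥(f ⁻¹' {y})), s.card ≤ d * (2 * d) ^ (k - 1) := by
    intro s
    cases k with
    | zero =>
      have hsub : Subsingleton (ConnectedComponents ↥(f ⁻¹' {y})) :=
        ConnectedComponents.surjective_coe.subsingleton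
      refine (Finset.card_le_one_of_subsingleton s).trans ?_
      simpa using hd
    | succ k =>
      let F : MvPolynomial (Fin (k+1)) ℝ := ∑ j, (θ j - MvPolynomial.C (y j)) ^ 2
      have hFe : ∀ x, MvPolynomial.eval x F = ∑ j, (f x j - y j) ^ 2 := by
        intro x; simp [F, hf]
      have hF0 : ∀ x, 0 ≤ MvPolynomial.eval x F := by
        intro x; rw [hFe]; exact Finset.sum_nonneg fun j _ => sq_nonneg _
      have hFd : F.totalDegree ≤ 2 * d := by
        refine MvPolynomial.totalDegree_finsetSum_le fun j _ => ?_
        refine (MvPolynomial.totalDegree_pow _ _).trans ?_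
        refine Nat.mul_le_mul_left 2 ?_
        refine (MvPolynomial.totalDegree_sub _ _).trans (max_le (hdeg j) ?_)
        simp
      have hV : {x | MvPolynomial.eval x F = 0} = f ⁻¹' {y} := by
        ext x
        simp only [Set.mem_ofPred_eq, Set.mem_preimage, Set.mem_singleton_iff, hFe]
        rw [Finset.sum_eq_zero_iff_of_nonneg (fun j _ => sq_nonneg _)]
        constructor
        · intro h
          ext j
          have := h j (Finset.mem_univ j)
          exact sub_eq_zero.mp (pow_eq_zero_iff (two_ne_zero) |>.mp this)
        · intro h j _
          rw [h]; simp
      choose g hg using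
        (ConnectedComponents.surjective_coe : Function.Surjective
          ((↑) : ↥(f ⁻¹' {y}) → ConnectedComponents ↥(f ⁻¹' {y})))
      have hcount := milnor_count hd F hFd hF0 (ι := Fin s.card)
        (fun a => (g (s.equivFin.symm a).1).1)
        (fun a => by
          have h : (g (s.equivFin.symm a).1).1 ∈ {x | MvPolynomial.eval x F = 0} := by
            rw [hV]; exact (g (s.equivFin.symm a).1).2
          exact h)
        (fun a b hab hmem => by
          rw [hV, connectedComponentIn_eq_image (g (s.equivFin.symm a).1).2] at hmem
          obtain ⟨z, hz, hz2⟩ := hmem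
          have hz3 : z = g (s.equivFin.symm b).1 := Subtype.ext hz2
          rw [hz3] at hz
          have := ConnectedComponents.coe_eq_coe'.mpr hz
          rw [hg] at this
          have h5 := this.trans (hg _)
          exact hab (s.equivFin.symm.injective (Subtype.ext h5)).symm)
      rw [Fintype.card_fin, pow_succ] at hcount
      simp only [Nat.add_sub_cancel]
      nlinarith
  have hfin : Finite (ConnectedComponents ↥(f ⁻¹' {y})) := by
    by_contra h
    rw [not_finite_iff_infinite] at h
    obtain ⟨s, hs⟩ := Infinite.exists_subset_card_eq (ConnectedComponents ↥(f ⁻¹' {y}))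
      (d * (2 * d) ^ (k - 1) + 1)
    have := key s
    omega
  refine ⟨hfin, ?_⟩
  have := Fintype.ofFinite (ConnectedComponents ↥(f ⁻¹' {y}))
  rw [Nat.card_eq_fintype_card]
  exact key Finset.univ
end

section
/- Let θ_1, …, θ_r be real polynomials in the variables w_1, …, w_k, let e_1, …, e_k denote the standard basis vectors of ℝ^k and O the origin, and let V ⊆ ℝ^k be the convex hull of the union of {O, e_1, …, e_k} with the set of all exponent vectors (i_1, …, i_k) such that w_1^{i_1}⋯w_k^{i_k} appears with nonzero coefficient in some θ_j. If y ∈ ℝ^r is a regular value of the map f = (θ_1, …, θ_r) : ℝ^k → ℝ^r, then f⁻¹(y) has at most 2^k · k! · vol_k(V) connected components, where vol_k denotes k-dimensional Lebesgue measure. -/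
open MeasureTheory ENNReal

section Rojas
open Filter Topology Pointwise

lemma rj_eval_smul {k : ℕ} (e : ℕ) (P : MvPolynomial (Fin k) ℝ) (t : ℝ) (z : Fin k → ℝ) :
    MvPolynomial.eval (t • z) (MvPolynomial.homogeneousComponent e P) =
      t ^ e * MvPolynomial.eval z (MvPolynomial.homogeneousComponent e P) := by
  rw [MvPolynomial.eval_eq', MvPolynomial.eval_eq', Finset.mul_sum]
  refine Finset.sum_congr rfl fun a ha => ?_
  have h1 : a.degree = e := by
    by_contra h
    rw [MvPolynomial.mem_support_iff] at ha
    exact ha ((MvPolynomial.homogeneousComponent_isHomogeneous e P).coeff_eq_zero h)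
  have h2 : a.degree = ∑ i, a i := by
    rw [Finsupp.degree_eq_sum]
  simp only [Pi.smul_apply, smul_eq_mul, mul_pow, Finset.prod_mul_distrib,
    Finset.prod_pow_eq_pow_sum]
  rw [← h2, h1]; ring

lemma rj_scaled_limit {k : ℕ} (P : MvPolynomial (Fin k) ℝ) (d : ℕ)
    (hd : ∀ e < d, MvPolynomial.homogeneousComponent e P = 0)
    (z : ℝ → Fin k → ℝ) (u : Fin k → ℝ) (hz : Tendsto z (𝓝[≠] 0) (𝓝 u)) :
    Tendsto (fun t => (t ^ d)⁻¹ * MvPolynomial.eval (t • z t) P) (𝓝[≠] 0)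
      (𝓝 (MvPolynomial.eval u (MvPolynomial.homogeneousComponent d P))) := by
  have hs : MvPolynomial.eval u (MvPolynomial.homogeneousComponent d P) =
      ∑ e ∈ Finset.range (P.totalDegree + 1), (0 : ℝ) ^ (e - d) *
        MvPolynomial.eval u (MvPolynomial.homogeneousComponent e P) := by
    by_cases hdd : d ≤ P.totalDegree
    · rw [Finset.sum_eq_single d]
      · simp
      · intro e _ hed
        rcases lt_or_gt_of_ne hed with h | h
        · rw [hd e h]; simp
        · rw [zero_pow (by omega)]; simp
      · intro h; simp at h; omega
    · rw [MvPolynomial.homogeneousComponent_eq_zero _ _ (by omega)]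
      rw [Finset.sum_eq_zero]
      · simp
      · intro e he
        rw [hd e (by simp at he; omega)]; simp
  rw [hs]
  have ht : Tendsto (fun t : ℝ => ∑ e ∈ Finset.range (P.totalDegree + 1), t ^ (e - d) *
        MvPolynomial.eval (z t) (MvPolynomial.homogeneousComponent e P)) (𝓝[≠] 0)
      (𝓝 (∑ e ∈ Finset.range (P.totalDegree + 1), (0 : ℝ) ^ (e - d) *
        MvPolynomial.eval u (MvPolynomial.homogeneousComponent e P))) := by
    refine tendsto_finsetSum _ fun e _ => Tendsto.mul ?_ ?_
    · exact ((continuous_pow (e - d)).tendsto 0).mono_left nhdsWithin_le_nhds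
    · exact ((MvPolynomial.continuous_eval _).tendsto u).comp hz
  refine ht.congr' ?_
  filter_upwards [self_mem_nhdsWithin] with t ht0
  have ht0 : t ≠ 0 := ht0
  conv_rhs => rw [← MvPolynomial.sum_homogeneousComponent P]
  rw [map_sum, Finset.mul_sum]
  refine Finset.sum_congr (by simp) fun e _ => ?_
  by_cases he : e < d
  · rw [hd e he]; simp
  · rw [rj_eval_smul, ← mul_assoc]
    congr 1
    rw [eq_inv_mul_iff_mul_eq₀ (pow_ne_zero _ ht0), ← pow_add]
    congr 1; omega

/-- independence -/
lemma rj_indep {k N : ℕ} (F : Fin k → MvPolynomial (Fin k) ℝ) (q : Fin N → Fin k → ℝ)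
    (h : Fin N → MvPolynomial (Fin k) ℝ)
    (h0 : ∀ i j, i ≠ j → MvPolynomial.eval (q j) (h i) = 0)
    (h1 : ∀ i, MvPolynomial.eval (q i) (h i) ≠ 0)
    (hF : ∀ j i, MvPolynomial.eval (q j) (F i) = 0)
    (hA : ∀ j, ∃ A : (Fin k → ℝ) →L[ℝ] (Fin k → ℝ), Function.Surjective A ∧
      HasFDerivAt (fun w i => MvPolynomial.eval w (F i)) A (q j))
    (P : Fin N → MvPolynomial (Fin k) ℝ)
    (hP : ∑ i, h i * MvPolynomial.aeval F (P i) = 0) : ∀ i, P i = 0 := by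
  classical
  by_contra hne
  have hex : ∃ d, ∃ i, MvPolynomial.homogeneousComponent d (P i) ≠ 0 := by
    by_contra hall
    push Not at hall
    apply hne
    intro i
    rw [← MvPolynomial.sum_homogeneousComponent (P i)]
    exact Finset.sum_eq_zero fun e _ => hall e i
  obtain ⟨j, hj⟩ := Nat.find_spec hex
  have hmin : ∀ e < Nat.find hex, ∀ i, MvPolynomial.homogeneousComponent e (P i) = 0 := by
    intro e he i
    by_contra hc
    exact Nat.find_min hex he ⟨i, hc⟩
  set d := Nat.find hex
  apply hj
  obtain ⟨A, hAs, hA⟩ := hA j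
  apply MvPolynomial.funext
  intro u
  obtain ⟨v, rfl⟩ := hAs u
  rw [map_zero]
  -- the curve
  set Fv : (Fin k → ℝ) → (Fin k → ℝ) := fun w i => MvPolynomial.eval w (F i) with hFv
  have hF0 : Fv (q j) = 0 := by ext i; exact hF j i
  have hline : HasDerivAt (fun t : ℝ => Fv (q j + t • v)) (A v) 0 := by
    have h2 : HasDerivAt (fun t : ℝ => q j + t • v) v 0 := by
      simpa using ((hasDerivAt_id (0:ℝ)).smul_const v).const_add (q j)
    have h3 : HasFDerivAt Fv A (q j + (0:ℝ) • v) := by simpa using hA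
    exact h3.comp_hasDerivAt (0:ℝ) h2
  have hz : Tendsto (fun t : ℝ => t⁻¹ • Fv (q j + t • v)) (𝓝[≠] 0) (𝓝 (A v)) := by
    have := hline.tendsto_slope_zero
    simpa [hF0] using this
  have hlim : Tendsto (fun t : ℝ => ∑ i, MvPolynomial.eval (q j + t • v) (h i) *
      ((t ^ d)⁻¹ * MvPolynomial.eval (t • (t⁻¹ • Fv (q j + t • v))) (P i))) (𝓝[≠] 0)
      (𝓝 (∑ i, MvPolynomial.eval (q j) (h i) *
        MvPolynomial.eval (A v) (MvPolynomial.homogeneousComponent d (P i)))) := by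
    refine tendsto_finsetSum _ fun i _ => Tendsto.mul ?_ ?_
    · have hc : Continuous fun t : ℝ => MvPolynomial.eval (q j + t • v) (h i) :=
        (MvPolynomial.continuous_eval _).comp (by fun_prop)
      have := (hc.tendsto 0).mono_left (nhdsWithin_le_nhds (s := {0}ᶜ))
      simpa using this
    · exact rj_scaled_limit (P i) d (fun e he => hmin e he i) _ _ hz
  have hzero : (fun t : ℝ => ∑ i, MvPolynomial.eval (q j + t • v) (h i) *
      ((t ^ d)⁻¹ * MvPolynomial.eval (t • (t⁻¹ • Fv (q j + t • v))) (P i))) =ᶠ[𝓝[≠] 0]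
      fun _ => 0 := by
    filter_upwards [self_mem_nhdsWithin] with t ht0
    have ht0 : t ≠ 0 := ht0
    rw [smul_smul, mul_inv_cancel₀ ht0, one_smul]
    have := congrArg (fun p => (t^d)⁻¹ * MvPolynomial.eval (q j + t • v) p) hP
    simp only [map_sum, map_mul, map_zero, mul_zero, Finset.mul_sum] at this
    rw [← this]
    refine Finset.sum_congr rfl fun i _ => ?_
    have : MvPolynomial.eval (q j + t • v) (MvPolynomial.aeval F (P i)) =
        MvPolynomial.eval (Fv (q j + t • v)) (P i) := by
      induction P i using MvPolynomial.induction_on with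
      | C a => simp
      | add p q hp hq => simp only [map_add, hp, hq]
      | mul_X p i hp => simp only [map_mul, hp, MvPolynomial.aeval_X, MvPolynomial.eval_X, hFv]
    rw [this]; ring
  have heq := tendsto_nhds_unique (hlim.congr' hzero) tendsto_const_nhds
  rw [Finset.sum_eq_single j (fun i _ hij => by rw [h0 i j hij]; simp) (by simp)] at heq
  exact (mul_eq_zero.mp heq).resolve_left (h1 j)

def rjS {k : ℕ} (W : Set (Fin k → ℝ)) (n : ℕ) : Set (Fin k →₀ ℕ) :=
  {a | (fun i => (a i : ℝ)) ∈ (n : ℝ) • W}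

noncomputable def rjL {k : ℕ} (W : Set (Fin k → ℝ)) (n : ℕ) :
    Submodule ℝ (MvPolynomial (Fin k) ℝ) :=
  MvPolynomial.restrictSupport ℝ (rjS W n)

lemma rjS_add {k : ℕ} {W : Set (Fin k → ℝ)} (hW : Convex ℝ W) (m n : ℕ) :
    rjS W m + rjS W n ⊆ rjS W (m + n) := by
  rintro _ ⟨a, ha, b, hb, rfl⟩
  have : (fun i => (((a + b : Fin k →₀ ℕ) i : ℕ) : ℝ)) =
      (fun i => (a i : ℝ)) + fun i => (b i : ℝ) := by
    ext i; simp
  change _ ∈ _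
  simp only [rjS, Set.mem_ofPred_eq] at *
  rw [this, Nat.cast_add, hW.add_smul (Nat.cast_nonneg _) (Nat.cast_nonneg _)]
  exact Set.add_mem_add ha hb

lemma rjL_mul {k : ℕ} {W : Set (Fin k → ℝ)} (hW : Convex ℝ W) {m n : ℕ}
    {p q : MvPolynomial (Fin k) ℝ} (hp : p ∈ rjL W m) (hq : q ∈ rjL W n) :
    p * q ∈ rjL W (m + n) := by
  apply MvPolynomial.restrictSupport_mono ℝ (rjS_add hW m n)
  rw [MvPolynomial.restrictSupport_add]
  exact Submodule.mul_mem_mul hp hq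

lemma rjL_mono {k : ℕ} {W : Set (Fin k → ℝ)} (hW : Convex ℝ W) (h0 : (0 : Fin k → ℝ) ∈ W)
    {m n : ℕ} (hmn : m ≤ n) : rjL W m ≤ rjL W n := by
  apply MvPolynomial.restrictSupport_mono ℝ
  intro a ha
  obtain ⟨c, rfl⟩ := Nat.exists_eq_add_of_le hmn
  have := rjS_add hW m c
  have h2 : a + 0 ∈ rjS W (m + c) := by
    apply this
    refine Set.add_mem_add ha ?_
    refine ⟨0, h0, ?_⟩
    ext i; simp
  simpa using h2

lemma rjL_C {k : ℕ} {W : Set (Fin k → ℝ)} (h0 : (0 : Fin k → ℝ) ∈ W) (n : ℕ) (c : ℝ) :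
    MvPolynomial.C c ∈ rjL W n := by
  rw [← MvPolynomial.monomial_zero', rjL, MvPolynomial.monomial_mem_restrictSupport]
  left
  refine ⟨0, h0, ?_⟩
  ext i; simp

lemma rjL_X {k : ℕ} {W : Set (Fin k → ℝ)} (i : Fin k) (hi : Pi.single i (1 : ℝ) ∈ W) :
    MvPolynomial.X i ∈ rjL W 1 := by
  rw [MvPolynomial.X, rjL, MvPolynomial.monomial_mem_restrictSupport]
  left
  refine ⟨_, hi, ?_⟩
  ext j; simp [Finsupp.single_apply, Pi.single_apply, eq_comm]

lemma rjL_pow {k : ℕ} {W : Set (Fin k → ℝ)} (hW : Convex ℝ W) (h0 : (0 : Fin k → ℝ) ∈ W)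
    {p : MvPolynomial (Fin k) ℝ} (hp : p ∈ rjL W 1) (e : ℕ) : p ^ e ∈ rjL W e := by
  induction e with
  | zero => simpa using rjL_C h0 0 1
  | succ e ih => rw [pow_succ]; exact rjL_mul hW ih hp

lemma rjL_prod {k : ℕ} {ι : Type*} {W : Set (Fin k → ℝ)} (hW : Convex ℝ W)
    (h0 : (0 : Fin k → ℝ) ∈ W) (s : Finset ι) (p : ι → MvPolynomial (Fin k) ℝ) (e : ι → ℕ)
    (hp : ∀ i ∈ s, p i ∈ rjL W (e i)) : ∏ i ∈ s, p i ∈ rjL W (∑ i ∈ s, e i) := by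
  classical
  induction s using Finset.induction_on with
  | empty => simpa using rjL_C h0 0 1
  | insert a s ha ih =>
    rw [Finset.prod_insert ha, Finset.sum_insert ha]
    exact rjL_mul hW (hp a (by simp)) (ih fun i hi => hp i (by simp [hi]))

lemma rjL_aeval {k : ℕ} {W : Set (Fin k → ℝ)} (hW : Convex ℝ W)
    (h0 : (0 : Fin k → ℝ) ∈ W) (F : Fin k → MvPolynomial (Fin k) ℝ) (hF : ∀ i, F i ∈ rjL W 1)
    (m : ℕ) (P : MvPolynomial (Fin k) ℝ)
    (hP : P ∈ MvPolynomial.restrictSupport ℝ {a : Fin k →₀ ℕ | a.degree ≤ m}) :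
    MvPolynomial.aeval F P ∈ rjL W m := by
  rw [MvPolynomial.aeval_def, MvPolynomial.eval₂_eq']
  refine Submodule.sum_mem _ fun a ha => ?_
  have h1 : a.degree ≤ m := hP ha
  rw [Finsupp.degree_eq_sum] at h1
  apply rjL_mono hW h0 h1
  rw [MvPolynomial.algebraMap_eq, ← MvPolynomial.smul_eq_C_mul]
  apply Submodule.smul_mem
  exact rjL_prod hW h0 _ _ _ fun i _ => rjL_pow hW h0 (hF i) _

lemma rj_separate {k N : ℕ} {W : Set (Fin k → ℝ)} (hW : Convex ℝ W)
    (h0 : (0 : Fin k → ℝ) ∈ W) (h1 : ∀ i : Fin k, Pi.single i (1 : ℝ) ∈ W)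
    (q : Fin N → Fin k → ℝ) (hq : Function.Injective q) :
    ∃ h : Fin N → MvPolynomial (Fin k) ℝ, (∀ i, h i ∈ rjL W N) ∧
      (∀ i j, i ≠ j → MvPolynomial.eval (q j) (h i) = 0) ∧
      (∀ i, MvPolynomial.eval (q i) (h i) ≠ 0) := by
  classical
  have hl : ∀ i j : Fin N, ∃ l : MvPolynomial (Fin k) ℝ, l ∈ rjL W 1 ∧
      (i ≠ j → MvPolynomial.eval (q j) l = 0) ∧ MvPolynomial.eval (q i) l ≠ 0 := by
    intro i j
    by_cases hij : i = j
    · exact ⟨1, by simpa using rjL_C h0 1 1, by simp [hij], by simp⟩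
    · obtain ⟨s, hs⟩ := Function.ne_iff.mp (hq.ne hij)
      refine ⟨MvPolynomial.X s - MvPolynomial.C (q j s), ?_, ?_, ?_⟩
      · exact Submodule.sub_mem _ (rjL_X s (h1 s)) (rjL_C h0 1 _)
      · intro _; simp
      · simpa [sub_eq_zero] using hs
  choose l hl1 hl2 hl3 using hl
  refine ⟨fun i => ∏ j, l i j, ?_, ?_, ?_⟩
  · intro i
    have := rjL_prod hW h0 Finset.univ (l i) (fun _ => 1) (fun j _ => hl1 i j)
    simpa using this
  · intro i j hij
    rw [map_prod]
    exact Finset.prod_eq_zero (Finset.mem_univ j) (hl2 i j hij)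
  · intro i
    rw [map_prod]
    exact Finset.prod_ne_zero_iff.mpr fun j _ => hl3 i j

lemma rj_card_simplex (k m : ℕ) :
    (m : ℝ) ^ k / (Nat.factorial k) ≤ Nat.card {a : Fin k →₀ ℕ | a.degree ≤ m} := by
  have hfin : {a : Fin k →₀ ℕ | a.degree ≤ m}.Finite := Finsupp.finite_of_degree_le m
  have h1 : ((m + 1 + k - 1 : ℕ) : ℕ).choose m ≤ Nat.card {a : Fin k →₀ ℕ | a.degree ≤ m} := by
    have h2 := Finset.card_finsuppAntidiag_nat_eq_choose (s := (Finset.univ : Finset (Fin (k+1)))) m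
    rw [Finset.card_univ, Fintype.card_fin] at h2
    rw [show m + 1 + k - 1 = k + 1 + m - 1 by omega, ← h2, ← Nat.card_eq_finsetCard]
    have := hfin.to_subtype
    have hd : ∀ a ∈ (Finset.univ : Finset (Fin (k+1))).finsuppAntidiag m,
        a 0 + (a.tail).degree = m := by
      intro a ha
      rw [Finset.mem_finsuppAntidiag] at ha
      rw [← ha.1, Fin.sum_univ_succ, Finsupp.degree_eq_sum]
      simp [Finsupp.tail_apply]
    refine Nat.card_le_card_of_injective (fun a => ⟨a.1.tail, ?_⟩) ?_
    · have := hd a.1 a.2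
      simp only [Set.mem_ofPred_eq]; omega
    · intro a b hab
      have hab : a.1.tail = b.1.tail := by simpa using hab
      apply Subtype.ext
      have ha := hd a.1 a.2
      have hb := hd b.1 b.2
      rw [← Finsupp.cons_tail a.1, ← Finsupp.cons_tail b.1, hab]
      rw [hab] at ha
      congr 1; omega
  calc (m : ℝ) ^ k / (Nat.factorial k) ≤ ((m + 1 + k - 1 + 1 - k : ℕ) : ℝ) ^ k / (Nat.factorial k) := by
        gcongr; omega
    _ ≤ ((m + 1 + k - 1 : ℕ).choose k : ℝ) := by
        have := Nat.pow_le_choose (α := ℝ) k (m + 1 + k - 1)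
        exact_mod_cast this
    _ = ((m + 1 + k - 1 : ℕ).choose m : ℝ) := by
        congr 1
        exact Nat.choose_symm_of_eq_add (by omega)
    _ ≤ _ := by exact_mod_cast h1

lemma rj_card_S {k : ℕ} {W : Set (Fin k → ℝ)} (hb : Bornology.IsBounded W) (n : ℕ) (hn : 0 < n) :
    (rjS W n).Finite ∧ Nat.card (rjS W n) ≤
      Nat.card ↑(W ∩ (n : ℝ)⁻¹ • (Submodule.span ℤ (Set.range (Pi.basisFun ℝ (Fin k))) : Set (Fin k → ℝ))) := by
  have hn' : (n : ℝ) ≠ 0 := by positivity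
  set L : Set (Fin k → ℝ) := (Submodule.span ℤ (Set.range (Pi.basisFun ℝ (Fin k))) : Set (Fin k → ℝ))
  have hfin : (W ∩ (n : ℝ)⁻¹ • L).Finite := by
    have h1 := ZSpan.setFinite_inter (Pi.basisFun ℝ (Fin k)) (hb.smul₀ (n : ℝ))
    have h2 := h1.image (fun x => (n : ℝ)⁻¹ • x)
    refine h2.subset ?_
    rintro x ⟨hx, y, hy, rfl⟩
    refine ⟨y, ⟨⟨_, hx, ?_⟩, hy⟩, rfl⟩
    simp [smul_smul, hn']
  have := hfin.to_subtype
  have key : ∀ a : rjS W n, (n : ℝ)⁻¹ • (fun i => (a.1 i : ℝ)) ∈ W ∩ (n : ℝ)⁻¹ • L := by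
    rintro ⟨a, w, hw, ha⟩
    constructor
    · simp only
      rw [← ha]; simpa [smul_smul, hn'] using hw
    · refine Set.smul_mem_smul_set ?_
      simp only [L, SetLike.mem_coe]
      rw [Module.Basis.mem_span_iff_repr_mem]
      intro i
      exact ⟨(a i : ℤ), by simp⟩
  have hinj : Function.Injective (fun a : rjS W n =>
      (⟨_, key a⟩ : ↑(W ∩ (n : ℝ)⁻¹ • L))) := by
    intro a b hab
    have h1 : (n : ℝ)⁻¹ • (fun i => (a.1 i : ℝ)) = (n : ℝ)⁻¹ • (fun i => (b.1 i : ℝ)) := by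
      simpa only [Subtype.mk.injEq] using hab
    have h2 := smul_right_injective _ (inv_ne_zero hn') h1
    ext i
    have := congrFun h2 i
    exact_mod_cast this
  have := Finite.of_injective _ hinj
  exact ⟨Set.toFinite _, Nat.card_le_card_of_injective _ hinj⟩

/-- Number of nondegenerate real roots. -/
lemma rj_root_bound {k N : ℕ} {W : Set (Fin k → ℝ)} (hW : Convex ℝ W) (hWc : IsCompact W)
    (h0 : (0 : Fin k → ℝ) ∈ W) (h1 : ∀ i : Fin k, Pi.single i (1 : ℝ) ∈ W)
    (F : Fin k → MvPolynomial (Fin k) ℝ) (hFW : ∀ i, F i ∈ rjL W 1)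
    (q : Fin N → Fin k → ℝ) (hq : Function.Injective q)
    (hF : ∀ j i, MvPolynomial.eval (q j) (F i) = 0)
    (hA : ∀ j, ∃ A : (Fin k → ℝ) →L[ℝ] (Fin k → ℝ), Function.Surjective A ∧
      HasFDerivAt (fun w i => MvPolynomial.eval w (F i)) A (q j)) :
    (N : ℝ) ≤ Nat.factorial k * volume.real W := by
  obtain ⟨h, hhL, hh0, hh1⟩ := rj_separate hW h0 h1 q hq
  have hcount : ∀ m : ℕ, 0 < m → N * Nat.card {a : Fin k →₀ ℕ | a.degree ≤ m} ≤
      Nat.card (rjS W (N + m)) := by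
    intro m hm
    set M := MvPolynomial.restrictSupport ℝ {a : Fin k →₀ ℕ | a.degree ≤ m}
    have : Finite {a : Fin k →₀ ℕ | a.degree ≤ m} := (Finsupp.finite_of_degree_le m).to_subtype
    have : Finite (rjS W (N + m)) := (rj_card_S hWc.isBounded (N + m) (by omega)).1.to_subtype
    have bM : Module.Basis {a : Fin k →₀ ℕ | a.degree ≤ m} ℝ M :=
      MvPolynomial.basisRestrictSupport ℝ _
    have bL : Module.Basis (rjS W (N + m)) ℝ (rjL W (N + m)) :=
      MvPolynomial.basisRestrictSupport ℝ _
    have : Module.Finite ℝ M := Module.Finite.of_basis bM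
    have : Module.Finite ℝ (rjL W (N + m)) := Module.Finite.of_basis bL
    let T0 : (Fin N → M) →ₗ[ℝ] MvPolynomial (Fin k) ℝ :=
      { toFun := fun P => ∑ i, h i * MvPolynomial.aeval F (P i).1
        map_add' := by
          intro P Q
          simp [mul_add, Finset.sum_add_distrib]
        map_smul' := by
          intro c P
          simp [Finset.smul_sum] }
    let T : (Fin N → M) →ₗ[ℝ] rjL W (N + m) := T0.codRestrict _ (by
      intro P
      change ∑ i, h i * MvPolynomial.aeval F (P i).1 ∈ rjL W (N + m)
      refine Submodule.sum_mem _ fun i _ => ?_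
      exact rjL_mul hW (hhL i) (rjL_aeval hW h0 F hFW m _ (P i).2))
    have hT : Function.Injective T := by
      rw [injective_iff_map_eq_zero]
      intro P hP
      have hP0 : ∑ i, h i * MvPolynomial.aeval F (P i).1 = 0 := congrArg Subtype.val hP
      have := rj_indep F q h hh0 hh1 hF hA (fun i => (P i).1) hP0
      ext1 i
      exact Subtype.ext (this i)
    have := LinearMap.finrank_le_finrank_of_injective hT
    rw [Module.finrank_pi_fintype, Module.finrank_eq_nat_card_basis bM,
      Module.finrank_eq_nat_card_basis bL] at this
    simpa using this
  have hlim := tendsto_card_div_pow_atTop_volume W hWc.isBounded hWc.measurableSet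
    (hW.addHaar_frontier volume)
  have hlim2 := (hlim.comp (tendsto_add_atTop_nat N)).const_mul (Nat.factorial k : ℝ)
  have hlow : Tendsto (fun m : ℕ => (N : ℝ) * ((m : ℝ) / ((m + N : ℕ) : ℝ)) ^ k) atTop (𝓝 (N * 1 ^ k)) := by
    refine Tendsto.const_mul _ (Tendsto.pow ?_ k)
    have := tendsto_natCast_div_add_atTop (𝕜 := ℝ) (N : ℝ)
    simpa using this
  have := le_of_tendsto_of_tendsto hlow hlim2 ?_
  · simpa using this
  · filter_upwards [eventually_gt_atTop 0] with m hm
    have e1 := hcount m hm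
    have e2 := (rj_card_S hWc.isBounded (N + m) (by omega)).2
    have e3 := rj_card_simplex k m
    have e4 : (N : ℝ) * ((m : ℝ) ^ k / (Nat.factorial k)) ≤
        Nat.card ↑(W ∩ ((m + N : ℕ) : ℝ)⁻¹ • (Submodule.span ℤ (Set.range (Pi.basisFun ℝ (Fin k))) : Set (Fin k → ℝ))) := by
      calc (N : ℝ) * ((m : ℝ) ^ k / (Nat.factorial k))
          ≤ N * Nat.card {a : Fin k →₀ ℕ | a.degree ≤ m} := by gcongr
        _ ≤ _ := by
          rw [add_comm m N]
          exact_mod_cast e1.trans e2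
    have hf : (0 : ℝ) < Nat.factorial k := by positivity
    have hp : (0 : ℝ) < ((m + N : ℕ) : ℝ) ^ k := by positivity
    simp only [Function.comp, Fintype.card_fin]
    rw [div_pow, ← mul_div_assoc, ← mul_div_assoc]
    refine div_le_div_of_nonneg_right ?_ hp.le
    rw [← mul_div_assoc, div_le_iff₀ hf] at e4
    linarith

lemma rj_hasFDerivAt {k : ℕ} (p : MvPolynomial (Fin k) ℝ) (x : Fin k → ℝ) :
    HasFDerivAt (fun w => MvPolynomial.eval w p)
      (∑ i, MvPolynomial.eval x (MvPolynomial.pderiv i p) •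
        (ContinuousLinearMap.proj i : (Fin k → ℝ) →L[ℝ] ℝ)) x := by
  induction p using MvPolynomial.induction_on with
  | C a => simpa using hasFDerivAt_const a x
  | add p q hp hq =>
    simp only [map_add, add_smul, Finset.sum_add_distrib]
    exact hp.add hq
  | mul_X p j hp =>
    simp only [map_mul, MvPolynomial.eval_X]
    have hj : HasFDerivAt (fun w : Fin k → ℝ => w j)
      (ContinuousLinearMap.proj j : (Fin k → ℝ) →L[ℝ] ℝ) x := hasFDerivAt_apply j x
    convert! hp.mul hj using 1
    ext v
    simp only [Derivation.leibniz, MvPolynomial.pderiv_X, smul_eq_mul, map_add, map_mul,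
      MvPolynomial.eval_X, sum_apply, smul_apply,
      ContinuousLinearMap.proj_apply, add_apply, add_mul,
      Finset.sum_add_distrib, Finset.mul_sum]
    congr 1
    · rw [Finset.sum_eq_single j]
      · simp
      · intro i _ hij
        simp [hij.symm]
      · simp
    · exact Finset.sum_congr rfl fun i _ => by ring

lemma rj_differentiable {k : ℕ} (F : Fin k → MvPolynomial (Fin k) ℝ) :
    Differentiable ℝ (fun (w : Fin k → ℝ) (i : Fin k) => MvPolynomial.eval w (F i)) := by
  intro x
  rw [differentiableAt_pi]
  intro i
  exact (rj_hasFDerivAt (F i) x).differentiableAt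

lemma rj_generic {k : ℕ} (F : Fin k → MvPolynomial (Fin k) ℝ) :
    ∀ᵐ a : Fin k → ℝ, ∀ w : Fin k → ℝ, (∀ i, MvPolynomial.eval w (F i) = a i) →
      (∀ i, w i ≠ 0) ∧ Function.Surjective
        (fderiv ℝ (fun (w : Fin k → ℝ) (i : Fin k) => MvPolynomial.eval w (F i)) w) := by
  set ψ := (fun (w : Fin k → ℝ) (i : Fin k) => MvPolynomial.eval w (F i)) with hψ
  have hd : Differentiable ℝ ψ := rj_differentiable F
  have h1 : volume (ψ '' {w | (fderiv ℝ ψ w).det = 0}) = 0 :=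
    addHaar_image_eq_zero_of_det_fderivWithin_eq_zero volume
      (fun x _ => (hd x).hasFDerivAt.hasFDerivWithinAt) (fun x hx => hx)
  have h2 : ∀ i, volume (ψ '' {w | w i = 0}) = 0 := by
    intro i
    apply addHaar_image_eq_zero_of_differentiableOn_of_addHaar_eq_zero volume hd.differentiableOn
    exact Measure.pi_hyperplane (fun _ => volume) i 0
  have h3 : ∀ᵐ a : Fin k → ℝ, ∀ i, a ∉ ψ '' {w | w i = 0} := by
    rw [ae_all_iff]
    intro i
    exact measure_eq_zero_iff_ae_notMem.mp (h2 i)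
  filter_upwards [h3, measure_eq_zero_iff_ae_notMem.mp h1] with a ha1 ha2 w hw
  have hwa : ψ w = a := funext hw
  constructor
  · intro i hi
    exact ha1 i ⟨w, hi, hwa⟩
  · have hdet : (fderiv ℝ ψ w).det ≠ 0 := fun h => ha2 ⟨w, h, hwa⟩
    have hu : IsUnit (LinearMap.det ((fderiv ℝ ψ w : (Fin k → ℝ) →L[ℝ] (Fin k → ℝ)) :
      (Fin k → ℝ) →ₗ[ℝ] (Fin k → ℝ))) := isUnit_iff_ne_zero.mpr hdet
    have hsur := (LinearMap.equivOfIsUnitDet hu).surjective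
    intro u
    obtain ⟨v, hv⟩ := hsur u
    exact ⟨v, by simpa using hv⟩

/-- The system `X i * (F i - a i)` is nondegenerate at the roots provided by `rj_generic`. -/
lemma rj_system {k : ℕ} (F : Fin k → MvPolynomial (Fin k) ℝ) (a q : Fin k → ℝ)
    (hq : ∀ i, MvPolynomial.eval q (F i) = a i) (hq0 : ∀ i, q i ≠ 0)
    (hs : Function.Surjective
        (fderiv ℝ (fun (w : Fin k → ℝ) (i : Fin k) => MvPolynomial.eval w (F i)) q)) :
    ∃ A : (Fin k → ℝ) →L[ℝ] (Fin k → ℝ), Function.Surjective A ∧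
      HasFDerivAt (fun w i => MvPolynomial.eval w
        (MvPolynomial.X i * (F i - MvPolynomial.C (a i)))) A q := by
  set ψ := (fun (w : Fin k → ℝ) (i : Fin k) => MvPolynomial.eval w (F i)) with hψ
  have hd : HasFDerivAt ψ (fderiv ℝ ψ q) q := (rj_differentiable F q).hasFDerivAt
  refine ⟨ContinuousLinearMap.pi fun i => q i •
    ((ContinuousLinearMap.proj i : (Fin k → ℝ) →L[ℝ] ℝ).comp (fderiv ℝ ψ q)), ?_, ?_⟩
  · intro u
    obtain ⟨v, hv⟩ := hs (fun i => (q i)⁻¹ * u i)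
    refine ⟨v, ?_⟩
    ext i
    simp only [ContinuousLinearMap.coe_pi', smul_apply,
      ContinuousLinearMap.comp_apply, hv, ContinuousLinearMap.proj_apply, smul_eq_mul]
    rw [mul_inv_cancel_left₀ (hq0 i)]
  · rw [hasFDerivAt_pi]
    intro i
    have h1 : HasFDerivAt (fun w : Fin k → ℝ => w i)
      (ContinuousLinearMap.proj i : (Fin k → ℝ) →L[ℝ] ℝ) q := hasFDerivAt_apply i q
    have h2 : HasFDerivAt (fun w => ψ w i) _ q := (hasFDerivAt_pi'.mp hd) i
    have h3 := h1.mul (h2.sub_const (a i))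
    have h4 : ψ q i - a i = 0 := by simp [hψ, hq i]
    rw [h4, zero_smul, add_zero] at h3
    refine h3.congr_of_eventuallyEq (Eventually.of_forall fun w => ?_)
    simp [hψ]

lemma rj_compactQ {k : ℕ} (R : ℝ) : IsCompact {w : Fin k → ℝ | ∑ j, w j ^ 2 ≤ R} := by
  apply Metric.isCompact_of_isClosed_isBounded
  · exact isClosed_le (by fun_prop) continuous_const
  · refine (Metric.isBounded_closedBall (x := (0 : Fin k → ℝ)) (r := |R| + 1)).subset ?_
    intro w hw
    have hw : ∑ j, w j ^ 2 ≤ R := hw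
    rw [mem_closedBall_zero_iff, pi_norm_le_iff_of_nonneg (by positivity)]
    intro j
    have h1 : w j ^ 2 ≤ ∑ j, w j ^ 2 :=
      Finset.single_le_sum (f := fun j => w j ^ 2) (fun i _ => sq_nonneg _) (Finset.mem_univ j)
    rw [Real.norm_eq_abs]
    apply abs_le_of_sq_le_sq _ (by positivity)
    nlinarith [le_abs_self R, abs_nonneg R]

lemma rj_clopens {Y : Type*} [TopologicalSpace Y] [CompactSpace Y] [T2Space Y] {N : ℕ}
    (y : Fin N → Y) (hy : ∀ i j, i ≠ j → y i ∉ connectedComponent (y j)) :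
    ∃ U : Fin N → Set Y, (∀ i, IsClopen (U i)) ∧ (∀ i, y i ∈ U i) ∧
      ∀ i j, i ≠ j → Disjoint (U i) (U j) := by
  classical
  have h1 : ∀ j i, ∃ s : Set Y, IsClopen s ∧ y j ∈ s ∧ (i ≠ j → y i ∉ s) := by
    intro j i
    by_cases hij : i = j
    · exact ⟨Set.univ, isClopen_univ, trivial, fun h => absurd hij h⟩
    · have := hy i j hij
      rw [connectedComponent_eq_iInter_isClopen, Set.mem_iInter] at this
      push Not at this
      obtain ⟨⟨s, hs, hjs⟩, his⟩ := this
      exact ⟨s, hs, hjs, fun _ => his⟩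
  choose s hs1 hs2 hs3 using h1
  set Z : Fin N → Set Y := fun j => ⋂ i, s j i
  have hZ : ∀ j, IsClopen (Z j) := fun j => isClopen_iInter_of_finite fun i => hs1 j i
  have hZ1 : ∀ j, y j ∈ Z j := fun j => Set.mem_iInter.mpr fun i => hs2 j i
  have hZ2 : ∀ i j, i ≠ j → y i ∉ Z j := fun i j hij h => hs3 j i hij (Set.mem_iInter.mp h i)
  refine ⟨fun j => Z j ∩ ⋂ i, (if i = j then Set.univ else (Z i)ᶜ), ?_, ?_, ?_⟩
  · intro j
    refine (hZ j).inter (isClopen_iInter_of_finite fun i => ?_)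
    split_ifs
    · exact isClopen_univ
    · exact (hZ i).compl
  · intro j
    refine ⟨hZ1 j, Set.mem_iInter.mpr fun i => ?_⟩
    split_ifs with h
    · trivial
    · exact hZ2 j i (Ne.symm h)
  · intro i j hij
    rw [Set.disjoint_left]
    rintro x ⟨hx1, _⟩ ⟨_, hx2⟩
    have := Set.mem_iInter.mp hx2 i
    rw [if_neg hij] at this
    exact this hx1

lemma rj_minima {k N : ℕ} (g : (Fin k → ℝ) → ℝ) (hg : Continuous g) (hg0 : ∀ w, 0 ≤ g w)
    (X : Set (Fin k → ℝ)) (hX : ∀ w, w ∈ X ↔ g w = 0) (p : Fin N → X)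
    (hp : ∀ i j, i ≠ j → p i ∉ connectedComponent (p j)) :
    ∃ ε > 0, ∀ᶠ a : Fin k → ℝ in 𝓝 0, ∃ q : Fin N → Fin k → ℝ, Function.Injective q ∧
      ∀ i, IsLocalMin (fun w => g w + ε * ∑ j, (w j - a j) ^ 2) (q i) := by
  classical
  set Q : (Fin k → ℝ) → ℝ := fun w => ∑ j, w j ^ 2 with hQ
  have hQc : Continuous Q := by fun_prop
  have hQ0 : ∀ w, 0 ≤ Q w := fun w => Finset.sum_nonneg fun i _ => sq_nonneg _
  obtain ⟨R, hR⟩ : ∃ R, ∀ i, Q (p i) < R := by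
    refine ⟨∑ i, Q (p i) + 1, fun i => ?_⟩
    have := Finset.single_le_sum (f := fun i => Q (p i)) (fun i _ => hQ0 _) (Finset.mem_univ i)
    linarith
  set B := {w : Fin k → ℝ | Q w ≤ R}
  have hB : IsCompact B := rj_compactQ R
  set Y : Set (Fin k → ℝ) := B ∩ {w | g w = 0}
  have hY : IsCompact Y := hB.inter_right (isClosed_eq hg continuous_const)
  have : CompactSpace Y := isCompact_iff_compactSpace.mp hY
  let y : Fin N → Y := fun i => ⟨p i, (hR i).le, (hX _).mp (p i).2⟩
  have hy : ∀ i j, i ≠ j → y i ∉ connectedComponent (y j) := by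
    intro i j hij h
    let inc : Y → X := fun w => ⟨w.1, (hX _).mpr w.2.2⟩
    have hinc : Continuous inc := by fun_prop
    exact hp i j hij (hinc.mapsTo_connectedComponent (y j) h)
  obtain ⟨U, hU1, hU2, hU3⟩ := rj_clopens y hy
  set C : Fin N → Set (Fin k → ℝ) := fun i => Subtype.val '' (U i)
  set D : Fin N → Set (Fin k → ℝ) := fun i => Subtype.val '' (U i)ᶜ
  have hC : ∀ i, IsCompact (C i) := fun i => (hU1 i).isClosed.isCompact.image continuous_subtype_val
  have hD : ∀ i, IsCompact (D i) :=
    fun i => (hU1 i).compl.isClosed.isCompact.image continuous_subtype_val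
  have hCD : ∀ i, Disjoint (C i) (D i) := fun i =>
    (Set.disjoint_image_iff Subtype.val_injective).mpr disjoint_compl_right
  have hpC : ∀ i, (p i : Fin k → ℝ) ∈ C i := fun i => ⟨y i, hU2 i, rfl⟩
  have hCsub : ∀ i j, i ≠ j → C j ⊆ D i := fun i j hij =>
    Set.image_mono ((hU3 i j hij).symm.subset_compl_right)
  obtain ⟨ρ, hρ0, hρ⟩ : ∃ ρ > 0, ∀ i, Disjoint (Metric.cthickening ρ (C i))
      (Metric.cthickening ρ (D i)) := by
    have h1 : ∀ i, ∀ᶠ ρ in 𝓝[>] (0 : ℝ), Disjoint (Metric.cthickening ρ (C i))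
      (Metric.cthickening ρ (D i)) := by
      intro i
      obtain ⟨δ, hδ, hdis⟩ := (hCD i).exists_cthickenings (hC i) (hD i).isClosed
      filter_upwards [Ioo_mem_nhdsGT hδ] with ρ hρ
      exact hdis.mono (Metric.cthickening_mono hρ.2.le _) (Metric.cthickening_mono hρ.2.le _)
    obtain ⟨ρ, h2, h3⟩ := ((eventually_all.mpr h1).and self_mem_nhdsWithin).exists
    exact ⟨ρ, h3, h2⟩
  set K : Fin N → Set (Fin k → ℝ) := fun i => B ∩ Metric.cthickening ρ (C i)
  have hK : ∀ i, IsCompact (K i) := fun i => hB.inter_right Metric.isClosed_cthickening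
  set O : Fin N → Set (Fin k → ℝ) := fun i => {w | Q w < R} ∩ Metric.thickening ρ (C i)
  have hO : ∀ i, IsOpen (O i) := fun i =>
    (isOpen_lt hQc continuous_const).inter Metric.isOpen_thickening
  have hOK : ∀ i, O i ⊆ K i := fun i w hw =>
    ⟨(show Q w < R from hw.1).le, Metric.thickening_subset_cthickening _ _ hw.2⟩
  have hpO : ∀ i, (p i : Fin k → ℝ) ∈ O i := fun i =>
    ⟨hR i, Metric.self_subset_thickening hρ0 _ (hpC i)⟩
  set T : Fin N → Set (Fin k → ℝ) := fun i => K i \ Metric.thickening ρ (C i)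
  have hT : ∀ i, IsCompact (T i) := fun i => (hK i).diff Metric.isOpen_thickening
  have hTg : ∀ i, ∀ w ∈ T i, 0 < g w := by
    rintro i w ⟨⟨hw1, hw2⟩, hw3⟩
    refine lt_of_le_of_ne (hg0 w) fun h => ?_
    have hwY : w ∈ Y := ⟨hw1, h.symm⟩
    by_cases hwU : (⟨w, hwY⟩ : Y) ∈ U i
    · exact hw3 (Metric.self_subset_thickening hρ0 _ ⟨_, hwU, rfl⟩)
    · exact Set.disjoint_left.mp (hρ i) hw2
        (Metric.self_subset_cthickening _ ⟨_, hwU, rfl⟩)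
  obtain ⟨ε, hε0, hε⟩ : ∃ ε > 0, ∀ i, ∀ w ∈ T i, ε * R < g w := by
    have h1 : ∀ i, ∀ᶠ ε in 𝓝 (0 : ℝ), ∀ w ∈ T i, ε * R < g w := by
      intro i
      refine (hT i).eventually_forall_of_forall_eventually fun w hw => ?_
      have hc1 : Continuous fun z : ℝ × (Fin k → ℝ) => z.1 * R := by fun_prop
      have hc2 : Continuous fun z : ℝ × (Fin k → ℝ) => g z.2 := by fun_prop
      refine (hc1.tendsto (0, w)).eventually_lt (hc2.tendsto (0, w)) ?_
      simpa using hTg i w hw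
    have h2 : ∀ᶠ ε in 𝓝[>] (0 : ℝ), ∀ i, ∀ w ∈ T i, ε * R < g w :=
      (eventually_all.mpr h1).filter_mono nhdsWithin_le_nhds
    obtain ⟨ε, h3, h4⟩ := (h2.and self_mem_nhdsWithin).exists
    exact ⟨ε, h4, h3⟩
  refine ⟨ε, hε0, ?_⟩
  have hε0 : 0 < ε := hε0
  set G : (Fin k → ℝ) → (Fin k → ℝ) → ℝ := fun a w => g w + ε * ∑ j, (w j - a j) ^ 2 with hG
  have hbd : ∀ᶠ a in 𝓝 (0 : Fin k → ℝ), ∀ i, ∀ w ∈ K i \ O i, G a (p i) < G a w := by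
    rw [eventually_all]
    intro i
    refine ((hK i).diff (hO i)).eventually_forall_of_forall_eventually fun w hw => ?_
    have hc1 : Continuous fun z : (Fin k → ℝ) × (Fin k → ℝ) => G z.1 (p i) := by
      simp only [hG]; fun_prop
    have hc2 : Continuous fun z : (Fin k → ℝ) × (Fin k → ℝ) => G z.1 z.2 := by
      simp only [hG]; fun_prop
    refine (hc1.tendsto (0, w)).eventually_lt (hc2.tendsto (0, w)) ?_
    have e1 : G 0 (p i) = ε * Q (p i) := by
      have := (hX _).mp (p i).2
      simp [hG, hQ, this]
    have e2 : G 0 w = g w + ε * Q w := by simp [hG, hQ]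
    simp only [e1, e2]
    by_cases hth : w ∈ Metric.thickening ρ (C i)
    · have hQw : R ≤ Q w := by
        by_contra hlt
        exact hw.2 ⟨not_le.mp hlt, hth⟩
      have := hg0 w
      have := mul_lt_mul_of_pos_left ((hR i).trans_le hQw) hε0
      linarith
    · have h1 := hε i w ⟨hw.1, hth⟩
      have h2 := mul_lt_mul_of_pos_left (hR i) hε0
      have h3 := mul_nonneg hε0.le (hQ0 w)
      linarith
  filter_upwards [hbd] with a ha
  have hcG : Continuous (G a) := by simp only [hG]; fun_prop
  have hmin : ∀ i, ∃ q, q ∈ O i ∧ IsLocalMin (G a) q := by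
    intro i
    obtain ⟨q, hqK, hq⟩ := (hK i).exists_isMinOn ⟨_, hOK i (hpO i)⟩ hcG.continuousOn
    have hqO : q ∈ O i := by
      by_contra hn
      have h1 := ha i q ⟨hqK, hn⟩
      have h2 : G a q ≤ G a (p i) := hq (hOK i (hpO i))
      linarith
    refine ⟨q, hqO, ?_⟩
    filter_upwards [(hO i).mem_nhds hqO] with w hw
    exact hq (hOK i hw)
  choose q hq1 hq2 using hmin
  refine ⟨q, ?_, hq2⟩
  intro i j hij
  by_contra hne
  have h1 := (hOK i (hq1 i)).2
  have h2 := (hOK j (hq1 j)).2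
  rw [hij] at h1
  exact Set.disjoint_left.mp (hρ i) h1 (Metric.cthickening_subset_of_subset _ (hCsub i j hne) h2)

lemma rj_X_mul_pderiv {k : ℕ} (s : Set (Fin k →₀ ℕ)) (p : MvPolynomial (Fin k) ℝ)
    (hp : p ∈ MvPolynomial.restrictSupport ℝ s) (i : Fin k) :
    MvPolynomial.X i * MvPolynomial.pderiv i p ∈ MvPolynomial.restrictSupport ℝ s := by
  rw [p.as_sum, map_sum, Finset.mul_sum]
  refine Submodule.sum_mem _ fun a ha => ?_
  rw [MvPolynomial.X_mul_pderiv_monomial]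
  apply Submodule.smul_of_tower_mem
  rw [MvPolynomial.monomial_mem_restrictSupport]
  exact Or.inl (hp ha)

lemma rjL_two {k : ℕ} (V : Set (Fin k → ℝ)) : rjL ((2 : ℝ) • V) 1 = rjL V 2 := by
  simp [rjL, rjS]

lemma rj_main {k r N : ℕ} (θ : Fin r → MvPolynomial (Fin k) ℝ) (V : Set (Fin k → ℝ))
    (hVc : Convex ℝ V) (hVk : IsCompact V)
    (h0 : (0 : Fin k → ℝ) ∈ V) (h1 : ∀ i : Fin k, Pi.single i (1 : ℝ) ∈ V)
    (hθ : ∀ j, θ j ∈ rjL V 1) (y : Fin r → ℝ) (X : Set (Fin k → ℝ))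
    (hX : ∀ w, w ∈ X ↔ ∀ j, MvPolynomial.eval w (θ j) = y j) (p : Fin N → X)
    (hp : ∀ i j, i ≠ j → p i ∉ connectedComponent (p j)) :
    (N : ℝ) ≤ Nat.factorial k * volume.real ((2 : ℝ) • V) := by
  set g : MvPolynomial (Fin k) ℝ := ∑ j, (θ j - MvPolynomial.C (y j)) ^ 2 with hg
  have hgL : g ∈ rjL V 2 := Submodule.sum_mem _ fun j _ =>
    rjL_pow hVc h0 (Submodule.sub_mem _ (hθ j) (rjL_C h0 1 _)) 2
  have hge : ∀ w, MvPolynomial.eval w g = ∑ j, (MvPolynomial.eval w (θ j) - y j) ^ 2 := by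
    intro w; simp [hg]
  obtain ⟨ε, hε, hev⟩ := rj_minima (fun w => MvPolynomial.eval w g)
    (MvPolynomial.continuous_eval g)
    (fun w => by rw [hge]; exact Finset.sum_nonneg fun j _ => sq_nonneg _) X
    (fun w => by
      rw [hX, hge, Finset.sum_eq_zero_iff_of_nonneg (fun j _ => sq_nonneg _)]
      simp [sub_eq_zero]) p hp
  have hε : 0 < ε := hε
  set F : Fin k → MvPolynomial (Fin k) ℝ := fun i =>
    MvPolynomial.X i + MvPolynomial.C (2 * ε)⁻¹ * MvPolynomial.pderiv i g with hF
  obtain ⟨a, ha1, q, hqi, hq⟩ :=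
    ((Measure.dense_of_ae (rj_generic F)).inter_nhds_nonempty hev)
  have hcrit : ∀ n i, MvPolynomial.eval (q n) (F i) = a i := by
    intro n i
    set G : MvPolynomial (Fin k) ℝ := g + MvPolynomial.C ε *
      ∑ j, (MvPolynomial.X j - MvPolynomial.C (a j)) ^ 2 with hG
    have hloc : IsLocalMin (fun w => MvPolynomial.eval w G) (q n) := by
      simpa [hG] using hq n
    have hz := hloc.hasFDerivAt_eq_zero (rj_hasFDerivAt G (q n))
    have hz2 := congrArg (fun A => A (Pi.single i (1 : ℝ))) hz
    have hz3 : MvPolynomial.eval (q n) (MvPolynomial.pderiv i G) = 0 := by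
      simpa [Pi.single_apply] using hz2
    have hz4 : MvPolynomial.eval (q n) (MvPolynomial.pderiv i G) =
        MvPolynomial.eval (q n) (MvPolynomial.pderiv i g) + ε * (2 * (q n i - a i)) := by
      rw [hG]
      simp only [map_add, Derivation.leibniz, map_sum, Derivation.leibniz_pow, map_sub,
        MvPolynomial.pderiv_X, MvPolynomial.pderiv_C, smul_eq_mul, map_mul, MvPolynomial.eval_C]
      rw [Finset.sum_eq_single i]
      · simp
      · intro j _ hji
        simp [hji.symm]
      · simp
    rw [hz3] at hz4
    have : MvPolynomial.eval (q n) (MvPolynomial.pderiv i g) = - (ε * (2 * (q n i - a i))) := by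
      linarith
    simp only [hF, map_add, map_mul, MvPolynomial.eval_X, MvPolynomial.eval_C, this]
    field_simp
    ring
  have h0' : (0 : Fin k → ℝ) ∈ (2 : ℝ) • V := ⟨0, h0, by simp⟩
  have h1' : ∀ i : Fin k, Pi.single i (1 : ℝ) ∈ (2 : ℝ) • V := by
    intro i
    refine ⟨(1 / 2 : ℝ) • Pi.single i (1 : ℝ), ?_, by simp [smul_smul]⟩
    exact hVc.smul_mem_of_zero_mem h0 (h1 i) ⟨by norm_num, by norm_num⟩
  have hWc : Convex ℝ ((2 : ℝ) • V) := hVc.smul (2 : ℝ)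
  have hWk : IsCompact ((2 : ℝ) • V) := hVk.smul (2 : ℝ)
  refine rj_root_bound hWc hWk h0' h1'
    (fun i => MvPolynomial.X i * (F i - MvPolynomial.C (a i))) ?_ q hqi ?_ ?_
  · intro i
    rw [rjL_two]
    have : MvPolynomial.X i * (F i - MvPolynomial.C (a i)) =
        MvPolynomial.X i * (MvPolynomial.X i - MvPolynomial.C (a i)) +
          (2 * ε)⁻¹ • (MvPolynomial.X i * MvPolynomial.pderiv i g) := by
      rw [MvPolynomial.smul_eq_C_mul, hF]; ring
    rw [this]
    refine Submodule.add_mem _ ?_ (Submodule.smul_mem _ _ (rj_X_mul_pderiv _ g hgL i))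
    have hX1 := rjL_X i (h1 i)
    have hX2 : MvPolynomial.X i - MvPolynomial.C (a i) ∈ rjL V 1 :=
      Submodule.sub_mem _ hX1 (rjL_C h0 1 _)
    have hX3 := rjL_mul hVc hX1 hX2
    rw [one_add_one_eq_two] at hX3
    exact hX3
  · intro n i
    simp [hcrit n i]
  · intro n
    obtain ⟨e1, e2⟩ := ha1 (q n) (hcrit n)
    exact rj_system F a (q n) (hcrit n) e1 e2


theorem rj_final
    (k r : ℕ)
    (θ : Fin r → MvPolynomial (Fin k) ℝ)
    (V : Set (Fin k → ℝ))
    (hV : V = convexHull ℝ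
      (({0} ∪ Set.range (fun i : Fin k => Pi.single i (1 : ℝ))) ∪
        {v : Fin k → ℝ | ∃ j : Fin r, ∃ m ∈ (θ j).support, v = fun i => (m i : ℝ)}))
    (f : (Fin k → ℝ) → (Fin r → ℝ))
    (hf : ∀ w j, f w j = MvPolynomial.eval w (θ j))
    (y : Fin r → ℝ)
    (hreg : ∀ x ∈ f ⁻¹' {y}, Function.Surjective (fderiv ℝ f x)) :
    Finite (ConnectedComponents ↥(f ⁻¹' {y})) ∧
      (Nat.card (ConnectedComponents ↥(f ⁻¹' {y})) : ℝ≥0∞) ≤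
        2 ^ k * (Nat.factorial k) * volume V := by
  have hVc : Convex ℝ V := hV ▸ convex_convexHull ℝ _
  have hVk : IsCompact V := by
    rw [hV]
    apply Set.Finite.isCompact_convexHull
    refine ((Set.finite_singleton _).union (Set.finite_range _)).union ?_
    have : {v : Fin k → ℝ | ∃ j : Fin r, ∃ m ∈ (θ j).support, v = fun i => (m i : ℝ)} =
        ⋃ j : Fin r, (fun (m : Fin k →₀ ℕ) (i : Fin k) => (m i : ℝ)) '' ((θ j).support : Set _) := by
      ext v
      simp [eq_comm]
    rw [this]
    exact Set.finite_iUnion fun j => (Finset.finite_toSet _).image _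
  have h0 : (0 : Fin k → ℝ) ∈ V := by
    rw [hV]; exact subset_convexHull ℝ _ (Or.inl (Or.inl rfl))
  have h1 : ∀ i : Fin k, Pi.single i (1 : ℝ) ∈ V := by
    intro i
    rw [hV]; exact subset_convexHull ℝ _ (Or.inl (Or.inr ⟨i, rfl⟩))
  have hθ : ∀ j, θ j ∈ rjL V 1 := by
    intro j m hm
    refine ⟨fun i => (m i : ℝ), ?_, by simp⟩
    rw [hV]; exact subset_convexHull ℝ _ (Or.inr ⟨j, m, hm, rfl⟩)
  have hX : ∀ w, w ∈ f ⁻¹' {y} ↔ ∀ j, MvPolynomial.eval w (θ j) = y j := by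
    intro w
    simp only [Set.mem_preimage, Set.mem_singleton_iff, funext_iff, hf]
  have hvol : volume ((2 : ℝ) • V) = 2 ^ k * volume V := by
    rw [Measure.addHaar_smul]
    simp
  have hfin : volume ((2 : ℝ) • V) ≠ ⊤ := (hVk.smul (2 : ℝ)).measure_lt_top.ne
  -- every finite family of components obeys the bound
  have key : ∀ N : ℕ, ∀ c : Fin N → ConnectedComponents ↥(f ⁻¹' {y}), Function.Injective c →
      (N : ℝ) ≤ Nat.factorial k * volume.real ((2 : ℝ) • V) := by
    intro N c hc
    choose p hp using fun i => ConnectedComponents.surjective_coe (c i)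
    refine rj_main θ V hVc hVk h0 h1 hθ y (f ⁻¹' {y}) hX p fun i j hij h => ?_
    apply hij
    apply hc
    rw [← hp i, ← hp j, ConnectedComponents.coe_eq_coe']
    exact h
  have hF : Finite (ConnectedComponents ↥(f ⁻¹' {y})) := by
    by_contra hinf
    rw [not_finite_iff_infinite] at hinf
    obtain ⟨N, hN⟩ := exists_nat_gt ((Nat.factorial k : ℝ) * volume.real ((2 : ℝ) • V))
    have := key N (fun i => Infinite.natEmbedding _ i.1)
      (fun i j hij => Fin.ext ((Infinite.natEmbedding _).injective hij))
    linarith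
  refine ⟨hF, ?_⟩
  have hb := key _ (Finite.equivFin (ConnectedComponents ↥(f ⁻¹' {y}))).symm
    (Equiv.injective _)
  have he : 2 ^ k * (Nat.factorial k : ℝ≥0∞) * volume V =
      (Nat.factorial k : ℝ≥0∞) * volume ((2 : ℝ) • V) := by
    rw [hvol]; ring
  rw [he]
  rw [← ENNReal.toReal_le_toReal (ENNReal.natCast_ne_top _)
    (ENNReal.mul_ne_top (ENNReal.natCast_ne_top _) hfin), ENNReal.toReal_mul, ENNReal.toReal_natCast, ENNReal.toReal_natCast]
  exact hb

end Rojas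

/-- Rojas' bound: Let `V ⊆ ℝ^k` be the convex hull of the union of
`{O, e₁, …, e_k}` with the set of exponent vectors of monomials appearing in some `θ_j`.
If `y` is a regular value of `f = (θ₁, …, θ_r)`, then `f⁻¹(y)` has at most
`2^k · k! · vol_k(V)` connected components. -/
theorem rojas_bound_connected_components
    (k r : ℕ)
    (θ : Fin r → MvPolynomial (Fin k) ℝ)
    (V : Set (Fin k → ℝ))
    (hV : V = convexHull ℝ
      (({0} ∪ Set.range (fun i : Fin k => Pi.single i (1 : ℝ))) ∪
        {v : Fin k → ℝ | ∃ j : Fin r, ∃ m ∈ (θ j).support, v = fun i => (m i : ℝ)}))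
    (f : (Fin k → ℝ) → (Fin r → ℝ))
    (hf : ∀ w j, f w j = MvPolynomial.eval w (θ j))
    (y : Fin r → ℝ)
    (hreg : ∀ x ∈ f ⁻¹' {y}, Function.Surjective (fderiv ℝ f x)) :
    Finite (ConnectedComponents ↥(f ⁻¹' {y})) ∧
      (Nat.card (ConnectedComponents ↥(f ⁻¹' {y})) : ℝ≥0∞) ≤
        2 ^ k * (Nat.factorial k) * volume V := by
  exact rj_final k r θ V hV f hf y hreg
end

section
/- Let l ≥ 1, let k_1, …, k_l be positive integers with k = Σ k_i, and let d_1, …, d_l be positive integers. Partition the variables w_1, …, w_k into l consecutive blocks, block i of size k_i. Let θ_1, …, θ_r be real polynomials in w_1, …, w_k such that every monomial of every θ_j has total degree at most d_i in the variables of block i, for each i. If y ∈ ℝ^r is a regular value of the map f = (θ_1, …, θ_r) : ℝ^k → ℝ^r, then f⁻¹(y) has at most 2^k · k! · ∏_{i=1}^l d_i^{k_i}/k_i! connected components. -/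
namespace Rojas
open MvPolynomial Filter Topology

/-- number of tuples of naturals with bounded sum -/
theorem card_tuples (ι : Type) [Fintype ι] (d : ℕ) :
    Finite {v : ι → ℕ // ∑ t, v t ≤ d} ∧
    Nat.card {v : ι → ℕ // ∑ t, v t ≤ d} = (d + Fintype.card ι).choose (Fintype.card ι) := by
  classical
  let e : {v : ι → ℕ // ∑ t, v t ≤ d} ≃ {w : Option ι → ℕ // ∑ t, w t = d} :=
    { toFun := fun v => ⟨fun o => o.elim (d - ∑ t, v.1 t) v.1, by
        rw [Fintype.sum_option]; have := v.2; simp; omega⟩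
      invFun := fun w => ⟨fun t => w.1 (some t), by
        have := w.2; rw [Fintype.sum_option] at this; dsimp only; omega⟩
      left_inv := fun v => by ext; simp
      right_inv := fun w => by
        have := w.2; rw [Fintype.sum_option] at this
        ext o; cases o <;> simp; omega }
  let e2 := e.trans (Sym.equivNatSumOfFintype (Option ι) d).symm
  refine ⟨Finite.of_equiv _ e2.symm, ?_⟩
  rw [Nat.card_congr e2, Nat.card_eq_fintype_card, Sym.card_sym_eq_choose, Fintype.card_option]
  rw [show Fintype.card ι + 1 + d - 1 = d + Fintype.card ι by omega]
  exact Nat.choose_symm_add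

section
variable {l : ℕ} {k : Fin l → ℕ}

/-- exponents with bounded block degrees -/
def expo (k : Fin l → ℕ) (D : Fin l → ℕ) : Set (((i : Fin l) × Fin (k i)) →₀ ℕ) :=
  {m | ∀ i : Fin l, ∑ t : Fin (k i), m ⟨i, t⟩ ≤ D i}

/-- polynomials with bounded block degrees -/
noncomputable def Bd (k : Fin l → ℕ) (D : Fin l → ℕ) :
    Submodule ℝ (MvPolynomial ((i : Fin l) × Fin (k i)) ℝ) :=
  restrictSupport ℝ (expo k D)

theorem mem_Bd {D : Fin l → ℕ} {p : MvPolynomial ((i : Fin l) × Fin (k i)) ℝ} :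
    p ∈ Bd k D ↔ ∀ m ∈ p.support, ∀ i : Fin l, ∑ t : Fin (k i), m ⟨i, t⟩ ≤ D i := Iff.rfl

theorem card_expo (k D : Fin l → ℕ) : Finite (expo k D) ∧
    Nat.card (expo k D) ≤ ∏ i, (D i + k i).choose (k i) := by
  have := fun i => (card_tuples (Fin (k i)) (D i)).1
  let φ : expo k D → ((i : Fin l) → {v : Fin (k i) → ℕ // ∑ t, v t ≤ D i}) :=
    fun m i => ⟨fun t => m.1 ⟨i, t⟩, m.2 i⟩
  have hφ : Function.Injective φ := by
    intro m n h
    ext ⟨i, t⟩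
    have := congrArg (fun x => (x i).1 t) h
    simpa [φ] using this
  refine ⟨Finite.of_injective φ hφ, ?_⟩
  refine (Nat.card_le_card_of_injective φ hφ).trans ?_
  rw [Nat.card_pi]
  apply le_of_eq
  refine Finset.prod_congr rfl fun i _ => ?_
  rw [(card_tuples (Fin (k i)) (D i)).2, Fintype.card_fin]

theorem finrank_Bd (k D : Fin l → ℕ) : Module.Finite ℝ (Bd k D) ∧
    Module.finrank ℝ (Bd k D) ≤ ∏ i, (D i + k i).choose (k i) := by
  have := (card_expo k D).1
  have := Fintype.ofFinite (expo k D)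
  refine ⟨Module.Finite.of_basis (basisRestrictSupport ℝ (expo k D)), ?_⟩
  have h := Module.finrank_eq_card_basis (basisRestrictSupport ℝ (expo k D))
  rw [Bd, h, ← Nat.card_eq_fintype_card]
  exact (card_expo k D).2

theorem Bd_mono {D D' : Fin l → ℕ} (h : ∀ i, D i ≤ D' i) : Bd k D ≤ Bd k D' :=
  restrictSupport_mono ℝ fun _ hm i => (hm i).trans (h i)

theorem Bd_mul {D D' : Fin l → ℕ} {p q} (hp : p ∈ Bd k D) (hq : q ∈ Bd k D') :
    p * q ∈ Bd k (D + D') := by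
  classical
  rw [mem_Bd] at *
  intro m hm i
  obtain ⟨a, ha, b, hb, rfl⟩ := Finset.mem_add.1 (support_mul p q hm)
  simp only [Finsupp.add_apply, Finset.sum_add_distrib, Pi.add_apply]
  exact add_le_add (hp a ha i) (hq b hb i)

theorem Bd_C (D : Fin l → ℕ) (c : ℝ) : C c ∈ Bd k D := by
  rw [mem_Bd]
  intro m hm i
  classical
  rw [mem_support_iff, coeff_C] at hm
  have : m = 0 := by by_contra h; simp [Ne.symm h] at hm
  simp [this]

theorem Bd_total (D : Fin l → ℕ) (hD : ∀ i, 1 ≤ D i) (p : MvPolynomial ((i : Fin l) × Fin (k i)) ℝ)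
    (s : ℕ) (h : p.totalDegree ≤ s) : p ∈ Bd k (s • D) := by
  rw [mem_Bd]
  intro m hm i
  have h1 := le_totalDegree hm
  have h2 : ∑ t : Fin (k i), m ⟨i, t⟩ ≤ m.sum fun _ e => e := by
    rw [Finsupp.sum_fintype _ _ (by simp), Fintype.sum_sigma]
    exact Finset.single_le_sum (f := fun i => ∑ t : Fin (k i), m ⟨i, t⟩) (by simp) (Finset.mem_univ i)
  have := hD i
  simp only [Pi.smul_apply, smul_eq_mul]
  nlinarith

theorem Bd_prod_pow {D : Fin l → ℕ} {ι : Type} [Fintype ι]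
    (p : ι → MvPolynomial ((i : Fin l) × Fin (k i)) ℝ)
    (hp : ∀ a, p a ∈ Bd k D) (α : ι → ℕ) (t : ℕ) (h : ∑ a, α a ≤ t) :
    ∏ a, p a ^ α a ∈ Bd k (t • D) := by
  classical
  have h1 : ∀ a n, p a ^ n ∈ Bd k (n • D) := by
    intro a n
    induction n with
    | zero => rw [pow_zero, zero_smul, ← C_1]; exact Bd_C _ _
    | succ n ih => rw [pow_succ, add_smul, one_smul]; exact Bd_mul ih (hp a)
  have h2 : ∀ s : Finset ι, ∏ a ∈ s, p a ^ α a ∈ Bd k ((∑ a ∈ s, α a) • D) := by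
    intro s
    induction s using Finset.induction_on with
    | empty => rw [Finset.prod_empty, Finset.sum_empty, zero_smul, ← C_1]; exact Bd_C _ _
    | insert a s ha ih =>
      rw [Finset.prod_insert ha, Finset.sum_insert ha, add_smul]; exact Bd_mul (h1 _ _) ih
  refine Bd_mono ?_ (h2 Finset.univ)
  intro i
  simp only [Pi.smul_apply, smul_eq_mul]
  exact Nat.mul_le_mul_right _ h

theorem Bd_pderiv {D : Fin l → ℕ} {p : MvPolynomial ((i : Fin l) × Fin (k i)) ℝ}
    (hp : p ∈ Bd k D) (a) : pderiv a p ∈ Bd k D := by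
  rw [mem_Bd] at *
  intro m hm i
  rw [mem_support_iff, coeff_pderiv] at hm
  have := hp (m + Finsupp.single a 1) (by
    rw [mem_support_iff]; intro h; simp [h] at hm) i
  refine le_trans (Finset.sum_le_sum fun t _ => ?_) this
  simp
end

theorem separating {σ : Type} [Fintype σ] {N : ℕ} (x : Fin N → σ → ℝ) (hx : Function.Injective x)
    (j : Fin N) : ∃ e : MvPolynomial σ ℝ, eval (x j) e ≠ 0 ∧ ∀ i, i ≠ j → eval (x i) e = 0 := by
  classical
  have : ∀ i, ∃ q : MvPolynomial σ ℝ, eval (x j) q ≠ 0 ∧ (i ≠ j → eval (x i) q = 0) := by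
    intro i
    by_cases h : i = j
    · exact ⟨1, by simp, fun h' => absurd h h'⟩
    · obtain ⟨a, ha⟩ := Function.ne_iff.1 (fun h' => h (hx h'))
      refine ⟨X a - C (x i a), ?_, fun _ => by simp⟩
      simpa [sub_eq_zero] using Ne.symm ha
  choose q hq1 hq2 using this
  refine ⟨∏ i, q i, ?_, fun i hi => ?_⟩
  · rw [map_prod]; exact Finset.prod_ne_zero_iff.2 fun i _ => hq1 i
  · rw [map_prod]; exact Finset.prod_eq_zero (Finset.mem_univ i) (hq2 i hi)

theorem indep {σ : Type} [Fintype σ] {N : ℕ} (x : Fin N → σ → ℝ) (p : σ → MvPolynomial σ ℝ)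
    (hopen : ∀ j, ∀ U ∈ 𝓝 (x j), (fun (z : σ → ℝ) a => eval z (p a)) '' U ∈ 𝓝 (0 : σ → ℝ))
    (e : Fin N → MvPolynomial σ ℝ) (he1 : ∀ j, eval (x j) (e j) ≠ 0)
    (he2 : ∀ j i, i ≠ j → eval (x i) (e j) = 0) (t : ℕ) :
    LinearIndependent ℝ (fun q : Fin N × {α : σ → ℕ // ∑ a, α a ≤ t} =>
      e q.1 * ∏ a, p a ^ q.2.1 a) := by
  classical
  have := (card_tuples σ t).1
  have := Fintype.ofFinite {α : σ → ℕ // ∑ a, α a ≤ t}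
  rw [Fintype.linearIndependent_iff]
  intro c hc
  suffices H : ∀ m : ℕ, ∀ (j : Fin N) (α : {α : σ → ℕ // ∑ a, α a ≤ t}),
      ∑ a, α.1 a = m → c (j, α) = 0 from fun q => H _ q.1 q.2 rfl
  intro m
  induction m using Nat.strong_induction_on with
  | _ m ih =>
  intro j
  -- the scaled function
  let F : (σ → ℝ) → (σ → ℝ) × ℝ → ℝ := fun v zs =>
    ∑ q : Fin N × {α : σ → ℕ // ∑ a, α a ≤ t},
      c q * eval zs.1 (e q.1) * zs.2 ^ (∑ a, q.2.1 a - m) * ∏ a, v a ^ q.2.1 a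
  have hFc : ∀ v, Continuous (F v) := by
    intro v
    refine continuous_finset_sum _ fun q _ => ?_
    have : Continuous fun zs : (σ → ℝ) × ℝ => eval zs.1 (e q.1) :=
      (MvPolynomial.continuous_eval _).comp continuous_fst
    fun_prop
  have hF0 : ∀ v (z : σ → ℝ) (s : ℝ), s ≠ 0 → (∀ a, eval z (p a) = s * v a) → F v (z, s) = 0 := by
    intro v z s hs hz
    have h1 := congrArg (eval z) hc
    rw [map_sum, map_zero] at h1
    have h2 : s ^ m * F v (z, s) = 0 := by
      rw [← h1, Finset.mul_sum]
      refine Finset.sum_congr rfl fun q _ => ?_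
      rw [smul_eval, map_mul, map_prod]
      simp only [map_pow, hz, mul_pow, Finset.prod_mul_distrib, Finset.prod_pow_eq_pow_sum]
      by_cases hq : ∑ a, q.2.1 a < m
      · rw [ih _ hq q.1 q.2 rfl]; simp
      · obtain ⟨n, hn⟩ := Nat.exists_eq_add_of_le (not_lt.1 hq)
        rw [hn, Nat.add_sub_cancel_left, pow_add]
        ring
    exact (mul_eq_zero.1 h2).resolve_left (pow_ne_zero _ hs)
  have hF1 : ∀ v, F v (x j, 0) = 0 := by
    intro v
    by_contra hne
    have hev : ∀ᶠ zs in 𝓝 (x j, (0:ℝ)), F v zs ≠ 0 :=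
      (hFc v).continuousAt.eventually_ne hne
    rw [nhds_prod_eq, eventually_prod_iff] at hev
    obtain ⟨pa, hpa, pb, hpb, hab⟩ := hev
    have hU := hopen j _ hpa
    have hcont : Tendsto (fun s : ℝ => s • v) (𝓝 0) (𝓝 0) := by
      have : Continuous (fun s : ℝ => s • v) := by fun_prop
      simpa using this.tendsto 0
    have h3 := (hcont.eventually hU).and hpb
    have h4 : ∀ᶠ s in 𝓝[≠] (0:ℝ), s ≠ 0 := eventually_mem_nhdsWithin
    obtain ⟨s, ⟨⟨z, hz, hzs⟩, hs2⟩, hs0⟩ := ((h3.filter_mono nhdsWithin_le_nhds).and h4).exists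
    refine hab hz hs2 (hF0 v z s hs0 fun a => ?_)
    have := congrFun hzs a
    simpa using this
  let Q : MvPolynomial σ ℝ := ∑ α : {α : σ → ℕ // ∑ a, α a ≤ t},
    if ∑ a, α.1 a = m then
      monomial (Finsupp.equivFunOnFinite.symm α.1) (c (j, α) * eval (x j) (e j)) else 0
  have hQ : Q = 0 := by
    apply MvPolynomial.funext
    intro v
    rw [map_zero, ← hF1 v]
    simp only [Q, F, map_sum, Fintype.sum_prod_type]
    rw [Finset.sum_eq_single j]
    · refine Finset.sum_congr rfl fun α _ => ?_
      split_ifs with h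
      · rw [eval_monomial, h, Nat.sub_self, pow_zero, mul_one, Finsupp.prod_fintype _ _ (by simp)]
        rfl
      · rw [map_zero]
        rcases lt_or_gt_of_ne h with h | h
        · rw [ih _ h j α rfl]; simp
        · rw [zero_pow (by omega)]; simp
    · intro i _ hi
      refine Finset.sum_eq_zero fun α _ => ?_
      rw [he2 i j hi.symm]; simp
    · simp
  intro α hα
  have h5 : coeff (Finsupp.equivFunOnFinite.symm α.1) Q = c (j, α) * eval (x j) (e j) := by
    simp only [Q, coeff_sum]
    rw [Finset.sum_eq_single α]
    · rw [if_pos hα, coeff_monomial, if_pos rfl]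
    · intro β _ hβ
      split_ifs
      · rw [coeff_monomial, if_neg]
        intro h
        exact hβ (Subtype.ext (Finsupp.equivFunOnFinite.symm.injective h))
      · simp
    · simp
  rw [hQ, coeff_zero] at h5
  exact (mul_eq_zero.1 h5.symm).resolve_right (he1 j)

theorem bezout {l : ℕ} {k : Fin l → ℕ} (D : Fin l → ℕ) (hD : ∀ i, 1 ≤ D i) {N : ℕ}
    (x : Fin N → ((i : Fin l) × Fin (k i)) → ℝ) (hx : Function.Injective x)
    (p : ((i : Fin l) × Fin (k i)) → MvPolynomial ((i : Fin l) × Fin (k i)) ℝ)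
    (hp : ∀ a, p a ∈ Bd k D)
    (hopen : ∀ j, ∀ U ∈ 𝓝 (x j), (fun (z : ((i : Fin l) × Fin (k i)) → ℝ) a => eval z (p a)) '' U
      ∈ 𝓝 (0 : ((i : Fin l) × Fin (k i)) → ℝ)) :
    (N : ℝ) ≤ (Nat.factorial (∑ i, k i) : ℝ) * ∏ i, (D i : ℝ) ^ k i / (Nat.factorial (k i) : ℝ) := by
  classical
  choose e he1 he2 using separating x hx
  obtain ⟨s, hs⟩ : ∃ s, ∀ j, (e j).totalDegree ≤ s :=
    ⟨Finset.univ.sup fun j => (e j).totalDegree, fun j =>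
      Finset.le_sup (f := fun j => (e j).totalDegree) (Finset.mem_univ j)⟩
  set K := ∑ i, k i with hKdef
  have hcard : Fintype.card ((i : Fin l) × Fin (k i)) = K := by simp [hKdef]
  have main : ∀ t : ℕ, N * (t + K).choose K ≤ ∏ i, ((s + t) * D i + k i).choose (k i) := by
    intro t
    have hT := card_tuples ((i : Fin l) × Fin (k i)) t
    have := hT.1
    have := Fintype.ofFinite {α : ((i : Fin l) × Fin (k i)) → ℕ // ∑ a, α a ≤ t}
    have hli := indep x p hopen e he1 he2 t
    let v : Fin N × {α : ((i : Fin l) × Fin (k i)) → ℕ // ∑ a, α a ≤ t} → Bd k ((s + t) • D) :=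
      fun q => ⟨e q.1 * ∏ a, p a ^ q.2.1 a, by
        rw [add_smul]
        exact Bd_mul (Bd_total D hD _ s (hs q.1)) (Bd_prod_pow p hp _ t q.2.2)⟩
    have hv : LinearIndependent ℝ v := LinearIndependent.of_comp (Submodule.subtype _) hli
    obtain ⟨hfin, hfr⟩ := finrank_Bd k ((s + t) • D)
    have h1 := hv.fintype_card_le_finrank
    rw [Fintype.card_prod, Fintype.card_fin, ← Nat.card_eq_fintype_card, hT.2, hcard] at h1
    exact h1.trans hfr
  have main2 : ∀ t : ℕ, 1 ≤ t → (N : ℝ) ≤ (Nat.factorial K : ℝ) *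
      ∏ i, ((D i : ℝ) + (s * D i + k i) * (t : ℝ)⁻¹) ^ k i / (Nat.factorial (k i) : ℝ) := by
    intro t ht
    have ht' : (0 : ℝ) < t := by exact_mod_cast ht
    have h1 : (N : ℝ) * (t + K).choose K ≤ ∏ i, (((s + t) * D i + k i).choose (k i) : ℝ) := by
      exact_mod_cast main t
    have h2 : (t : ℝ) ^ K / (Nat.factorial K : ℝ) ≤ ((t + K).choose K : ℝ) := by
      refine le_trans ?_ (Nat.pow_le_choose K (t + K))
      gcongr
      omega
    have h3 : ∏ i, (((s + t) * D i + k i).choose (k i) : ℝ) ≤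
        ∏ i, ((((s + t) * D i + k i : ℕ) : ℝ) ^ k i / (Nat.factorial (k i) : ℝ)) :=
      Finset.prod_le_prod (fun _ _ => by positivity) fun i _ => Nat.choose_le_pow_div _ _
    have h4 : ∏ i, ((((s + t) * D i + k i : ℕ) : ℝ) ^ k i / (Nat.factorial (k i) : ℝ)) =
        (t : ℝ) ^ K *
      ∏ i, ((D i : ℝ) + (s * D i + k i) * (t : ℝ)⁻¹) ^ k i / (Nat.factorial (k i) : ℝ) := by
      rw [hKdef, ← Finset.prod_pow_eq_pow_sum, ← Finset.prod_mul_distrib]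
      refine Finset.prod_congr rfl fun i _ => ?_
      rw [← mul_div_assoc, ← mul_pow]
      congr 2
      push_cast
      field_simp
      ring
    have h5 : (N : ℝ) * ((t : ℝ) ^ K / (Nat.factorial K : ℝ)) ≤ (t : ℝ) ^ K *
      ∏ i, ((D i : ℝ) + (s * D i + k i) * (t : ℝ)⁻¹) ^ k i / (Nat.factorial (k i) : ℝ) := by
      rw [← h4]
      exact (mul_le_mul_of_nonneg_left h2 (by positivity)).trans (h1.trans h3)
    have hf : (0 : ℝ) < Nat.factorial K := by exact_mod_cast Nat.factorial_pos K
    have htK : (0 : ℝ) < (t : ℝ) ^ K := by positivity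
    rw [mul_div_assoc', div_le_iff₀ hf] at h5
    refine le_of_mul_le_mul_right (h5.trans (le_of_eq ?_)) htK
    ring
  have hinv : Tendsto (fun t : ℕ => (t : ℝ)⁻¹) atTop (𝓝 0) := tendsto_inv_atTop_nhds_zero_nat
  have hlim : Tendsto (fun t : ℕ => (Nat.factorial K : ℝ) *
      ∏ i, ((D i : ℝ) + (s * D i + k i) * (t : ℝ)⁻¹) ^ k i / (Nat.factorial (k i) : ℝ)) atTop
      (𝓝 ((Nat.factorial K : ℝ) *
        ∏ i, ((D i : ℝ) + (s * D i + k i) * 0) ^ k i / (Nat.factorial (k i) : ℝ))) := by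
    refine Tendsto.const_mul _ (tendsto_finset_prod _ fun i _ => ?_)
    exact ((tendsto_const_nhds.add (hinv.const_mul _)).pow _).div_const _
  have := ge_of_tendsto hlim (eventually_atTop.2 ⟨1, fun t ht => main2 t ht⟩)
  simpa using this

theorem clopen_count {X : Type} [TopologicalSpace X] (B : ℝ)
    (H : ∀ (N : ℕ) (f : X → Fin N), Continuous f → Function.Surjective f → (N : ℝ) ≤ B) :
    Finite (ConnectedComponents X) ∧ (Nat.card (ConnectedComponents X) : ℝ) ≤ B := by
  classical
  by_cases hX : IsEmpty X
  · have h1 := H 0 (fun x => (hX.false x).elim) (continuous_of_const fun x => (hX.false x).elim)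
      (fun i => i.elim0)
    have : IsEmpty (ConnectedComponents X) :=
      ⟨fun c => by obtain ⟨x, _⟩ := ConnectedComponents.surjective_coe c; exact hX.false x⟩
    refine ⟨inferInstance, ?_⟩
    simpa using h1
  rw [not_isEmpty_iff] at hX
  let S : ℕ → Prop := fun N => ∃ f : X → Fin N, Continuous f ∧ Function.Surjective f
  have hS1 : S 1 := ⟨fun _ => 0, continuous_const, fun i => ⟨hX.some, Subsingleton.elim _ _⟩⟩
  have hSB : ∀ N, S N → N ≤ ⌊B⌋₊ := by
    rintro N ⟨f, hf, hs⟩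
    exact Nat.le_floor (H N f hf hs)
  obtain ⟨N, ⟨f, hf, hfs⟩, hmax⟩ : ∃ N, S N ∧ ¬ S (N + 1) := by
    by_contra hcon
    push Not at hcon
    have : ∀ n, S (n + 1) := by
      intro n
      induction n with
      | zero => exact hS1
      | succ n ih => exact hcon _ ih
    have := hSB _ (this ⌊B⌋₊)
    omega
  have hpre : ∀ i, IsPreconnected (f ⁻¹' {i}) := by
    intro i
    by_contra hnot
    apply hmax
    unfold IsPreconnected at hnot
    push Not at hnot
    obtain ⟨U, V, hU, hV, hUV, ⟨u, hu⟩, ⟨v, hv⟩, hemp⟩ := hnot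
    have hSo : IsOpen (f ⁻¹' {i}) := (isOpen_discrete _).preimage hf
    have hSc : IsClosed (f ⁻¹' {i}) := (isClosed_discrete _).preimage hf
    have hvU : v ∉ U := by
      intro h
      have : v ∈ f ⁻¹' {i} ∩ (U ∩ V) := ⟨hv.1, h, hv.2⟩
      rw [hemp] at this
      exact this
    have hA : IsClopen (f ⁻¹' {i} ∩ U) := by
      refine ⟨?_, hSo.inter hU⟩
      have : f ⁻¹' {i} ∩ U = f ⁻¹' {i} ∩ Vᶜ := by
        ext z
        constructor
        · rintro ⟨h1, h2⟩
          refine ⟨h1, fun h3 => ?_⟩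
          have : z ∈ f ⁻¹' {i} ∩ (U ∩ V) := ⟨h1, h2, h3⟩
          rw [hemp] at this
          exact this
        · rintro ⟨h1, h2⟩
          exact ⟨h1, (hUV h1).resolve_right h2⟩
      rw [this]
      exact hSc.inter hV.isClosed_compl
    refine ⟨fun z => if z ∈ f ⁻¹' {i} ∩ U then Fin.last N else (f z).castSucc, ?_, ?_⟩
    · refine continuous_if ?_ continuous_const.continuousOn
        ((continuous_of_discreteTopology.comp hf).continuousOn)
      intro a ha
      have := hA.frontier_eq
      change a ∈ frontier (f ⁻¹' {i} ∩ U) at ha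
      rw [this] at ha
      exact ha.elim
    · intro c
      refine Fin.lastCases ?_ (fun c => ?_) c
      · exact ⟨u, if_pos hu⟩
      · by_cases hc : c = i
        · refine ⟨v, ?_⟩
          dsimp only
          rw [if_neg (fun h => hvU h.2), show f v = i from hv.1, hc]
        · obtain ⟨z, hz⟩ := hfs c
          refine ⟨z, ?_⟩
          dsimp only
          rw [if_neg (fun h => hc (hz.symm.trans h.1)), hz]
  let g : ConnectedComponents X → Fin N := hf.connectedComponentsLift
  have hg : Function.Injective g := by
    intro a b hab
    obtain ⟨x, rfl⟩ := ConnectedComponents.surjective_coe a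
    obtain ⟨y, rfl⟩ := ConnectedComponents.surjective_coe b
    simp only [g, Continuous.connectedComponentsLift_apply_coe] at hab
    rw [ConnectedComponents.coe_eq_coe']
    exact (hpre (f y)).subset_connectedComponent (x := y) rfl hab
  refine ⟨Finite.of_injective g hg, le_trans ?_ (H N f hf hfs)⟩
  have := Nat.card_le_card_of_injective g hg
  rw [Nat.card_fin] at this
  exact_mod_cast this

/-- the gradient functional of a polynomial -/
noncomputable def grad {σ : Type} [Fintype σ] (p : MvPolynomial σ ℝ) (x : σ → ℝ) :
    (σ → ℝ) →L[ℝ] ℝ :=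
  ∑ a, eval x (pderiv a p) • ContinuousLinearMap.proj (R := ℝ) (φ := fun _ : σ => ℝ) a

theorem grad_apply {σ : Type} [Fintype σ] (p : MvPolynomial σ ℝ) (x v : σ → ℝ) :
    grad p x v = ∑ a, eval x (pderiv a p) * v a := by
  simp [grad]

theorem hasStrict {σ : Type} [Fintype σ] (p : MvPolynomial σ ℝ) (x : σ → ℝ) :
    HasStrictFDerivAt (fun z : σ → ℝ => eval z p) (grad p x) x := by
  classical
  induction p using MvPolynomial.induction_on with
  | C c =>
    have h : grad (C c) x = 0 := by ext; simp [grad_apply]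
    rw [h]
    simpa using hasStrictFDerivAt_const c x
  | add p q hp hq =>
    have h : grad (p + q) x = grad p x + grad q x := by
      ext v; simp [grad_apply, add_mul, Finset.sum_add_distrib]
    rw [h]
    have e : (fun z : σ → ℝ => eval z (p + q)) = (fun z => eval z p) + fun z => eval z q := by
      funext z; simp
    rw [e]
    exact hp.add hq
  | mul_X p a hp =>
    have h2 := hp.mul (ContinuousLinearMap.hasStrictFDerivAt
      (ContinuousLinearMap.proj (R := ℝ) (φ := fun _ : σ => ℝ) a) (x := x))
    have h : grad (p * X a) x = eval x p • (ContinuousLinearMap.proj (R := ℝ) (φ := fun _ : σ => ℝ) a)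
        + x a • grad p x := by
      refine ContinuousLinearMap.ext fun v => ?_
      simp only [grad_apply, pderiv_mul, pderiv_X, ContinuousLinearMap.add_apply,
        ContinuousLinearMap.smul_apply, ContinuousLinearMap.proj_apply, smul_eq_mul, map_add,
        map_mul, eval_X, add_mul, Finset.sum_add_distrib, Finset.mul_sum]
      rw [add_comm]
      congr 1
      · rw [Finset.sum_eq_single a]
        · simp
        · intro b _ hb
          simp [Pi.single_apply, hb.symm]
        · simp
      · exact Finset.sum_congr rfl fun b _ => by ring
    rw [h]
    have e : (fun z : σ → ℝ => eval z (p * X a)) = (fun z => eval z p) *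
        ⇑(ContinuousLinearMap.proj (R := ℝ) (φ := fun _ : σ => ℝ) a) := by
      funext z; simp
    rw [e]
    exact h2

theorem interior_min {σ : Type} [Fintype σ] {h : (σ → ℝ) → ℝ} (hc : Continuous h)
    {L : Set (σ → ℝ)} (hL : IsCompact L) {p : σ → ℝ} (hp : p ∈ interior L)
    (hF : ∀ z ∈ L \ interior L, h p < h z) : ∃ z ∈ interior L, IsLocalMin h z := by
  obtain ⟨z, hz, hmin⟩ := hL.exists_isMinOn ⟨p, interior_subset hp⟩ hc.continuousOn
  have hzi : z ∈ interior L := by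
    by_contra hz'
    exact absurd (hF z ⟨hz, hz'⟩) (not_lt.2 (hmin (interior_subset hp)))
  exact ⟨z, hzi, hmin.isLocalMin (mem_interior_iff_mem_nhds.1 hzi)⟩

theorem sard {σ : Type} [Fintype σ] (p : σ → MvPolynomial σ ℝ) (O : Set (σ → ℝ)) (hO : O ∈ 𝓝 0) :
    ∃ b ∈ O, ∀ z : σ → ℝ, (∀ a, eval z (p a) + b a = 0) →
      ∀ U ∈ 𝓝 z, (fun (w : σ → ℝ) a => eval w (p a + C (b a))) '' U ∈ 𝓝 (0 : σ → ℝ) := by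
  classical
  let P : (σ → ℝ) → (σ → ℝ) := fun z a => eval z (p a)
  let P' : (σ → ℝ) → ((σ → ℝ) →L[ℝ] (σ → ℝ)) := fun z =>
    ContinuousLinearMap.pi fun a => grad (p a) z
  have hP : ∀ z, HasStrictFDerivAt P (P' z) z := fun z =>
    hasStrictFDerivAt_pi.2 fun a => hasStrict (p a) z
  let S : Set (σ → ℝ) := {z | (P' z).det = 0}
  have h0 : MeasureTheory.volume (P '' S) = 0 :=
    MeasureTheory.addHaar_image_eq_zero_of_det_fderivWithin_eq_zero MeasureTheory.volume
      (fun z _ => (hP z).hasFDerivAt.hasFDerivWithinAt) (fun z hz => hz)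
  have hO' : -O ∈ 𝓝 (0 : σ → ℝ) := by
    have : Tendsto (fun z : σ → ℝ => -z) (𝓝 0) (𝓝 0) := by
      simpa using (continuous_neg (G := σ → ℝ)).tendsto 0
    exact this hO
  have hne : ¬ (-O ⊆ P '' S) := by
    intro hsub
    have h1 := MeasureTheory.Measure.measure_pos_of_mem_nhds
      (MeasureTheory.volume : MeasureTheory.Measure (σ → ℝ)) hO'
    have h2 := MeasureTheory.measure_mono_null hsub h0
    exact absurd h2 h1.ne'
  obtain ⟨y, hyO, hy⟩ := Set.not_subset.1 hne
  refine ⟨-y, hyO, fun z hz U hU => ?_⟩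
  have hPz : P z = y := by
    funext a; have := hz a; simp only [Pi.neg_apply] at this; simp only [P]; linarith
  have hdet : (P' z).det ≠ 0 := fun h => hy ⟨z, h, hPz⟩
  have hsurj : (P' z).range = ⊤ := by
    have hu : IsUnit (P' z : (σ → ℝ) →ₗ[ℝ] (σ → ℝ)) := by
      rw [LinearMap.isUnit_iff_isUnit_det]
      exact isUnit_iff_ne_zero.2 hdet
    exact LinearMap.isUnit_iff_range_eq_top _ |>.1 hu
  have hmap := (hP z).map_nhds_eq_of_surj hsurj
  have h3 : P '' U ∈ 𝓝 y := by
    rw [← hPz, ← hmap]; exact image_mem_map hU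
  have h4 : Tendsto (fun w : σ → ℝ => w + y) (𝓝 0) (𝓝 y) := by
    have : Continuous (fun w : σ → ℝ => w + y) := by fun_prop
    simpa using this.tendsto 0
  refine mem_of_superset (h4 h3) ?_
  rintro w ⟨u, hu, huw⟩
  refine ⟨u, hu, ?_⟩
  funext a
  have := congrFun huw a
  simp only [P, Pi.add_apply] at this
  simp [this]

theorem many_critical {σ : Type} [Fintype σ] (g : MvPolynomial σ ℝ) (hg : ∀ z, 0 ≤ eval z g)
    {N : ℕ} (Z : Fin N → Set (σ → ℝ)) (hZc : ∀ j, IsClosed (Z j)) (hZne : ∀ j, (Z j).Nonempty)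
    (hZd : ∀ i j, i ≠ j → Disjoint (Z i) (Z j)) (hZ : ∀ z, eval z g = 0 ↔ ∃ j, z ∈ Z j) :
    ∃ (ε : ℝ) (b : σ → ℝ) (x : Fin N → σ → ℝ), Function.Injective x ∧
      ∀ j, ∀ U ∈ 𝓝 (x j), (fun (w : σ → ℝ) a =>
        eval w (pderiv a (g + C ε * ∑ c, X c ^ 2) + C (b a))) '' U ∈ 𝓝 (0 : σ → ℝ) := by
  classical
  let q : (σ → ℝ) → ℝ := fun z => ∑ c, z c ^ 2
  have hq : Continuous q := by fun_prop
  have hgc : Continuous fun z : σ → ℝ => eval z g := MvPolynomial.continuous_eval g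
  have hcpt : ∀ ρ, IsCompact {z | q z ≤ ρ} := by
    intro ρ
    refine IsCompact.of_isClosed_subset (isCompact_closedBall (0 : σ → ℝ) (1 + ρ))
      (isClosed_le hq continuous_const) ?_
    intro z hz
    have hz' : q z ≤ ρ := hz
    have hρ : 0 ≤ q z := Finset.sum_nonneg fun c _ => sq_nonneg _
    rw [mem_closedBall_zero_iff, pi_norm_le_iff_of_nonneg (by linarith)]
    intro c
    have h1 : z c ^ 2 ≤ q z :=
      Finset.single_le_sum (f := fun c => z c ^ 2) (fun c _ => sq_nonneg _) (Finset.mem_univ c)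
    rw [Real.norm_eq_abs, abs_le]
    constructor <;> nlinarith [sq_nonneg (z c + 1), sq_nonneg (z c - 1)]
  have hmin : ∀ j, ∃ p ∈ Z j, ∀ z ∈ Z j, q p ≤ q z := by
    intro j
    obtain ⟨z0, hz0⟩ := hZne j
    obtain ⟨p, hp, hpm⟩ := ((hcpt (q z0)).inter_left (hZc j)).exists_isMinOn
      ⟨z0, hz0, le_refl (q z0)⟩ hq.continuousOn
    refine ⟨p, hp.1, fun z hz => ?_⟩
    by_cases h : q z ≤ q z0
    · exact hpm ⟨hz, h⟩
    · exact hp.2.trans (not_le.1 h).le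
  choose p hpZ hpm using hmin
  let O : Fin N → Set (σ → ℝ) := fun j =>
    {x | ∀ i, i ≠ j → Metric.infDist x (Z j) < Metric.infDist x (Z i)}
  have hOo : ∀ j, IsOpen (O j) := by
    intro j
    simp only [O, Set.setOf_forall]
    refine isOpen_iInter_of_finite fun i => isOpen_iInter_of_finite fun _ => ?_
    exact isOpen_lt (Metric.continuous_infDist_pt _) (Metric.continuous_infDist_pt _)
  have hZO : ∀ j, Z j ⊆ O j := by
    intro j z hz i hi
    rw [Metric.infDist_zero_of_mem hz]
    exact ((hZc i).notMem_iff_infDist_pos (hZne i)).1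
      (fun h => Set.disjoint_left.1 (hZd i j hi) h hz)
  have hOd : ∀ i j z, z ∈ O i → z ∈ O j → i = j := by
    intro i j z hi hj
    by_contra h
    exact lt_asymm (hi j (Ne.symm h)) (hj i h)
  have hL : ∀ j, ∃ L, IsCompact L ∧ (Z j ∩ {z | q z ≤ q (p j)}) ⊆ interior L ∧ L ⊆ O j := fun j =>
    exists_compact_between ((hcpt _).inter_left (hZc j)) (hOo j)
      (Set.inter_subset_left.trans (hZO j))
  choose L hLc hLi hLO using hL
  have hpL : ∀ j, p j ∈ interior (L j) := fun j => hLi j ⟨hpZ j, le_refl (q (p j))⟩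
  have hFc : ∀ j, IsCompact (L j \ interior (L j)) := fun j => (hLc j).diff isOpen_interior
  -- choose ε
  have hε : ∀ᶠ ε in 𝓝 (0 : ℝ), ∀ j, ∀ z ∈ (L j \ interior (L j)) ∩ {z | q z ≤ q (p j)},
      0 < eval z g + ε * (q z - q (p j)) := by
    rw [eventually_all]
    intro j
    refine ((hFc j).inter_right (isClosed_le hq continuous_const)).eventually_forall_of_forall_eventually
      fun z hz => ?_
    have hcont : Continuous fun w : ℝ × (σ → ℝ) => eval w.2 g + w.1 * (q w.2 - q (p j)) := by
      have := hgc.comp (continuous_snd (X := ℝ) (Y := σ → ℝ))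
      have h2 := hq.comp (continuous_snd (X := ℝ) (Y := σ → ℝ))
      exact this.add (continuous_fst.mul (h2.sub continuous_const))
    refine (hcont.tendsto (0, z)).eventually_const_lt ?_
    simp only [zero_mul, add_zero]
    refine lt_of_le_of_ne (hg z) fun h0 => ?_
    obtain ⟨i, hi⟩ := (hZ z).1 h0.symm
    have hij := hOd i j z (hZO i hi) (hLO j hz.1.1)
    subst hij
    exact hz.1.2 (hLi i ⟨hi, hz.2⟩)
  obtain ⟨ε, hε, hεpos⟩ := ((hε.filter_mono nhdsWithin_le_nhds).and
    (eventually_mem_nhdsWithin (a := (0:ℝ)) (s := Set.Ioi 0))).exists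
  have hεpos : 0 < ε := hεpos
  let G : MvPolynomial σ ℝ := g + C ε * ∑ c, X c ^ 2
  have hG : ∀ z, eval z G = eval z g + ε * q z := by intro z; simp [G, q]
  have hGc : Continuous fun z : σ → ℝ => eval z G := MvPolynomial.continuous_eval G
  have hG1 : ∀ j, ∀ z ∈ L j \ interior (L j), eval (p j) G < eval z G := by
    intro j z hz
    rw [hG, hG, (hZ (p j)).2 ⟨j, hpZ j⟩]
    by_cases h : q z ≤ q (p j)
    · have := hε j z ⟨hz, h⟩
      linarith
    · have := mul_lt_mul_of_pos_left (not_le.1 h) hεpos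
      have := hg z
      linarith
  -- choose b
  have hb : ∀ᶠ b in 𝓝 (0 : σ → ℝ), ∀ j, ∀ z ∈ L j \ interior (L j),
      eval (p j) G + ∑ a, b a * p j a < eval z G + ∑ a, b a * z a := by
    rw [eventually_all]
    intro j
    refine (hFc j).eventually_forall_of_forall_eventually fun z hz => ?_
    have h1 : Continuous fun w : (σ → ℝ) × (σ → ℝ) => eval (p j) G + ∑ a, w.1 a * p j a := by
      fun_prop
    have h2 : Continuous fun w : (σ → ℝ) × (σ → ℝ) => eval w.2 G + ∑ a, w.1 a * w.2 a := by
      have := hGc.comp (continuous_snd (X := σ → ℝ) (Y := σ → ℝ))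
      refine this.add ?_
      fun_prop
    refine (h1.tendsto (0, z)).eventually_lt (h2.tendsto (0, z)) ?_
    simpa using hG1 j z hz
  obtain ⟨b, hbO, hbS⟩ := sard (fun a => pderiv a G) _ hb
  have hx : ∀ j, ∃ z ∈ interior (L j), IsLocalMin (fun z => eval z G + ∑ a, b a * z a) z := fun j =>
    interior_min (by fun_prop) (hLc j) (hpL j) (hbO j)
  choose x hxL hxm using hx
  refine ⟨ε, b, x, ?_, fun j => hbS (x j) ?_⟩
  · intro i j hij
    refine hOd i j (x i) (hLO i (interior_subset (hxL i))) ?_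
    rw [hij]
    exact hLO j (interior_subset (hxL j))
  · intro a
    let H : MvPolynomial σ ℝ := G + ∑ a, C (b a) * X a
    have hH : (fun z => eval z G + ∑ a, b a * z a) = fun z => eval z H := by
      funext z; simp [H]
    have h1 := hxm j
    rw [hH] at h1
    have h2 := h1.hasFDerivAt_eq_zero (hasStrict H (x j)).hasFDerivAt
    have h3 := congrArg (fun T => T (Pi.single a 1)) h2
    simp only [grad_apply, ContinuousLinearMap.zero_apply] at h3
    rw [Finset.sum_eq_single a (by intro c _ hc; simp [hc]) (by simp)] at h3
    simp only [Pi.single_eq_same, mul_one, H, map_add, map_sum, pderiv_C_mul, pderiv_X] at h3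
    rw [Finset.sum_eq_single a (by intro c _ hc; simp [Pi.single_apply, hc]) (by simp)] at h3
    simpa using h3

end Rojas

/-- With the `k = Σ kᵢ` variables partitioned into `l` blocks of sizes `kᵢ`
(indexed by the sigma type `(i : Fin l) × Fin (k i)`), if every monomial of every `θ_j`
has total degree at most `dᵢ` in the variables of block `i`, and `y` is a regular value
of `f = (θ₁,…,θ_r)`, then `f⁻¹(y)` has at most `2^k · k! · ∏ᵢ dᵢ^{kᵢ}/kᵢ!` connected
components. -/
theorem blockwise_rojas_bound
    (l : ℕ) (hl : 1 ≤ l) (k : Fin l → ℕ) (hk : ∀ i, 1 ≤ k i)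
    (d : Fin l → ℕ) (hd : ∀ i, 1 ≤ d i)
    (K : ℕ) (hK : K = ∑ i, k i) (r : ℕ)
    (θ : Fin r → MvPolynomial ((i : Fin l) × Fin (k i)) ℝ)
    (hdeg : ∀ j, ∀ m ∈ (θ j).support, ∀ i : Fin l,
      ∑ t : Fin (k i), m ⟨i, t⟩ ≤ d i)
    (f : (((i : Fin l) × Fin (k i)) → ℝ) → (Fin r → ℝ))
    (hf : ∀ w j, f w j = MvPolynomial.eval w (θ j))
    (y : Fin r → ℝ)
    (hreg : ∀ x ∈ f ⁻¹' {y}, Function.Surjective (fderiv ℝ f x)) :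
    Finite (ConnectedComponents ↥(f ⁻¹' {y})) ∧
      (Nat.card (ConnectedComponents ↥(f ⁻¹' {y})) : ℝ) ≤
        2 ^ K * (Nat.factorial K : ℝ) *
          ∏ i, (d i : ℝ) ^ (k i) / (Nat.factorial (k i) : ℝ) := by
  classical
  subst hK
  let g : MvPolynomial ((i : Fin l) × Fin (k i)) ℝ :=
    ∑ j, (θ j - MvPolynomial.C (y j)) * (θ j - MvPolynomial.C (y j))
  have hge : ∀ z, MvPolynomial.eval z g =
      ∑ j, (MvPolynomial.eval z (θ j) - y j) * (MvPolynomial.eval z (θ j) - y j) := by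
    intro z; simp [g]
  have hg0 : ∀ z, 0 ≤ MvPolynomial.eval z g := by
    intro z; rw [hge]; exact Finset.sum_nonneg fun j _ => mul_self_nonneg _
  have hgZ : ∀ z, MvPolynomial.eval z g = 0 ↔ z ∈ f ⁻¹' {y} := by
    intro z
    rw [hge, Finset.sum_eq_zero_iff_of_nonneg (fun j _ => mul_self_nonneg _)]
    simp only [Finset.mem_univ, forall_const, mul_self_eq_zero, sub_eq_zero, Set.mem_preimage,
      Set.mem_singleton_iff, funext_iff, hf]
  have hgB : g ∈ Rojas.Bd k (d + d) := by
    refine Submodule.sum_mem _ fun j _ => ?_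
    have h1 : θ j - MvPolynomial.C (y j) ∈ Rojas.Bd k d :=
      Submodule.sub_mem _ (Rojas.mem_Bd.2 (hdeg j)) (Rojas.Bd_C _ _)
    exact Rojas.Bd_mul h1 h1
  have hclosed : IsClosed (f ⁻¹' {y}) := by
    have : f ⁻¹' {y} = {z | MvPolynomial.eval z g = 0} := by
      ext z; exact (hgZ z).symm
    rw [this]
    exact isClosed_eq (MvPolynomial.continuous_eval g) continuous_const
  apply Rojas.clopen_count
  intro N φ hφ hφs
  obtain ⟨ε, b, x, hx, hopen⟩ := Rojas.many_critical g hg0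
    (fun j : Fin N => Subtype.val '' (φ ⁻¹' {j}))
    (fun j => hclosed.isClosedEmbedding_subtypeVal.isClosedMap _
      ((isClosed_discrete _).preimage hφ))
    (fun j => by obtain ⟨z, hz⟩ := hφs j; exact ⟨z, z, hz, rfl⟩)
    (fun i j hij => by
      rw [Set.disjoint_left]
      rintro _ ⟨z, hz, rfl⟩ ⟨w, hw, hwz⟩
      have : w = z := Subtype.ext hwz
      subst this
      exact hij (Eq.trans (Eq.symm hz) hw))
    (fun z => by
      rw [hgZ]
      constructor
      · intro h; exact ⟨φ ⟨z, h⟩, ⟨z, h⟩, rfl, rfl⟩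
      · rintro ⟨j, w, _, rfl⟩; exact w.2)
  have hXB : ∀ c, (MvPolynomial.X c : MvPolynomial ((i : Fin l) × Fin (k i)) ℝ) ^ 2 ∈
      Rojas.Bd k (d + d) := by
    intro c
    have h1 : (MvPolynomial.X c : MvPolynomial ((i : Fin l) × Fin (k i)) ℝ) ∈ Rojas.Bd k d := by
      have := Rojas.Bd_total (k := k) d hd (MvPolynomial.X c) 1 (by simp)
      rwa [one_smul] at this
    rw [pow_two]
    exact Rojas.Bd_mul h1 h1
  have hfin := Rojas.bezout (d + d) (fun i => by have := hd i; simp; omega) x hx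
    (fun a => MvPolynomial.pderiv a (g + MvPolynomial.C ε * ∑ c, MvPolynomial.X c ^ 2)
      + MvPolynomial.C (b a))
    (fun a => by
      refine Submodule.add_mem _ (Rojas.Bd_pderiv (Submodule.add_mem _ hgB ?_) a) (Rojas.Bd_C _ _)
      rw [← MvPolynomial.smul_eq_C_mul]
      exact Submodule.smul_mem _ _ (Submodule.sum_mem _ fun c _ => hXB c))
    hopen
  refine hfin.trans (le_of_eq ?_)
  rw [mul_comm ((2 : ℝ) ^ (∑ i, k i)), mul_assoc, ← Finset.prod_pow_eq_pow_sum,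
    ← Finset.prod_mul_distrib]
  congr 1
  refine Finset.prod_congr rfl fun i _ => ?_
  rw [← mul_div_assoc, ← mul_pow]
  congr 2
  simp only [Pi.add_apply]
  push_cast
  ring
end

section
/- Let l ≥ 1, let k_1, …, k_l be positive integers with k = Σ k_i, and let d_1, …, d_l be positive integers with d = Σ d_i. Partition the variables w_1, …, w_k into l consecutive blocks, block i of size k_i, and let θ_1, …, θ_r be real polynomials in w_1, …, w_k such that every monomial of every θ_j has total degree at most d_i in the variables of block i. Define v = (k_1/k, …, k_l/k), u = (d_1/d, …, d_l/d), and H(v|u) = Σ_{i=1}^l (k_i/k)·lg(d·k_i/(k·d_i)). If y ∈ ℝ^r is a regular value of f = (θ_1, …, θ_r) : ℝ^k → ℝ^r, then f⁻¹(y) has at most (2d)^k · 2^{−k·H(v|u)} connected components. -/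
/-- lattice points of a simplex -/
noncomputable def simplexEquiv (ι : Type) [Fintype ι] [DecidableEq ι] (n : ℕ) :
    {x : ι → ℕ // ∑ i, x i ≤ n} ≃ {P : Option ι → ℕ // ∑ i, P i = n} where
  toFun x := ⟨fun o => o.elim (n - ∑ i, x.1 i) x.1, by
    have := x.2
    simp only [Fintype.sum_option, Option.elim]
    omega⟩
  invFun P := ⟨fun i => P.1 (some i), by
    have := P.2
    simp only [Fintype.sum_option] at this
    change ∑ i, P.1 (some i) ≤ n
    omega⟩
  left_inv x := by ext i; rfl
  right_inv P := by
    have := P.2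
    simp only [Fintype.sum_option] at this
    ext o
    cases o with
    | none => simp only [Option.elim]; omega
    | some i => rfl

theorem card_simplex (ι : Type) [Fintype ι] [DecidableEq ι] (n : ℕ) :
    Nat.card {x : ι → ℕ // ∑ i, x i ≤ n} = (Fintype.card ι + n).choose n := by
  rw [Nat.card_congr ((simplexEquiv ι n).trans (Sym.equivNatSumOfFintype (Option ι) n).symm),
    Nat.card_eq_fintype_card, Sym.card_sym_eq_choose]
  simp [Fintype.card_option]

instance finite_simplex (ι : Type) [Fintype ι] [DecidableEq ι] (n : ℕ) :
    Finite {x : ι → ℕ // ∑ i, x i ≤ n} :=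
  Finite.of_equiv _ ((simplexEquiv ι n).trans (Sym.equivNatSumOfFintype (Option ι) n).symm).symm

theorem simplex_lower (ι : Type) [Fintype ι] [DecidableEq ι] (n : ℕ) :
    n ^ (Fintype.card ι) ≤ (Fintype.card ι).factorial *
      Nat.card {x : ι → ℕ // ∑ i, x i ≤ n} := by
  rw [card_simplex, ← Nat.choose_symm_add, ← Nat.descFactorial_eq_factorial_mul_choose]
  calc n ^ (Fintype.card ι) ≤ (Fintype.card ι + n + 1 - Fintype.card ι) ^ (Fintype.card ι) :=
        Nat.pow_le_pow_left (by omega) _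
    _ ≤ _ := Nat.pow_sub_le_descFactorial _ _

theorem simplex_upper (ι : Type) [Fintype ι] [DecidableEq ι] (n : ℕ) :
    (Fintype.card ι).factorial *
      Nat.card {x : ι → ℕ // ∑ i, x i ≤ n} ≤ (Fintype.card ι + n) ^ (Fintype.card ι) := by
  rw [card_simplex, ← Nat.choose_symm_add, ← Nat.descFactorial_eq_factorial_mul_choose]
  exact Nat.descFactorial_le_pow _ _

section blocks

variable {l : ℕ} {k : Fin l → ℕ}

/-- Exponents with block degrees at most `e`. -/
def blockSet (k : Fin l → ℕ) (e : Fin l → ℕ) : Set (((i : Fin l) × Fin (k i)) →₀ ℕ) :=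
  {m | ∀ i, ∑ t : Fin (k i), m ⟨i, t⟩ ≤ e i}

/-- Polynomials with block degrees at most `e`. -/
noncomputable abbrev BD (k : Fin l → ℕ) (e : Fin l → ℕ) :
    Submodule ℝ (MvPolynomial ((i : Fin l) × Fin (k i)) ℝ) :=
  MvPolynomial.restrictSupport ℝ (blockSet k e)

noncomputable def blockEquiv (k : Fin l → ℕ) (e : Fin l → ℕ) :
    blockSet k e ≃ ((i : Fin l) → {x : Fin (k i) → ℕ // ∑ t, x t ≤ e i}) where
  toFun m := fun i => ⟨fun t => m.1 ⟨i, t⟩, m.2 i⟩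
  invFun x := ⟨Finsupp.equivFunOnFinite.symm (fun s => (x s.1).1 s.2), fun i => by
    simpa using (x i).2⟩
  left_inv m := by ext s; simp
  right_inv x := by ext i t; simp

instance (e : Fin l → ℕ) : Finite (blockSet k e) := Finite.of_equiv _ (blockEquiv k e).symm

theorem card_blockSet (e : Fin l → ℕ) :
    Nat.card (blockSet k e) = ∏ i, Nat.card {x : Fin (k i) → ℕ // ∑ t, x t ≤ e i} := by
  rw [Nat.card_congr (blockEquiv k e), Nat.card_pi]

theorem BD_mul {e e' : Fin l → ℕ} {p q : MvPolynomial ((i : Fin l) × Fin (k i)) ℝ}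
    (hp : p ∈ BD k e) (hq : q ∈ BD k e') : p * q ∈ BD k (e + e') := by
  have h := Submodule.mul_mem_mul hp hq
  rw [← MvPolynomial.restrictSupport_add] at h
  refine MvPolynomial.restrictSupport_mono ℝ ?_ h
  rintro _ ⟨a, ha, b, hb, rfl⟩ i
  simp only [Finsupp.add_apply, Finset.sum_add_distrib, Pi.add_apply]
  exact add_le_add (ha i) (hb i)

theorem BD_mono {e e' : Fin l → ℕ} (h : e ≤ e') : BD k e ≤ BD k e' :=
  MvPolynomial.restrictSupport_mono ℝ fun _ hm i => (hm i).trans (h i)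

theorem BD_C (e : Fin l → ℕ) (a : ℝ) : MvPolynomial.C a ∈ BD k e := by
  rw [MvPolynomial.C_apply, BD, MvPolynomial.monomial_mem_restrictSupport]
  left; intro i; simp

theorem BD_pow {e : Fin l → ℕ} {p : MvPolynomial ((i : Fin l) × Fin (k i)) ℝ}
    (hp : p ∈ BD k e) (n : ℕ) : p ^ n ∈ BD k (n • e) := by
  induction n with
  | zero => simpa using BD_C (k := k) 0 1
  | succ n ih => rw [pow_succ, succ_nsmul]; exact BD_mul ih hp

theorem BD_prod {ι : Type} (s : Finset ι) {e : ι → Fin l → ℕ}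
    {p : ι → MvPolynomial ((i : Fin l) × Fin (k i)) ℝ}
    (hp : ∀ i ∈ s, p i ∈ BD k (e i)) : ∏ i ∈ s, p i ∈ BD k (∑ i ∈ s, e i) := by
  classical
  induction s using Finset.induction_on with
  | empty => simpa using BD_C (k := k) 0 1
  | insert a s ha ih =>
    rw [Finset.prod_insert ha, Finset.sum_insert ha]
    exact BD_mul (hp a (by simp)) (ih fun i hi => hp i (by simp [hi]))

theorem BD_X (s : (i : Fin l) × Fin (k i)) (e : Fin l → ℕ) (he : ∀ i, 1 ≤ e i) :
    MvPolynomial.X s ∈ BD k e := by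
  rw [MvPolynomial.X, BD, MvPolynomial.monomial_mem_restrictSupport]
  left; intro i
  refine le_trans ?_ (he i)
  obtain ⟨j, u⟩ := s
  by_cases h : i = j
  · subst h
    rw [Finset.sum_eq_single u]
    · simp
    · intro b _ hb
      rw [Finsupp.single_apply, if_neg]
      intro h; simp at h; exact hb h.symm
    · simp
  · rw [Finset.sum_eq_zero]; · simp
    intro b _
    rw [Finsupp.single_apply, if_neg]
    intro h'; simp at h'; exact h h'.1.symm

theorem BD_pderiv (s : (i : Fin l) × Fin (k i)) {e : Fin l → ℕ}
    {p : MvPolynomial ((i : Fin l) × Fin (k i)) ℝ}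
    (hp : p ∈ BD k e) : MvPolynomial.pderiv s p ∈ BD k e := by
  classical
  rw [p.as_sum, map_sum]
  refine Submodule.sum_mem _ fun m hm => ?_
  rw [MvPolynomial.pderiv_monomial, BD, MvPolynomial.monomial_mem_restrictSupport]
  left; intro i
  refine le_trans (Finset.sum_le_sum fun t _ => ?_) (hp hm i)
  simp

theorem BD_exists (p : MvPolynomial ((i : Fin l) × Fin (k i)) ℝ) :
    ∃ c : ℕ, ∀ c' ≥ c, p ∈ BD k (fun _ => c') := by
  refine ⟨∑ m ∈ p.support, ∑ s, m s, fun c' hc' => ?_⟩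
  intro m hm i
  refine le_trans ?_ hc'
  calc ∑ t, m ⟨i, t⟩ ≤ ∑ j, ∑ t, m ⟨j, t⟩ :=
        Finset.single_le_sum (f := fun j => ∑ t, m ⟨j, t⟩) (fun _ _ => Nat.zero_le _)
          (Finset.mem_univ i)
    _ = ∑ s, m s := (Fintype.sum_sigma _).symm
    _ ≤ _ := Finset.single_le_sum (f := fun m : ((i : Fin l) × Fin (k i)) →₀ ℕ => ∑ s, m s)
        (fun _ _ => Nat.zero_le _) hm

end blocks

open Filter Topology in
/-- Local right inverse at a nondegenerate zero. -/
theorem exists_local_right_inverse {σ : Type} [Fintype σ]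
    (F : σ → MvPolynomial σ ℝ) (p : σ → ℝ) (h0 : ∀ s, MvPolynomial.eval p (F s) = 0)
    (hdet : (fderiv ℝ (fun w : σ → ℝ => fun s => MvPolynomial.eval w (F s)) p).det ≠ 0) :
    ∃ φ : (σ → ℝ) → (σ → ℝ), Tendsto φ (𝓝 0) (𝓝 p) ∧
      ∀ᶠ z in 𝓝 0, ∀ s, MvPolynomial.eval (φ z) (F s) = z s := by
  set G := fun w : σ → ℝ => fun s => MvPolynomial.eval w (F s) with hG
  have han : AnalyticAt ℝ G p := by
    rw [analyticAt_pi_iff]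
    intro s
    exact AnalyticOnNhd.eval_mvPolynomial (F s) p (Set.mem_univ _)
  have hs : HasStrictFDerivAt G
      (((fderiv ℝ G p).toContinuousLinearEquivOfDetNeZero hdet : (σ → ℝ) ≃L[ℝ] (σ → ℝ)) :
        (σ → ℝ) →L[ℝ] (σ → ℝ)) p := by
    rw [ContinuousLinearMap.coe_toContinuousLinearEquivOfDetNeZero]
    exact han.hasStrictFDerivAt
  have hGp : G p = 0 := by ext s; exact h0 s
  refine ⟨HasStrictFDerivAt.localInverse G _ p hs, ?_, ?_⟩
  · have := hs.localInverse_tendsto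
    rwa [hGp] at this
  · have := hs.eventually_right_inverse
    rw [hGp] at this
    filter_upwards [this] with z hz s
    exact congrFun hz s

/-- A polynomial vanishing near `0` is zero. -/
theorem MvPolynomial.eq_zero_of_eventually {σ : Type} [Fintype σ] (Q : MvPolynomial σ ℝ)
    (h : ∀ᶠ z in nhds (0 : σ → ℝ), MvPolynomial.eval z Q = 0) : Q = 0 := by
  rw [Metric.eventually_nhds_iff] at h
  obtain ⟨ε, hε, h⟩ := h
  refine MvPolynomial.funext_set (fun _ => Set.Ioo (-ε) ε) (fun _ => Set.Ioo_infinite (by linarith))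
    fun x hx => ?_
  rw [map_zero]
  apply h
  rw [dist_pi_lt_iff hε]
  intro s
  have := hx s (Set.mem_univ _)
  simpa [abs_lt] using this

/-- Interpolation polynomials. -/
theorem exists_interp {σ : Type} [Fintype σ] (P : Finset (σ → ℝ)) (p : σ → ℝ) :
    ∃ h : MvPolynomial σ ℝ, MvPolynomial.eval p h = 1 ∧
      ∀ q ∈ P, q ≠ p → MvPolynomial.eval q h = 0 := by
  classical
  have : ∀ q : σ → ℝ, ∃ L : MvPolynomial σ ℝ,
      q ≠ p → MvPolynomial.eval p L = 1 ∧ MvPolynomial.eval q L = 0 := by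
    intro q
    by_cases h : q = p
    · exact ⟨0, fun h' => absurd h h'⟩
    · obtain ⟨s, hs⟩ := Function.ne_iff.1 h
      refine ⟨MvPolynomial.C (p s - q s)⁻¹ * (MvPolynomial.X s - MvPolynomial.C (q s)), fun _ => ?_⟩
      have : p s - q s ≠ 0 := sub_ne_zero.2 (Ne.symm hs)
      constructor
      · simp [this]
      · simp
  choose L hL using this
  refine ⟨∏ q ∈ P.erase p, L q, ?_, fun q hq hqp => ?_⟩
  · rw [map_prod]
    exact Finset.prod_eq_one fun q hq => (hL q (Finset.ne_of_mem_erase hq)).1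
  · rw [map_prod]
    exact Finset.prod_eq_zero (Finset.mem_erase.2 ⟨hqp, hq⟩) (hL q hqp).2

theorem nondeg_indep {σ : Type} [Fintype σ]
    (F : σ → MvPolynomial σ ℝ) (P : Finset (σ → ℝ))
    (h0 : ∀ p ∈ P, ∀ s, MvPolynomial.eval p (F s) = 0)
    (hdet : ∀ p ∈ P, (fderiv ℝ (fun w : σ → ℝ => fun s => MvPolynomial.eval w (F s)) p).det ≠ 0)
    (h : P → MvPolynomial σ ℝ) (h1 : ∀ p, MvPolynomial.eval p.1 (h p) = 1)
    (h2 : ∀ p q : P, q ≠ p → MvPolynomial.eval q.1 (h p) = 0)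
    (Q : P → MvPolynomial σ ℝ) (hQ : ∑ p, h p * MvPolynomial.aeval F (Q p) = 0) :
    ∀ p, Q p = 0 := by
  classical
  choose φ hφ1 hφ2 using fun p : P => exists_local_right_inverse F p.1 (h0 p p.2) (hdet p p.2)
  let M : (σ → ℝ) → Matrix P P ℝ := fun z => Matrix.of fun i j => MvPolynomial.eval (φ i z) (h j)
  have hM : Filter.Tendsto (fun z => (M z).det) (nhds 0) (nhds 1) := by
    have : Filter.Tendsto M (nhds 0) (nhds 1) := by
      refine tendsto_pi_nhds.2 fun i => tendsto_pi_nhds.2 fun j => ?_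
      have h3 := ((MvPolynomial.continuous_eval (h j)).tendsto i.1).comp (hφ1 i)
      have h4 : MvPolynomial.eval i.1 (h j) = (1 : Matrix P P ℝ) i j := by
        by_cases hij : i = j
        · subst hij; simp [h1]
        · rw [h2 j i hij, Matrix.one_apply_ne hij]
      rw [h4] at h3
      exact h3
    have h5 := ((continuous_id.matrix_det (A := fun A : Matrix P P ℝ => A)).tendsto 1).comp this
    simp only [Matrix.det_one] at h5
    exact h5
  have hne : ∀ᶠ z in nhds (0 : σ → ℝ), (M z).det ≠ 0 :=
    hM.eventually_ne one_ne_zero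
  have hall : ∀ᶠ z in nhds (0 : σ → ℝ), ∀ p : P, MvPolynomial.eval z (Q p) = 0 := by
    filter_upwards [hne, Filter.eventually_all.2 hφ2] with z hz hz2
    have : (M z).mulVec (fun p => MvPolynomial.eval z (Q p)) = 0 := by
      ext i
      have h6 := congrArg (MvPolynomial.eval (φ i z)) hQ
      rw [map_sum, map_zero] at h6
      rw [Pi.zero_apply, ← h6]
      simp only [Matrix.mulVec, dotProduct, M, Matrix.of_apply, map_mul]
      refine Finset.sum_congr rfl fun j _ => ?_
      congr 1
      have h7 : MvPolynomial.eval (φ i z) (MvPolynomial.aeval F (Q j))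
          = MvPolynomial.eval (fun s => MvPolynomial.eval (φ i z) (F s)) (Q j) := by
        have := MvPolynomial.comp_aeval_apply (f := F) (MvPolynomial.aeval (R := ℝ) (φ i z)) (Q j)
        simpa [MvPolynomial.coe_aeval_eq_eval] using this
      rw [h7]
      congr 2
      ext s
      exact (hz2 i s).symm
    have h8 := Matrix.eq_zero_of_mulVec_eq_zero hz this
    exact fun p => congrFun h8 p
  exact fun p => MvPolynomial.eq_zero_of_eventually _ (hall.mono fun z hz => hz p)

theorem bezout_count {l : ℕ} {k : Fin l → ℕ} (e : Fin l → ℕ)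
    (F : ((i : Fin l) × Fin (k i)) → MvPolynomial ((i : Fin l) × Fin (k i)) ℝ)
    (hF : ∀ s, F s ∈ BD k e)
    (P : Finset (((i : Fin l) × Fin (k i)) → ℝ))
    (h0 : ∀ p ∈ P, ∀ s, MvPolynomial.eval p (F s) = 0)
    (hdet : ∀ p ∈ P, (fderiv ℝ (fun w : ((i : Fin l) × Fin (k i)) → ℝ =>
      fun s => MvPolynomial.eval w (F s)) p).det ≠ 0) :
    ∃ c : ℕ, ∀ T : ℕ, P.card *
      Nat.card {x : ((i : Fin l) × Fin (k i)) → ℕ // ∑ i, x i ≤ T} ≤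
      Nat.card (blockSet k (fun i => T * e i + c)) := by
  classical
  choose h' h1' h2' using fun p => exists_interp P p
  let h : P → MvPolynomial ((i : Fin l) × Fin (k i)) ℝ := fun p => h' p.1
  have h1 : ∀ p : P, MvPolynomial.eval p.1 (h p) = 1 := fun p => h1' p.1
  have h2 : ∀ p q : P, q ≠ p → MvPolynomial.eval q.1 (h p) = 0 := fun p q hqp =>
    h2' p.1 q.1 q.2 (fun hc => hqp (Subtype.ext hc))
  choose c0 hc0 using fun p : P => BD_exists (h p)
  refine ⟨∑ p, c0 p, fun T => ?_⟩
  set c := ∑ p, c0 p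
  let ι := {x : ((i : Fin l) × Fin (k i)) → ℕ // ∑ i, x i ≤ T}
  let _ : Fintype ι := Fintype.ofFinite _
  let v : P × ι → MvPolynomial ((i : Fin l) × Fin (k i)) ℝ :=
    fun pa => h pa.1 * ∏ s, F s ^ pa.2.1 s
  have hv : ∀ pa, v pa ∈ BD k (fun i => T * e i + c) := by
    rintro ⟨p, a⟩
    have hA : ∏ s, F s ^ a.1 s ∈ BD k (∑ s, a.1 s • e) :=
      BD_prod _ fun s _ => BD_pow (hF s) _
    have hB := hc0 p c (Finset.single_le_sum (f := c0) (fun _ _ => Nat.zero_le _)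
      (Finset.mem_univ p))
    refine BD_mono ?_ (BD_mul hB hA)
    intro i
    simp only [Pi.add_apply, Finset.sum_apply, Pi.smul_apply, smul_eq_mul, ← Finset.sum_mul]
    rw [add_comm]
    exact Nat.add_le_add_right (Nat.mul_le_mul_right _ a.2) _
  have hli : LinearIndependent ℝ v := by
    rw [Fintype.linearIndependent_iff]
    intro g hg
    let Q : P → MvPolynomial ((i : Fin l) × Fin (k i)) ℝ := fun p =>
      ∑ a : ι, MvPolynomial.monomial (Finsupp.equivFunOnFinite.symm a.1) (g (p, a))
    have hQ : ∑ p, h p * MvPolynomial.aeval F (Q p) = 0 := by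
      rw [← hg, Fintype.sum_prod_type]
      refine Finset.sum_congr rfl fun p _ => ?_
      simp only [Q, v, map_sum, Finset.mul_sum]
      refine Finset.sum_congr rfl fun a _ => ?_
      rw [MvPolynomial.aeval_monomial, Finsupp.prod_fintype _ _ (by simp)]
      simp only [MvPolynomial.algebraMap_eq, MvPolynomial.smul_eq_C_mul,
        Finsupp.equivFunOnFinite_symm_apply_apply]
      ring
    have hz := nondeg_indep F P h0 hdet h h1 h2 Q hQ
    rintro ⟨p, a⟩
    have h3 := congrArg (MvPolynomial.coeff (Finsupp.equivFunOnFinite.symm a.1)) (hz p)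
    simp only [Q, MvPolynomial.coeff_sum, MvPolynomial.coeff_monomial, MvPolynomial.coeff_zero,
      EmbeddingLike.apply_eq_iff_eq] at h3
    rw [Finset.sum_eq_single a] at h3
    · simpa using h3
    · intro b _ hb
      rw [if_neg]
      exact fun hc => hb (Subtype.ext hc)
    · simp
  let b := MvPolynomial.basisRestrictSupport ℝ (blockSet k (fun i => T * e i + c))
  have : Module.Finite ℝ (BD k (fun i => T * e i + c)) := Module.Finite.of_basis b
  let v' : P × ι → BD k (fun i => T * e i + c) := fun pa => ⟨v pa, hv pa⟩
  have hli' : LinearIndependent ℝ v' := LinearIndependent.of_comp (Submodule.subtype _) hli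
  have h9 := hli'.fintype_card_le_finrank
  rw [Module.finrank_eq_nat_card_basis b, Fintype.card_prod, Fintype.card_coe] at h9
  rwa [Nat.card_eq_fintype_card (α := ι)]

theorem bezout {l : ℕ} {k : Fin l → ℕ} (e : Fin l → ℕ)
    (F : ((i : Fin l) × Fin (k i)) → MvPolynomial ((i : Fin l) × Fin (k i)) ℝ)
    (hF : ∀ s, F s ∈ BD k e)
    (P : Finset (((i : Fin l) × Fin (k i)) → ℝ))
    (h0 : ∀ p ∈ P, ∀ s, MvPolynomial.eval p (F s) = 0)
    (hdet : ∀ p ∈ P, (fderiv ℝ (fun w : ((i : Fin l) × Fin (k i)) → ℝ =>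
      fun s => MvPolynomial.eval w (F s)) p).det ≠ 0) :
    (P.card : ℝ) * ∏ i, ((k i).factorial : ℝ) ≤
      ((∑ i, k i).factorial : ℝ) * ∏ i, (e i : ℝ) ^ k i := by
  obtain ⟨c, hc⟩ := bezout_count e F hF P h0 hdet
  have key : ∀ T : ℕ, P.card * (∏ i, (k i).factorial) * T ^ (∑ i, k i) ≤
      (∑ i, k i).factorial * ∏ i, (k i + (T * e i + c)) ^ (k i) := by
    intro T
    have hA := simplex_lower ((i : Fin l) × Fin (k i)) T
    have hcard : Fintype.card ((i : Fin l) × Fin (k i)) = ∑ i, k i := by simp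
    rw [hcard] at hA
    have hB : (∏ i, (k i).factorial) * Nat.card (blockSet k (fun i => T * e i + c)) ≤
        ∏ i, (k i + (T * e i + c)) ^ (k i) := by
      rw [card_blockSet, ← Finset.prod_mul_distrib]
      refine Finset.prod_le_prod' fun i _ => ?_
      simpa using simplex_upper (Fin (k i)) (T * e i + c)
    calc P.card * (∏ i, (k i).factorial) * T ^ (∑ i, k i)
        ≤ P.card * (∏ i, (k i).factorial) * ((∑ i, k i).factorial *
          Nat.card {x : ((i : Fin l) × Fin (k i)) → ℕ // ∑ i, x i ≤ T}) :=
          Nat.mul_le_mul_left _ hA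
      _ = (∑ i, k i).factorial * ((∏ i, (k i).factorial) * (P.card *
          Nat.card {x : ((i : Fin l) × Fin (k i)) → ℕ // ∑ i, x i ≤ T})) := by ring
      _ ≤ (∑ i, k i).factorial * ((∏ i, (k i).factorial) * _) :=
          Nat.mul_le_mul_left _ (Nat.mul_le_mul_left _ (hc T))
      _ ≤ _ := Nat.mul_le_mul_left _ hB
  have key2 : ∀ T : ℕ, 0 < T → (P.card : ℝ) * ∏ i, ((k i).factorial : ℝ) ≤
      ((∑ i, k i).factorial : ℝ) * ∏ i, (e i + (k i + c : ℝ) * (T : ℝ)⁻¹) ^ (k i) := by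
    intro T hT
    have hT' : (0 : ℝ) < T := by exact_mod_cast hT
    have h1 : ((P.card * (∏ i, (k i).factorial) * T ^ (∑ i, k i) : ℕ) : ℝ) ≤
      (((∑ i, k i).factorial * ∏ i, (k i + (T * e i + c)) ^ (k i) : ℕ) : ℝ) := by
      exact_mod_cast key T
    rw [Nat.cast_mul, Nat.cast_mul, Nat.cast_mul, Nat.cast_prod, Nat.cast_prod, Nat.cast_pow] at h1
    have h2 : (∏ i, (((k i + (T * e i + c)) ^ (k i) : ℕ) : ℝ)) =
        (∏ i, (e i + (k i + c : ℝ) * (T : ℝ)⁻¹) ^ (k i)) * (T : ℝ) ^ (∑ i, k i) := by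
      rw [← Finset.prod_pow_eq_pow_sum, ← Finset.prod_mul_distrib]
      refine Finset.prod_congr rfl fun i _ => ?_
      rw [← mul_pow]
      push_cast
      congr 1
      field_simp
      ring
    rw [h2, ← mul_assoc] at h1
    exact le_of_mul_le_mul_right h1 (by positivity)
  have hlim : Filter.Tendsto (fun T : ℕ => ((∑ i, k i).factorial : ℝ) *
      ∏ i, (e i + (k i + c : ℝ) * (T : ℝ)⁻¹) ^ (k i)) Filter.atTop
      (nhds (((∑ i, k i).factorial : ℝ) * ∏ i, (e i : ℝ) ^ k i)) := by
    refine Filter.Tendsto.const_mul _ (tendsto_finsetProd _ fun i _ => Filter.Tendsto.pow ?_ _)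
    have := (tendsto_inv_atTop_nhds_zero_nat (𝕜 := ℝ)).const_mul (k i + c : ℝ)
    simpa using this.const_add (e i : ℝ)
  exact ge_of_tendsto hlim (Filter.eventually_atTop.2 ⟨1, fun T hT => key2 T hT⟩)

theorem hasDerivAt_eval_update {σ : Type} [Fintype σ] [DecidableEq σ] (p : σ → ℝ) (s : σ)
    (h : MvPolynomial σ ℝ) :
    HasDerivAt (fun t : ℝ => MvPolynomial.eval (Function.update p s t) h)
      (MvPolynomial.eval p (MvPolynomial.pderiv s h)) (p s) := by
  induction h using MvPolynomial.induction_on with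
  | C a => simpa using hasDerivAt_const (p s) a
  | add f g hf hg => simpa using hf.fun_add hg
  | mul_X f i hf =>
    have hX : HasDerivAt (fun t : ℝ => Function.update p s t i)
        (MvPolynomial.eval p (MvPolynomial.pderiv s (MvPolynomial.X i))) (p s) := by
      by_cases hi : i = s
      · subst hi; simpa using hasDerivAt_id' (p i)
      · simpa [Function.update_of_ne hi, MvPolynomial.pderiv_X_of_ne hi] using
          hasDerivAt_const (p s) (p i)
    have := hf.fun_mul hX
    simp only [Function.update_eq_self] at this
    simp only [map_mul, MvPolynomial.eval_X, Derivation.leibniz, map_add, smul_eq_mul]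
    convert! this using 1
    ring

theorem pderiv_eq_zero_of_isLocalMin {σ : Type} [Fintype σ] (p : σ → ℝ) (s : σ)
    (h : MvPolynomial σ ℝ) (hmin : IsLocalMin (fun w => MvPolynomial.eval w h) p) :
    MvPolynomial.eval p (MvPolynomial.pderiv s h) = 0 := by
  classical
  have hc : Filter.Tendsto (fun t : ℝ => Function.update p s t) (nhds (p s)) (nhds p) := by
    have : Continuous (fun t : ℝ => Function.update p s t) := by fun_prop
    simpa using this.tendsto (p s)
  have : IsLocalMin (fun t : ℝ => MvPolynomial.eval (Function.update p s t) h) (p s) := by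
    have := hc.eventually hmin
    simpa [IsLocalMin, IsMinFilter] using this
  exact this.hasDerivAt_eq_zero (hasDerivAt_eval_update p s h)

/-- Equidimensional Sard: small regular values exist. -/
theorem exists_regular {σ : Type} [Fintype σ] (G : σ → MvPolynomial σ ℝ) (η : ℝ) (hη : 0 < η) :
    ∃ a : σ → ℝ, (∀ s, |a s| < η) ∧ ∀ p : σ → ℝ, (∀ s, MvPolynomial.eval p (G s) = a s) →
      (fderiv ℝ (fun w : σ → ℝ => fun s => MvPolynomial.eval w (G s)) p).det ≠ 0 := by
  set g := fun w : σ → ℝ => fun s => MvPolynomial.eval w (G s) with hg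
  have hd : Differentiable ℝ g := by
    intro p
    have : AnalyticAt ℝ g p := by
      rw [analyticAt_pi_iff]
      intro s
      exact AnalyticOnNhd.eval_mvPolynomial (G s) p (Set.mem_univ _)
    exact this.differentiableAt
  let Cr : Set (σ → ℝ) := {p | (fderiv ℝ g p).det = 0}
  have hm : MeasureTheory.volume (g '' Cr) = 0 :=
    MeasureTheory.addHaar_image_eq_zero_of_det_fderivWithin_eq_zero MeasureTheory.volume
      (f' := fun p => fderiv ℝ g p)
      (fun p _ => (hd p).hasFDerivAt.hasFDerivWithinAt) (fun p hp => hp)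
  have hne : ∃ a ∈ Metric.ball (0 : σ → ℝ) η, a ∉ g '' Cr := by
    by_contra! hc
    have h1 : MeasureTheory.volume (Metric.ball (0 : σ → ℝ) η) = 0 :=
      MeasureTheory.measure_mono_null hc hm
    exact (Metric.measure_ball_pos MeasureTheory.volume (0 : σ → ℝ) hη).ne' h1
  obtain ⟨a, ha, hac⟩ := hne
  refine ⟨a, fun s => ?_, fun p hp hdet => hac ⟨p, hdet, funext hp⟩⟩
  rw [Metric.mem_ball, dist_pi_lt_iff hη] at ha
  simpa using ha s

/-- Components of a regular level set are open. -/
theorem isOpen_component {E F : Type} [NormedAddCommGroup E] [NormedSpace ℝ E] [CompleteSpace E]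
    [NormedAddCommGroup F] [NormedSpace ℝ F] [FiniteDimensional ℝ F] (f : E → F) (y : F)
    (hs : ∀ x ∈ f ⁻¹' {y}, HasStrictFDerivAt f (fderiv ℝ f x) x)
    (hreg : ∀ x ∈ f ⁻¹' {y}, Function.Surjective (fderiv ℝ f x)) (x : ↥(f ⁻¹' {y})) :
    IsOpen (connectedComponent x) := by
  rw [isOpen_iff_mem_nhds]
  intro z hz
  rw [connectedComponent_eq hz]
  clear hz x
  obtain ⟨x, hx⟩ := z
  have hr : ((fderiv ℝ f x : E →L[ℝ] F) : E →ₗ[ℝ] F).range = ⊤ :=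
    LinearMap.range_eq_top.2 (hreg x hx)
  set φ := (hs x hx).implicitToOpenPartialHomeomorph f _ hr with hφ
  have hφ1 : ∀ w, (φ w).1 = f w := fun w => (hs x hx).implicitToOpenPartialHomeomorph_fst hr w
  have hxs : x ∈ φ.source := (hs x hx).mem_implicitToOpenPartialHomeomorph_source hr
  have hfx : f x = y := hx
  have htar : φ.target ∈ nhds (φ x) := φ.open_target.mem_nhds (φ.map_source hxs)
  obtain ⟨ε, hε, hball⟩ := Metric.mem_nhds_iff.1 htar
  set B := Metric.ball (φ x).2 ε with hB
  have hyB : ∀ b ∈ B, (y, b) ∈ φ.target := by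
    intro b hb
    apply hball
    rw [Metric.mem_ball, Prod.dist_eq, hφ1, hfx]
    simpa [hε] using Metric.mem_ball.1 hb
  have hbc : IsPreconnected B := (convex_ball _ _).isPreconnected
  -- the connected piece
  have hmem : ∀ b : B, f (φ.symm (y, b.1)) = y := by
    intro b
    rw [← hφ1, φ.right_inv (hyB b.1 b.2)]
  let γ : B → ↥(f ⁻¹' {y}) := fun b => ⟨φ.symm (y, b.1), hmem b⟩
  have hγ : Continuous γ := by
    refine Continuous.subtype_mk ?_ _
    refine φ.continuousOn_symm.comp_continuous (by fun_prop) fun b => hyB b.1 b.2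
  have : PreconnectedSpace B := isPreconnected_iff_preconnectedSpace.1 hbc
  have hpre : IsPreconnected (Set.range γ) := isPreconnected_range hγ
  have hx0 : (⟨x, hx⟩ : ↥(f ⁻¹' {y})) ∈ Set.range γ := by
    refine ⟨⟨(φ x).2, Metric.mem_ball_self hε⟩, Subtype.ext ?_⟩
    change φ.symm (y, (φ x).2) = x
    rw [← hfx, ← hφ1, Prod.mk.eta, φ.left_inv hxs]
  refine Filter.mem_of_superset ?_ (hpre.subset_connectedComponent hx0)
  have h1 : φ.source ∩ φ ⁻¹' (Set.univ ×ˢ B) ∈ nhds x := by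
    refine Filter.inter_mem (φ.open_source.mem_nhds hxs) ?_
    refine (φ.continuousAt hxs).preimage_mem_nhds ?_
    refine IsOpen.mem_nhds (isOpen_univ.prod Metric.isOpen_ball) ?_
    exact ⟨trivial, Metric.mem_ball_self hε⟩
  have h2 := continuous_subtype_val.continuousAt.preimage_mem_nhds (x := (⟨x, hx⟩ : ↥(f ⁻¹' {y}))) h1
  refine Filter.mem_of_superset h2 ?_
  rintro ⟨w, hw⟩ ⟨hw1, hw2⟩
  refine ⟨⟨(φ w).2, hw2.2⟩, Subtype.ext ?_⟩
  change φ.symm (y, (φ w).2) = w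
  have hfw : f w = y := hw
  rw [← hfw, ← hφ1, Prod.mk.eta, φ.left_inv hw1]

/-- The perturbed penalty polynomial. -/
noncomputable def penalty {σ : Type} [Fintype σ] (g : MvPolynomial σ ℝ) (M : ℝ) (a : σ → ℝ) :
    MvPolynomial σ ℝ :=
  MvPolynomial.C M * g + ∑ s, MvPolynomial.X s ^ 2 - ∑ s, MvPolynomial.C (a s) * MvPolynomial.X s

theorem pderiv_penalty {σ : Type} [Fintype σ] (g : MvPolynomial σ ℝ) (M : ℝ) (a : σ → ℝ) (s : σ) :
    MvPolynomial.pderiv s (penalty g M a) =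
      MvPolynomial.pderiv s (penalty g M 0) - MvPolynomial.C (a s) := by
  classical
  have : MvPolynomial.pderiv s (∑ t, MvPolynomial.C (a t) * MvPolynomial.X t) =
      MvPolynomial.C (a s) := by
    rw [map_sum, Finset.sum_eq_single s]
    · simp
    · intro b _ hb
      simp [MvPolynomial.pderiv_X_of_ne hb]
    · simp
  simp only [penalty, map_sub, this, Pi.zero_apply, map_zero, zero_mul, Finset.sum_const_zero,
    sub_zero]

theorem exists_critical {σ : Type} [Fintype σ] (g : MvPolynomial σ ℝ) (Z : Set (σ → ℝ))
    (hg0 : ∀ w, 0 ≤ MvPolynomial.eval w g) (hgZ : ∀ w, MvPolynomial.eval w g = 0 ↔ w ∈ Z)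
    {ι : Type} [Fintype ι] (A : ι → Set (σ → ℝ)) (hA : ∀ i, A i ⊆ Z)
    (hne : ∀ i, (A i).Nonempty) (hdisj : ∀ i j, i ≠ j → Disjoint (A i) (A j))
    (hcl : ∀ i, IsClosed (A i)) (hcl' : ∀ i, IsClosed (Z \ A i)) :
    ∃ (M : ℝ) (a : σ → ℝ) (p : ι → σ → ℝ), Function.Injective p ∧
      ∀ i, (∀ s, MvPolynomial.eval (p i) (MvPolynomial.pderiv s (penalty g M a)) = 0) ∧
        (fderiv ℝ (fun w : σ → ℝ => fun s =>
          MvPolynomial.eval w (MvPolynomial.pderiv s (penalty g M a))) (p i)).det ≠ 0 := by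
  classical
  choose x hx using hne
  let q : (σ → ℝ) → ℝ := fun w => ∑ s, w s ^ 2
  have hq : Continuous q := by fun_prop
  have hq0 : ∀ w, 0 ≤ q w := fun w => Finset.sum_nonneg fun s _ => sq_nonneg _
  obtain ⟨R, hR0, hR⟩ : ∃ R : ℝ, 0 ≤ R ∧ ∀ i, q (x i) ≤ R :=
    ⟨∑ i, q (x i), Finset.sum_nonneg fun i _ => hq0 _, fun i =>
      Finset.single_le_sum (f := fun i => q (x i)) (fun i _ => hq0 _) (Finset.mem_univ i)⟩
  have hcoord : ∀ w, q w ≤ R + 1 → ∀ s, |w s| ≤ R + 1 := by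
    intro w hw s
    have h1 : w s ^ 2 ≤ R + 1 := le_trans
      (Finset.single_le_sum (f := fun s => w s ^ 2) (fun s _ => sq_nonneg _) (Finset.mem_univ s)) hw
    apply abs_le_of_sq_le_sq _ (by linarith)
    nlinarith
  have hbd : IsCompact {w | q w ≤ R + 1} := by
    refine Metric.isCompact_of_isClosed_isBounded (isClosed_le hq continuous_const) ?_
    refine (Metric.isBounded_closedBall (x := (0 : σ → ℝ)) (r := R + 1)).subset fun w hw => ?_
    rw [Metric.mem_closedBall, dist_pi_le_iff (by linarith)]
    intro s
    simpa using hcoord w hw s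
  let u : ι → (σ → ℝ) → ENNReal := fun i w => Metric.infEDist w (A i)
  let u' : ι → (σ → ℝ) → ENNReal := fun i w => Metric.infEDist w (Z \ A i)
  have hu : ∀ i, Continuous (u i) := fun i => Metric.continuous_infEDist
  have hu' : ∀ i, Continuous (u' i) := fun i => Metric.continuous_infEDist
  -- penalty constant
  have hδ : ∀ i, ∃ M : ℝ, 0 ≤ M ∧ ∀ M' ≥ M, ∀ w, q w ≤ R + 1 → u i w = u' i w →
      R + 1 ≤ M' * MvPolynomial.eval w g := by
    intro i
    have hcomp : IsCompact ({w | q w ≤ R + 1} ∩ {w | u i w = u' i w}) :=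
      hbd.inter_right (isClosed_eq (hu i) (hu' i))
    rcases Set.eq_empty_or_nonempty ({w | q w ≤ R + 1} ∩ {w | u i w = u' i w}) with he | hn
    · refine ⟨0, le_rfl, fun M' _ w hw1 hw2 => ?_⟩
      exact absurd (show w ∈ ({w | q w ≤ R + 1} ∩ {w | u i w = u' i w}) from ⟨hw1, hw2⟩)
        (by rw [he]; simp)
    · obtain ⟨w0, hw0, hmin⟩ := hcomp.exists_isMinOn hn
        (MvPolynomial.continuous_eval g).continuousOn
      have hpos : 0 < MvPolynomial.eval w0 g := by
        refine lt_of_le_of_ne (hg0 _) fun hc => ?_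
        have hz := (hgZ w0).1 hc.symm
        have heq : u i w0 = u' i w0 := hw0.2
        by_cases hm : w0 ∈ A i
        · have h1 : u i w0 = 0 := Metric.infEDist_zero_of_mem hm
          rw [h1] at heq
          have := (Metric.mem_iff_infEDist_zero_of_closed (hcl' i)).2 heq.symm
          exact this.2 hm
        · have h1 : u' i w0 = 0 := Metric.infEDist_zero_of_mem (show w0 ∈ Z \ A i from ⟨hz, hm⟩)
          rw [h1] at heq
          exact hm ((Metric.mem_iff_infEDist_zero_of_closed (hcl i)).2 heq)
      refine ⟨(R + 1) / MvPolynomial.eval w0 g, by positivity, fun M' hM' w hw1 hw2 => ?_⟩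
      have h2 : MvPolynomial.eval w0 g ≤ MvPolynomial.eval w g := hmin ⟨hw1, hw2⟩
      rw [ge_iff_le, div_le_iff₀ hpos] at hM'
      have hM0 : 0 ≤ M' := by
        by_contra! hc
        nlinarith
      nlinarith
  choose M0 hM0 hM using hδ
  set M := ∑ i, M0 i with hMdef
  have hMi : ∀ i, M0 i ≤ M := fun i =>
    Finset.single_le_sum (f := M0) (fun i _ => hM0 i) (Finset.mem_univ i)
  have hMnn : 0 ≤ M := Finset.sum_nonneg fun i _ => hM0 i
  set η : ℝ := (8 * ((Fintype.card σ : ℝ) + 1) * (R + 1))⁻¹ with hη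
  have hηpos : 0 < η := by positivity
  obtain ⟨a, ha, hareg⟩ := exists_regular
    (fun s => MvPolynomial.pderiv s (penalty g M 0)) η hηpos
  have hlin : ∀ w, q w ≤ R + 1 → |∑ s, a s * w s| ≤ 1 / 8 := by
    intro w hw
    calc |∑ s, a s * w s| ≤ ∑ s, |a s * w s| := Finset.abs_sum_le_sum_abs _ _
      _ ≤ ∑ _s : σ, η * (R + 1) := by
        refine Finset.sum_le_sum fun s _ => ?_
        rw [abs_mul]
        exact mul_le_mul (ha s).le (hcoord w hw s) (abs_nonneg _) hηpos.le
      _ = Fintype.card σ * (η * (R + 1)) := by simp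
      _ ≤ (Fintype.card σ + 1) * (η * (R + 1)) := by
        have : 0 ≤ η * (R + 1) := by positivity
        nlinarith
      _ = 1 / 8 := by
        rw [hη]
        have : R + 1 ≠ 0 := by positivity
        field_simp
  have heval : ∀ w, MvPolynomial.eval w (penalty g M a) =
      M * MvPolynomial.eval w g + q w - ∑ s, a s * w s := by
    intro w
    simp [penalty, q]
  have hcrit : ∀ i, ∃ p : σ → ℝ, u i p < u' i p ∧
      ∀ s, MvPolynomial.eval p (MvPolynomial.pderiv s (penalty g M a)) = 0 := by
    intro i
    have hcomp : IsCompact ({w | q w ≤ R + 1} ∩ {w | u i w ≤ u' i w}) :=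
      hbd.inter_right (isClosed_le (hu i) (hu' i))
    have hxi : x i ∈ ({w | q w ≤ R + 1} ∩ {w | u i w ≤ u' i w}) := by
      refine ⟨(hR i).trans (by linarith), ?_⟩
      have : u i (x i) = 0 := Metric.infEDist_zero_of_mem (hx i)
      simp [this]
    obtain ⟨p, hp, hmin⟩ := hcomp.exists_isMinOn ⟨_, hxi⟩
      (MvPolynomial.continuous_eval (penalty g M a)).continuousOn
    have hval : MvPolynomial.eval p (penalty g M a) ≤ R + 1 / 8 := by
      refine (hmin hxi).trans ?_
      change MvPolynomial.eval (x i) (penalty g M a) ≤ _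
      rw [heval, (hgZ _).2 (hA i (hx i))]
      have h1 := (abs_le.1 (hlin (x i) hxi.1)).1
      have h2 := hR i
      linarith
    rw [heval] at hval
    have h1 := (abs_le.1 (hlin p hp.1)).2
    have hlt : u i p < u' i p := by
      refine lt_of_le_of_ne hp.2 fun hc => ?_
      have := hM i M (hMi i) p hp.1 hc
      have := hq0 p
      linarith
    have hqlt : q p < R + 1 := by
      have := mul_nonneg hMnn (hg0 p)
      linarith
    refine ⟨p, hlt, fun s => pderiv_eq_zero_of_isLocalMin p s _ ?_⟩
    refine hmin.isLocalMin ?_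
    refine Filter.inter_mem ?_ ?_
    · exact Filter.mem_of_superset ((isOpen_lt hq continuous_const).mem_nhds hqlt)
        (Set.ofPred_subset_ofPred.2 fun w hw => hw.le)
    · exact Filter.mem_of_superset ((isOpen_lt (hu i) (hu' i)).mem_nhds hlt)
        (Set.ofPred_subset_ofPred.2 fun w hw => hw.le)
  choose p hp1 hp2 using hcrit
  refine ⟨M, a, p, ?_, fun i => ⟨hp2 i, ?_⟩⟩
  · intro i j hij
    by_contra hne
    have hsub : ∀ i j, i ≠ j → A j ⊆ Z \ A i := fun i j hij w hw =>
      ⟨hA j hw, fun hw' => Set.disjoint_left.1 (hdisj i j hij) hw' hw⟩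
    have h1 : u' i (p i) ≤ u j (p i) := Metric.infEDist_anti (hsub i j hne)
    have h2 : u' j (p j) ≤ u i (p j) := Metric.infEDist_anti (hsub j i (Ne.symm hne))
    have h3 := hp1 i
    have h4 := hp1 j
    rw [hij] at h1 h3
    exact absurd (h3.trans_le (h1.trans (h4.le.trans h2))) (lt_irrefl _)
  · have h1 := hareg (p i) fun s => by
      have := hp2 i s
      rw [pderiv_penalty, map_sub, MvPolynomial.eval_C, sub_eq_zero] at this
      exact this
    have h2 : (fun w : σ → ℝ => fun s =>
          MvPolynomial.eval w (MvPolynomial.pderiv s (penalty g M a))) =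
        fun w => (fun s => MvPolynomial.eval w (MvPolynomial.pderiv s (penalty g M 0))) - a := by
      funext w s
      rw [pderiv_penalty, map_sub, MvPolynomial.eval_C]; rfl
    rw [h2, fderiv_sub_const]
    exact h1

theorem entropy_bound {l : ℕ} (k d : Fin l → ℕ) (hk : ∀ i, 1 ≤ k i) (hd : ∀ i, 1 ≤ d i)
    (K D : ℕ) (hK : K = ∑ i, k i) (hK0 : 0 < K) (hD0 : 0 < D) (H : ℝ)
    (hH : H = ∑ i, ((k i : ℝ) / K) * Real.logb 2 ((D * k i : ℝ) / (K * d i))) (N : ℝ)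
    (hN : N * ∏ i, ((k i).factorial : ℝ) ≤
      ((∑ i, k i).factorial : ℝ) * ∏ i, ((2 * d i : ℕ) : ℝ) ^ k i) :
    N ≤ (2 * D : ℝ) ^ K * (2 : ℝ) ^ (-((K : ℝ) * H)) := by
  have hKr : (0 : ℝ) < K := by exact_mod_cast hK0
  have hDr : (0 : ℝ) < D := by exact_mod_cast hD0
  have hkr : ∀ i, (0 : ℝ) < k i := fun i => by exact_mod_cast hk i
  have hdr : ∀ i, (0 : ℝ) < d i := fun i => by exact_mod_cast hd i
  have h1 : (2 : ℝ) ^ ((K : ℝ) * H) = ∏ i, ((D * k i : ℝ) / (K * d i)) ^ (k i) := by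
    rw [hH, Finset.mul_sum, Real.rpow_sum_of_pos (by norm_num)]
    refine Finset.prod_congr rfl fun i _ => ?_
    have hpos : (0 : ℝ) < (D * k i : ℝ) / (K * d i) := by
      have := hkr i
      have := hdr i
      positivity
    have h2 : (K : ℝ) * ((k i : ℝ) / K * Real.logb 2 ((D * k i : ℝ) / (K * d i))) =
        Real.logb 2 ((D * k i : ℝ) / (K * d i)) * (k i : ℝ) := by
      field_simp
    rw [h2, Real.rpow_mul_natCast (by norm_num), Real.rpow_logb (by norm_num) (by norm_num) hpos]
  have h3 : (2 * D : ℝ) ^ K * (2 : ℝ) ^ (-((K : ℝ) * H)) * ∏ i, (k i : ℝ) ^ (k i) =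
      (K : ℝ) ^ K * ∏ i, ((2 * d i : ℕ) : ℝ) ^ k i := by
    rw [Real.rpow_neg (by norm_num), h1, ← Finset.prod_inv_distrib]
    conv_lhs => rw [hK]
    conv_rhs => rw [show (K : ℝ) ^ K = (K : ℝ) ^ (∑ i, k i) by rw [← hK]]
    rw [← Finset.prod_pow_eq_pow_sum, ← Finset.prod_pow_eq_pow_sum, ← Finset.prod_mul_distrib,
      ← Finset.prod_mul_distrib, ← Finset.prod_mul_distrib]
    refine Finset.prod_congr rfl fun i _ => ?_
    rw [← inv_pow, ← mul_pow, ← mul_pow, ← mul_pow]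
    congr 1
    have := hkr i
    have := hdr i
    rw [← hK]
    push_cast
    field_simp
  have h4 : (Nat.multinomial Finset.univ k : ℝ) * ∏ i, (k i : ℝ) ^ (k i) ≤ (K : ℝ) ^ K := by
    have h5 := Finset.sum_pow_eq_sum_piAntidiag Finset.univ (fun i => (k i : ℝ)) K
    rw [← Nat.cast_sum, ← hK] at h5
    rw [h5]
    exact Finset.single_le_sum
      (f := fun m : Fin l → ℕ => (Nat.multinomial Finset.univ m : ℝ) * ∏ i, (k i : ℝ) ^ (m i))
      (fun m _ => by positivity) (by simp [hK])
  have h6 : (∏ i, ((k i).factorial : ℝ)) * (Nat.multinomial Finset.univ k : ℝ) =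
      ((∑ i, k i).factorial : ℝ) := by
    exact_mod_cast Nat.multinomial_spec Finset.univ k
  have hf : (0 : ℝ) < ∏ i, ((k i).factorial : ℝ) :=
    Finset.prod_pos fun i _ => by exact_mod_cast Nat.factorial_pos _
  have hkk : (0 : ℝ) < ∏ i, (k i : ℝ) ^ (k i) := Finset.prod_pos fun i _ => pow_pos (hkr i) _
  have hE : (0 : ℝ) ≤ ∏ i, ((2 * d i : ℕ) : ℝ) ^ k i := by positivity
  have h7 : N ≤ (Nat.multinomial Finset.univ k : ℝ) * ∏ i, ((2 * d i : ℕ) : ℝ) ^ k i := by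
    rw [← h6] at hN
    refine le_of_mul_le_mul_right ?_ hf
    linarith
  refine le_of_mul_le_mul_right ?_ hkk
  rw [h3]
  calc N * ∏ i, (k i : ℝ) ^ (k i)
      ≤ (Nat.multinomial Finset.univ k : ℝ) * (∏ i, ((2 * d i : ℕ) : ℝ) ^ k i) *
        ∏ i, (k i : ℝ) ^ (k i) := mul_le_mul_of_nonneg_right h7 hkk.le
    _ = ((Nat.multinomial Finset.univ k : ℝ) * ∏ i, (k i : ℝ) ^ (k i)) *
        ∏ i, ((2 * d i : ℕ) : ℝ) ^ k i := by ring
    _ ≤ _ := mul_le_mul_of_nonneg_right h4 hE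

theorem penalty_BD {l : ℕ} {k : Fin l → ℕ} {d : Fin l → ℕ} (hd : ∀ i, 1 ≤ d i)
    {g : MvPolynomial ((i : Fin l) × Fin (k i)) ℝ} (hg : g ∈ BD k (fun i => 2 * d i))
    (M : ℝ) (a : ((i : Fin l) × Fin (k i)) → ℝ) : penalty g M a ∈ BD k (fun i => 2 * d i) := by
  refine Submodule.sub_mem _ (Submodule.add_mem _ ?_ ?_) ?_
  · rw [← MvPolynomial.smul_eq_C_mul]
    exact Submodule.smul_mem _ _ hg
  · refine Submodule.sum_mem _ fun s _ => ?_
    have h1 := BD_pow (BD_X s d hd) 2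
    exact h1
  · refine Submodule.sum_mem _ fun s _ => ?_
    rw [← MvPolynomial.smul_eq_C_mul]
    exact Submodule.smul_mem _ _ (BD_X s _ fun i => by have := hd i; omega)

/-- With the `k = Σ kᵢ` variables partitioned into `l` blocks of sizes `kᵢ`,
every monomial of every `θ_j` of total degree at most `dᵢ` in block `i`, `d = Σ dᵢ`, and
`H(v|u) = Σᵢ (kᵢ/k)·lg(d·kᵢ/(k·dᵢ))`, if `y` is a regular value of `f = (θ₁,…,θ_r)` then
`f⁻¹(y)` has at most `(2d)^k · 2^{−k·H(v|u)}` connected components. -/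
theorem blockwise_entropy_bound_components
    (l : ℕ) (hl : 1 ≤ l) (k : Fin l → ℕ) (hk : ∀ i, 1 ≤ k i)
    (d : Fin l → ℕ) (hd : ∀ i, 1 ≤ d i)
    (K : ℕ) (hK : K = ∑ i, k i)
    (D : ℕ) (hD : D = ∑ i, d i)
    (H : ℝ) (hH : H = ∑ i, ((k i : ℝ) / K) * Real.logb 2 ((D * k i : ℝ) / (K * d i)))
    (r : ℕ)
    (θ : Fin r → MvPolynomial ((i : Fin l) × Fin (k i)) ℝ)
    (hdeg : ∀ j, ∀ m ∈ (θ j).support, ∀ i : Fin l,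
      ∑ t : Fin (k i), m ⟨i, t⟩ ≤ d i)
    (f : (((i : Fin l) × Fin (k i)) → ℝ) → (Fin r → ℝ))
    (hf : ∀ w j, f w j = MvPolynomial.eval w (θ j))
    (y : Fin r → ℝ)
    (hreg : ∀ x ∈ f ⁻¹' {y}, Function.Surjective (fderiv ℝ f x)) :
    Finite (ConnectedComponents ↥(f ⁻¹' {y})) ∧
      (Nat.card (ConnectedComponents ↥(f ⁻¹' {y})) : ℝ) ≤
        (2 * D : ℝ) ^ K * (2 : ℝ) ^ (-((K : ℝ) * H)) := by
  have hKpos : 0 < K := by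
    rw [hK]
    exact lt_of_lt_of_le (hk ⟨0, hl⟩)
      (Finset.single_le_sum (f := k) (fun _ _ => Nat.zero_le _) (Finset.mem_univ (⟨0, hl⟩ : Fin l)))
  have hDpos : 0 < D := by
    rw [hD]
    exact lt_of_lt_of_le (hd ⟨0, hl⟩)
      (Finset.single_le_sum (f := d) (fun _ _ => Nat.zero_le _) (Finset.mem_univ (⟨0, hl⟩ : Fin l)))
  have hfan : ∀ x, AnalyticAt ℝ f x := by
    intro x
    rw [analyticAt_pi_iff]
    intro j
    have : (fun w => f w j) = fun w => MvPolynomial.eval w (θ j) := funext fun w => hf w j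
    rw [this]
    exact AnalyticOnNhd.eval_mvPolynomial (θ j) x (Set.mem_univ _)
  have hfc : Continuous f := continuous_iff_continuousAt.2 fun x => (hfan x).continuousAt
  have hZcl : IsClosed (f ⁻¹' {y}) := isClosed_singleton.preimage hfc
  have hopen := isOpen_component f y (fun x _ => (hfan x).hasStrictFDerivAt) hreg
  let g : MvPolynomial ((i : Fin l) × Fin (k i)) ℝ := ∑ j, (θ j - MvPolynomial.C (y j)) ^ 2
  have hgBD : g ∈ BD k (fun i => 2 * d i) := by
    refine Submodule.sum_mem _ fun j _ => ?_
    have h1 : θ j - MvPolynomial.C (y j) ∈ BD k d :=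
      Submodule.sub_mem _ (fun m hm i => hdeg j m hm i) (BD_C _ _)
    exact BD_pow h1 2
  have hgev : ∀ w, MvPolynomial.eval w g = ∑ j, (f w j - y j) ^ 2 := by
    intro w
    simp [g, hf]
  have hg0 : ∀ w, 0 ≤ MvPolynomial.eval w g := fun w => by
    rw [hgev]
    exact Finset.sum_nonneg fun j _ => sq_nonneg _
  have hgZ : ∀ w, MvPolynomial.eval w g = 0 ↔ w ∈ f ⁻¹' {y} := by
    intro w
    rw [hgev, Finset.sum_eq_zero_iff_of_nonneg fun j _ => sq_nonneg _]
    simp only [Finset.mem_univ, true_imp_iff, Set.mem_preimage, Set.mem_singleton_iff,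
      funext_iff, sq_eq_zero_iff, sub_eq_zero]
  have hbound : ∀ S : Finset (ConnectedComponents ↥(f ⁻¹' {y})),
      (S.card : ℝ) ≤ (2 * D : ℝ) ^ K * (2 : ℝ) ^ (-((K : ℝ) * H)) := by
    intro S
    let A : S → Set (((i : Fin l) × Fin (k i)) → ℝ) := fun c =>
      Subtype.val '' (ConnectedComponents.mk ⁻¹' {c.1} : Set ↥(f ⁻¹' {y}))
    have hclop : ∀ c : ConnectedComponents ↥(f ⁻¹' {y}),
        IsClopen (ConnectedComponents.mk ⁻¹' {c} : Set ↥(f ⁻¹' {y})) := by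
      intro c
      obtain ⟨x, rfl⟩ := ConnectedComponents.surjective_coe c
      rw [connectedComponents_preimage_singleton]
      exact ⟨isClosed_connectedComponent, hopen x⟩
    obtain ⟨M, a, p, hpinj, hp⟩ := exists_critical g (f ⁻¹' {y}) hg0 hgZ A
      (by rintro c _ ⟨w, -, rfl⟩; exact w.2)
      (by
        intro c
        obtain ⟨x, hx⟩ := ConnectedComponents.surjective_coe c.1
        exact ⟨x.1, x, hx, rfl⟩)
      (by
        intro c c' hcc'
        rw [Set.disjoint_left]
        rintro _ ⟨w, hw, rfl⟩ ⟨w', hw', hww'⟩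
        have h1 : w' = w := Subtype.ext hww'
        subst h1
        exact hcc' (Subtype.ext ((Eq.symm hw).trans hw')))
      (fun c => hZcl.isClosedEmbedding_subtypeVal.isClosedMap _ (hclop c.1).1)
      (by
        intro c
        have h1 : (f ⁻¹' {y}) \ A c =
            Subtype.val '' (ConnectedComponents.mk ⁻¹' {c.1} : Set ↥(f ⁻¹' {y}))ᶜ := by
          ext w
          constructor
          · rintro ⟨hw, hw'⟩
            exact ⟨⟨w, hw⟩, fun hc => hw' ⟨_, hc, rfl⟩, rfl⟩
          · rintro ⟨w, hw, rfl⟩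
            refine ⟨w.2, ?_⟩
            rintro ⟨w', hw', hww'⟩
            exact hw (by rwa [← Subtype.ext hww'])
        rw [h1]
        exact hZcl.isClosedEmbedding_subtypeVal.isClosedMap _ (hclop c.1).2.isClosed_compl)
    have hbez := bezout (fun i => 2 * d i)
      (fun s => MvPolynomial.pderiv s (penalty g M a))
      (fun s => BD_pderiv s (penalty_BD hd hgBD M a))
      (Finset.univ.map ⟨p, hpinj⟩)
      (by
        intro q hq
        obtain ⟨c, -, rfl⟩ := Finset.mem_map.1 hq
        exact (hp c).1)
      (by
        intro q hq
        obtain ⟨c, -, rfl⟩ := Finset.mem_map.1 hq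
        exact (hp c).2)
    rw [Finset.card_map, Finset.card_univ, Fintype.card_coe] at hbez
    exact entropy_bound k d hk hd K D hK hKpos hDpos H hH _ hbez
  have hfin : Finite (ConnectedComponents ↥(f ⁻¹' {y})) := by
    by_contra hinf
    have : Infinite (ConnectedComponents ↥(f ⁻¹' {y})) := not_finite_iff_infinite.1 hinf
    obtain ⟨n, hn⟩ := exists_nat_gt ((2 * D : ℝ) ^ K * (2 : ℝ) ^ (-((K : ℝ) * H)))
    obtain ⟨S, hS⟩ := Infinite.exists_subset_card_eq (ConnectedComponents ↥(f ⁻¹' {y})) n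
    have := hbound S
    rw [hS] at this
    linarith
  refine ⟨hfin, ?_⟩
  let _ : Fintype (ConnectedComponents ↥(f ⁻¹' {y})) := Fintype.ofFinite _
  rw [Nat.card_eq_fintype_card]
  exact hbound Finset.univ
end
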